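/- arXiv:math/0208078 — 5 statements merged into one kernel-verified Lean document; each statement's English description precedes it below -/
import Mathlib

section
/- Let R and S be integral domains that are finitely generated ℂ-algebras, and let ι : R → S be an injective ℂ-algebra homomorphism (so the corresponding morphism ρ : X → Y of the irreducible affine varieties X = Spec S, Y = Spec R is dominant). Assume R is integrally closed in its fraction field (Y is normal, hence has no selfintersection points). Let F : S → S be a bijective ℂ-algebra homomorphism and G : R → R a ℂ-algebra homomorphism with ι ∘ G = F ∘ ι. If G is not bijective, then there exists a prime ideal p of R with height p = 1 such that the prime ideal G⁻¹(p) (the preimage of p under G) has height at least 2, and the ideal of S generated by ι(p) is the unit ideal. (Geometrically: the hypersurface D = V(p) ⊂ Y satisfies codim_Y g(D) ≥ 2 and ρ⁻¹(D) = ∅.) -/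
/-- The height of an ideal `I`: the infimum of the heights of the prime ideals
containing `I` (in the prime spectrum, ordered by inclusion). -/
noncomputable def Ideal.heightOf {R : Type*} [CommRing R] (I : Ideal R) : ℕ∞ :=
  ⨅ p ∈ {p : PrimeSpectrum R | I ≤ p.asIdeal}, Order.height p

/-!
The proof compares `G` with the automorphism `F` by means of the ascending chain condition: an
ideal or submodule attached to `ι` that `F` carries into itself is carried onto itself.

* Applied to the ideal of `X ×_Y X` in `S ⊗ S`, this shows that `G` is an isomorphism on fraction
  fields (`exists_map_mul_eq_map`). Applied to the jets of `ι R` in the modules of principal parts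
  of `S`, it shows that at every closed point `Q` of `X` each `ι b` agrees with some `ι (G a)`
  modulo `Q ^ n`, for every `n` (`exists_sub_mem_ker_pow`).

* Some height-one prime `p` has `G⁻¹ p` of height at least two. Otherwise `p ↦ G⁻¹ p` is injective
  on the finite set of height-one primes missed by `X`, hence a permutation of it, while the
  height-one primes met by `X` are reached through `F`; since `R` is the intersection of its
  localizations at height-one primes, `G` would be surjective.

* For this `p` the ideal `ι(p) S` is the unit ideal. Otherwise it lies in a maximal ideal `Q`, and
  `exists_apply_ne_zero_mul_eq_mul`, applied to `ι ∘ G`, writes every `b : R` as `G a / G s` with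
  `G s ∉ p`. Then `R_{G⁻¹ p} → R_p` is an isomorphism and `p`, `G⁻¹ p` have the same height.

The last point rests on the principle that a rational function on a normal variety `Spec A` which
is formally regular at the image of `Q` is regular there. The obstacle is that the formal
neighbourhood could have several branches, only one of which is seen by `Q`. Take a Noether
normalization `k[x] → A` with `x` vanishing at the point, so that `A ⊗ k⟦x⟧` is flat over `A`, and
let `κ` be the common kernel of the evaluations `A ⊗ k⟦x⟧ → S ⧸ Q ^ n`. The ideal `κ + Ann κ` is
stable under derivations and contains a nonzero power series by generic étaleness, hence a nonzero
element of `A`. Its contraction to `A` is a nonzero ideal stable under derivations, so it has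
codimension at least two (`not_le_of_forall_derivation_mem`), and normality turns this into an
idempotent that separates the branch (`exists_idempotent_seriesKernel`). Flatness then descends the
formal statement to `A`.
-/

/-! ### Normal Noetherian domains in codimension one -/

section NormalDomain

variable {R : Type*} [CommRing R]

/-- `t` generates the maximal ideal of the localization of `R` at the prime `P`; by finite
generation of `P` a single denominator `u` serves for all of `P`. -/
def IsLocalGenerator (P : Ideal R) (t : R) : Prop :=
  t ∈ P ∧ ∃ u ∉ P, ∀ s ∈ P, t ∣ u * s

lemma IsLocalGenerator.ne_zero [IsDomain R] {P : Ideal R} {t : R} (ht : IsLocalGenerator P t)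
    (hP : P ≠ ⊥) : t ≠ 0 := by
  rintro rfl
  obtain ⟨-, u, hu, H⟩ := ht
  obtain ⟨s, hs, hs0⟩ := Submodule.exists_mem_ne_zero_of_ne_bot hP
  have hus : u * s ≠ 0 := mul_ne_zero (fun h => hu (h ▸ P.zero_mem)) hs0
  exact hus (zero_dvd_iff.1 (H s hs))

lemma IsLocalGenerator.height_eq_one [IsDomain R] [IsNoetherianRing R] {P : Ideal R} {t : R}
    (ht : IsLocalGenerator P t) (hP : P.IsPrime) (hP0 : P ≠ ⊥) : P.height = 1 := by
  obtain ⟨htP, u, hu, H⟩ := ht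
  apply le_antisymm
  · refine Ideal.height_le_one_of_isPrincipal_of_mem_minimalPrimes (Ideal.span {t}) P ?_
    refine ⟨⟨hP, (Ideal.span_singleton_le_iff_mem P).2 htP⟩, ?_⟩
    rintro J ⟨hJ, htJ⟩ hJP s hs
    have hus : u * s ∈ J := J.mem_of_dvd (H s hs) (htJ (Ideal.mem_span_singleton_self t))
    exact (hJ.mem_or_mem hus).resolve_left fun huJ => hu (hJP huJ)
  · rwa [Order.one_le_iff_ne_zero, ne_eq, Ideal.height_eq_zero_iff_eq_bot]

lemma mk_smul_span_eq_zero_iff {h x s : R} :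
    s • Ideal.Quotient.mk (Ideal.span {h}) x = 0 ↔ h ∣ s * x := by
  rw [← Ideal.mem_span_singleton, ← Ideal.Quotient.eq_zero_iff_mem, map_mul]
  rfl

lemma exists_forall_mem_iff_dvd_of_isAssociatedPrime [IsNoetherianRing R] {h : R} {P : Ideal R}
    (hP : IsAssociatedPrime P (R ⧸ Ideal.span {h})) : ∃ x, ∀ s, s ∈ P ↔ h ∣ s * x := by
  obtain ⟨-, x, rfl⟩ := isAssociatedPrime_iff.1 hP
  obtain ⟨x, rfl⟩ := Ideal.Quotient.mk_surjective x
  exact ⟨x, fun s => by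
    rw [Submodule.mem_colon_singleton, Submodule.mem_bot, mk_smul_span_eq_zero_iff]⟩

variable [IsDomain R] [IsNoetherianRing R] [IsIntegrallyClosed R]

/-- Multiplication by `x / h` preserves the finite module `I`, so `x / h` is integral. -/
lemma dvd_of_forall_mem_exists_mul_eq {I : Ideal R} (hI : I ≠ ⊥) {h x : R} (hh : h ≠ 0)
    (H : ∀ s ∈ I, ∃ s' ∈ I, s * x = h * s') : h ∣ x := by
  let K := FractionRing R
  have hhK : algebraMap R K h ≠ 0 := by simpa using hh
  have hint : IsIntegral R (algebraMap R K x / algebraMap R K h) := by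
    refine isIntegral_of_smul_mem_submodule (N := Submodule.map (Algebra.linearMap R K) I) ?_
      (Submodule.FG.map _ (IsNoetherian.noetherian I)) _ ?_
    · exact fun h0 => hI <| Submodule.map_injective_of_injective
        (f := Algebra.linearMap R K) (FaithfulSMul.algebraMap_injective R K) (by simpa using h0)
    · rintro _ ⟨s, hs, rfl⟩
      obtain ⟨s', hs', e⟩ := H s hs
      refine ⟨s', hs', ?_⟩
      rw [Algebra.linearMap_apply, Algebra.linearMap_apply, smul_eq_mul, div_mul_eq_mul_div,
        eq_div_iff hhK, ← map_mul, ← map_mul, mul_comm x, e, mul_comm h]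
  obtain ⟨y, hy⟩ := IsIntegrallyClosed.isIntegral_iff.1 hint
  refine ⟨y, FaithfulSMul.algebraMap_injective R K ?_⟩
  rw [map_mul, hy, mul_div_cancel₀ _ hhK]

lemma exists_isLocalGenerator_of_isAssociatedPrime {h : R} (hh : h ≠ 0) {P : Ideal R}
    (hP : IsAssociatedPrime P (R ⧸ Ideal.span {h})) : ∃ t, IsLocalGenerator P t := by
  obtain ⟨x, hx⟩ := exists_forall_mem_iff_dvd_of_isAssociatedPrime hP
  have hhP : h ∈ P := (hx h).2 (dvd_mul_right _ _)
  by_cases hc : ∃ t ∈ P, ∃ u ∉ P, t * x = h * u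
  · obtain ⟨t, ht, u, hu, e⟩ := hc
    refine ⟨t, ht, u, hu, fun s hs => ?_⟩
    obtain ⟨s', hs'⟩ := (hx s).1 hs
    refine ⟨s', mul_left_cancel₀ hh ?_⟩
    linear_combination (-s) * e + t * hs'
  · push Not at hc
    have hdvd : h ∣ x := by
      refine dvd_of_forall_mem_exists_mul_eq ((Submodule.ne_bot_iff P).2 ⟨h, hhP, hh⟩) hh
        fun s hs => ?_
      obtain ⟨s', hs'⟩ := (hx s).1 hs
      exact ⟨s', by_contra fun hn => hc s hs s' hn hs', hs'⟩
    exact absurd ((Ideal.eq_top_iff_one P).2 ((hx 1).2 (by rwa [one_mul]))) hP.1.ne_top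

lemma height_eq_one_of_isAssociatedPrime {h : R} (hh : h ≠ 0) {P : Ideal R}
    (hP : IsAssociatedPrime P (R ⧸ Ideal.span {h})) : P.height = 1 := by
  obtain ⟨t, ht⟩ := exists_isLocalGenerator_of_isAssociatedPrime hh hP
  obtain ⟨x, hx⟩ := exists_forall_mem_iff_dvd_of_isAssociatedPrime hP
  refine ht.height_eq_one hP.1 ?_
  rintro rfl
  exact hh (by simpa using (hx h).2 (dvd_mul_right _ _))

lemma exists_isLocalGenerator_of_height_eq_one {P : Ideal R} (hP : P.IsPrime)
    (hP1 : P.height = 1) : ∃ t, IsLocalGenerator P t := by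
  obtain ⟨h, hhP, hh⟩ := Submodule.exists_mem_ne_zero_of_ne_bot (Ideal.ne_bot_of_height_eq_one hP1)
  refine exists_isLocalGenerator_of_isAssociatedPrime hh ?_
  apply Module.associatedPrimes.minimalPrimes_annihilator_subset_associatedPrimes
  rw [Ideal.annihilator_quotient]
  refine Ideal.mem_minimalPrimes_of_height_le ((Ideal.span_singleton_le_iff_mem P).2 hhP) ?_
  rw [hP1]
  refine (Ideal.height_span_singleton_eq_one_of_mem_nonZeroDivisors (by simpa using hh) ?_).ge
  exact fun hu => hP.ne_top (Ideal.eq_top_of_isUnit_mem _ hhP hu)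

lemma exists_height_eq_one_of_not_dvd {h x : R} (hh : h ≠ 0) (hx : ¬ h ∣ x) :
    ∃ P : Ideal R, P.IsPrime ∧ P.height = 1 ∧ ∀ s, h ∣ s * x → s ∈ P := by
  have hx0 : Ideal.Quotient.mk (Ideal.span {h}) x ≠ 0 := by
    rwa [ne_eq, Ideal.Quotient.eq_zero_iff_mem, Ideal.mem_span_singleton]
  obtain ⟨P, hP, hle⟩ := exists_le_isAssociatedPrime_of_isNoetherianRing R _ hx0
  refine ⟨P, hP.1, height_eq_one_of_isAssociatedPrime hh hP, fun s hs => hle ?_⟩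
  rwa [Submodule.mem_colon_singleton, Submodule.mem_bot, mk_smul_span_eq_zero_iff]

/-- Serre's condition `S₂`. -/
lemma exists_mem_forall_dvd_of_dvd_mul {c : Ideal R}
    (hc : ∀ P : Ideal R, P.IsPrime → P.height = 1 → ¬ c ≤ P) {h : R} (hh : h ≠ 0) :
    ∃ y ∈ c, ∀ x, h ∣ y * x → h ∣ x := by
  have hfin := associatedPrimes.finite R (R ⧸ Ideal.span {h})
  have hnot : ¬ ((c : Set R) ⊆ ⋃ P ∈ (hfin.toFinset : Set (Ideal R)), (P : Set R)) := by
    rw [Ideal.subset_union_prime (f := fun P => P) ⊥ ⊥]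
    · rintro ⟨P, hP, hle⟩
      rw [Set.Finite.mem_toFinset] at hP
      exact hc P hP.1 (height_eq_one_of_isAssociatedPrime hh hP) hle
    · intro P hP _ _
      exact (hfin.mem_toFinset.1 hP).1
  obtain ⟨y, hy, hyn⟩ := Set.not_subset.1 hnot
  refine ⟨y, hy, fun x hx => by_contra fun hdvd => hyn ?_⟩
  rw [Set.Finite.coe_toFinset, biUnion_associatedPrimes_eq_zero_divisors]
  refine ⟨Ideal.Quotient.mk _ x, fun h0 => hdvd ?_, mk_smul_span_eq_zero_iff.2 hx⟩
  rwa [Ideal.Quotient.eq_zero_iff_mem, Ideal.mem_span_singleton] at h0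

lemma isDiscreteValuationRing_of_height_eq_one {P : Ideal R} [hP : P.IsPrime]
    (hP1 : P.height = 1) : IsDiscreteValuationRing (Localization.AtPrime P) := by
  have hdim := IsLocalization.AtPrime.ringKrullDim_eq_height P (Localization.AtPrime P)
  have hfield : ¬ IsField (Localization.AtPrime P) := fun hf => by
    rw [ringKrullDim_eq_zero_of_isField hf, hP1] at hdim
    norm_num at hdim
  obtain ⟨t, htP, u, hu, H⟩ := exists_isLocalGenerator_of_height_eq_one hP hP1
  refine ((IsDiscreteValuationRing.TFAE _ hfield).out 0 4).2 ?_
  refine ⟨algebraMap _ _ t, ?_⟩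
  rw [← Localization.AtPrime.map_eq_maximalIdeal]
  apply le_antisymm
  · rw [Ideal.map_le_iff_le_comap]
    intro s hs
    have hu' : IsUnit (algebraMap R (Localization.AtPrime P) u) :=
      IsLocalization.map_units (M := P.primeCompl) _ ⟨u, hu⟩
    rw [Ideal.mem_comap, Ideal.submodule_span_eq, Ideal.mem_span_singleton,
      ← hu'.dvd_mul_left, ← map_mul]
    exact map_dvd _ (H s hs)
  · rw [Ideal.submodule_span_eq, Ideal.span_singleton_le_iff_mem]
    exact Ideal.mem_map_of_mem _ htP

/-- The valuation ring `R_P` contains `a / h`, or its maximal ideal contains `h / a`. -/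
lemma exists_dvd_mul_or_exists_mul_eq {P : Ideal R} (hP : P.IsPrime) (hP1 : P.height = 1)
    (a h : R) : (∃ s ∉ P, h ∣ s * a) ∨ (∃ s ∉ P, ∃ h' ∈ P, s * h = h' * a) := by
  have := isDiscreteValuationRing_of_height_eq_one hP1
  let O := Localization.AtPrime P
  have hinj : Function.Injective (algebraMap R O) :=
    IsLocalization.injective _ P.primeCompl_le_nonZeroDivisors
  have exists_mul_eq : ∀ {x y : R}, algebraMap R O x ∣ algebraMap R O y →
      ∃ s ∉ P, ∃ r, s * y = r * x := by
    rintro x y ⟨z, hz⟩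
    obtain ⟨⟨r, s⟩, hrs⟩ := IsLocalization.surj P.primeCompl z
    refine ⟨s, s.2, r, hinj ?_⟩
    rw [map_mul, map_mul, hz, ← hrs]
    ring
  rcases ValuationRing.dvd_total (algebraMap R O h) (algebraMap R O a) with hd | hd
  · obtain ⟨s, hs, r, e⟩ := exists_mul_eq hd
    exact Or.inl ⟨s, hs, r, by rw [e, mul_comm]⟩
  · obtain ⟨s, hs, r, e⟩ := exists_mul_eq hd
    by_cases hr : r ∈ P
    · exact Or.inr ⟨s, hs, r, hr, e⟩
    · exact Or.inl ⟨r, hr, s, by rw [← e, mul_comm]⟩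

end NormalDomain

/-! ### Comparison with an automorphism -/

/-- The chain condition forbids `x < e⁻¹ x < e⁻² x < ⋯`. -/
lemma orderIso_apply_eq_of_apply_le {α : Type*} [PartialOrder α] [WellFoundedGT α] (e : α ≃o α)
    {x : α} (h : e x ≤ x) : e x = x := by
  refine h.eq_of_not_lt fun hlt => not_strictMono_of_wellFoundedGT (fun n : ℕ => e.symm^[n] x) ?_
  exact e.symm.strictMono.strictMono_iterate_of_lt_map (by rwa [e.lt_symm_apply])

section FiberProduct

open TensorProduct

variable {k R S : Type*} [CommRing k] [CommRing R] [CommRing S] [Algebra k R] [Algebra k S]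

/-- The ideal of `X ×_Y X` in `X ×_k X`, for the morphism `X = Spec S → Y = Spec R` given by
`f`. -/
def fiberProductIdeal (f : R →ₐ[k] S) : Ideal (S ⊗[k] S) :=
  Ideal.span (Set.range fun r => f r ⊗ₜ[k] (1 : S) - 1 ⊗ₜ f r)

lemma tmul_sub_tmul_mem_fiberProductIdeal (f : R →ₐ[k] S) (r : R) :
    f r ⊗ₜ[k] (1 : S) - 1 ⊗ₜ f r ∈ fiberProductIdeal f :=
  Ideal.subset_span ⟨r, rfl⟩

lemma fiberProductIdeal_comp_le (f : R →ₐ[k] S) (g : R →ₐ[k] R) :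
    fiberProductIdeal (f.comp g) ≤ fiberProductIdeal f := by
  rw [fiberProductIdeal, Ideal.span_le]
  rintro _ ⟨r, rfl⟩
  exact tmul_sub_tmul_mem_fiberProductIdeal f (g r)

lemma map_fiberProductIdeal (f : R →ₐ[k] S) (e : S ≃ₐ[k] S) :
    (fiberProductIdeal f).map (Algebra.TensorProduct.congr e e).toRingEquiv =
      fiberProductIdeal ((e : S →ₐ[k] S).comp f) := by
  rw [fiberProductIdeal, fiberProductIdeal, Ideal.map_span, ← Set.range_comp]
  congr 2
  funext r
  simp

lemma fiberProductIdeal_comp_eq [IsNoetherianRing k] [Algebra.FiniteType k S] {f : R →ₐ[k] S}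
    {e : S ≃ₐ[k] S} {g : R →ₐ[k] R} (hcomm : f.comp g = (e : S →ₐ[k] S).comp f) :
    fiberProductIdeal (f.comp g) = fiberProductIdeal f := by
  have : Algebra.FiniteType k (S ⊗[k] S) := .trans (S := S) inferInstance inferInstance
  have : IsNoetherianRing (S ⊗[k] S) := Algebra.FiniteType.isNoetherianRing k _
  have hle := fiberProductIdeal_comp_le f g
  rw [hcomm, ← map_fiberProductIdeal, ← RingEquiv.idealComapOrderIso_symm_apply] at hle ⊢
  exact orderIso_apply_eq_of_apply_le _ hle

lemma mem_range_algebraMap_of_tmul_one_eq {K L : Type*} [Field K] [Field L] [Algebra K L] {x : L}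
    (h : x ⊗ₜ[K] (1 : L) = 1 ⊗ₜ x) : x ∈ (algebraMap K L).range := by
  by_contra hx
  have hx' : x ∉ Submodule.span K {(1 : L)} := fun h1 => by
    obtain ⟨c, rfl⟩ := Submodule.mem_span_singleton.1 h1
    exact hx ⟨c, Algebra.algebraMap_eq_smul_one c⟩
  obtain ⟨f, hfx, hf1⟩ := Submodule.exists_le_ker_of_notMem hx'
  have hf1 : f 1 = 0 := hf1 (Submodule.mem_span_singleton_self 1)
  have e := congrArg (TensorProduct.lid K L) (congrArg (f.rTensor L) h)
  simp only [LinearMap.rTensor_tmul, TensorProduct.lid_tmul, hf1, zero_smul, smul_eq_zero,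
    one_ne_zero, or_false] at e
  exact hfx e

/-- The hypothesis says that the projections of `X ×_Y X` identify the two pullbacks of `x`; over
the generic point of `Y` such a function descends. -/
lemma exists_mul_eq_of_mem_fiberProductIdeal [IsDomain R] [IsDomain S] {f : R →ₐ[k] S}
    (hf : Function.Injective f) {x : S} (hx : x ⊗ₜ[k] (1 : S) - 1 ⊗ₜ x ∈ fiberProductIdeal f) :
    ∃ h a : R, h ≠ 0 ∧ f h * x = f a := by
  let K := FractionRing R
  let L := FractionRing S
  have hfL : Function.Injective ((algebraMap S L).comp (f : R →+* S)) :=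
    (IsFractionRing.injective S L).comp hf
  let : Algebra K L := (IsFractionRing.lift hfL).toAlgebra
  have algebraMap_eq (r : R) : algebraMap K L (algebraMap R K r) = algebraMap S L (f r) :=
    IsFractionRing.lift_algebraMap hfL r
  have : IsScalarTower k K L := IsScalarTower.of_algebraMap_eq fun z => by
    rw [IsScalarTower.algebraMap_apply k R K, algebraMap_eq, AlgHom.commutes,
      ← IsScalarTower.algebraMap_apply]
  let m : S ⊗[k] S →ₐ[k] L ⊗[K] L := Algebra.TensorProduct.lift
    (((Algebra.TensorProduct.includeLeft : L →ₐ[K] L ⊗[K] L).restrictScalars k).comp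
      (IsScalarTower.toAlgHom k S L))
    (((Algebra.TensorProduct.includeRight : L →ₐ[K] L ⊗[K] L).restrictScalars k).comp
      (IsScalarTower.toAlgHom k S L))
    (fun _ _ => Commute.all _ _)
  have m_apply (s : S) : m (s ⊗ₜ 1 - 1 ⊗ₜ s) =
      algebraMap S L s ⊗ₜ[K] (1 : L) - 1 ⊗ₜ algebraMap S L s := by simp [m]
  have hker : fiberProductIdeal f ≤ RingHom.ker m := by
    rw [fiberProductIdeal, Ideal.span_le]
    rintro _ ⟨r, rfl⟩
    rw [SetLike.mem_coe, RingHom.mem_ker, m_apply, ← algebraMap_eq, sub_eq_zero,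
      Algebra.algebraMap_eq_smul_one, TensorProduct.smul_tmul]
  have hxL := hker hx
  rw [RingHom.mem_ker, m_apply, sub_eq_zero] at hxL
  obtain ⟨z, hz⟩ := mem_range_algebraMap_of_tmul_one_eq hxL
  obtain ⟨a, h, hh, rfl⟩ := IsFractionRing.div_surjective (A := R) z
  have hh0 : h ≠ 0 := nonZeroDivisors.ne_zero hh
  have hfh : algebraMap S L (f h) ≠ 0 := (map_ne_zero_iff _ hfL).2 hh0
  rw [map_div₀, algebraMap_eq, algebraMap_eq, div_eq_iff hfh] at hz
  exact ⟨h, a, hh0, IsFractionRing.injective S L (by rw [map_mul, mul_comm, hz])⟩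

/-- `g` induces an isomorphism of fraction fields. -/
lemma exists_map_mul_eq_map [IsNoetherianRing k] [Algebra.FiniteType k S] [IsDomain R] [IsDomain S]
    {f : R →ₐ[k] S} (hf : Function.Injective f) {e : S ≃ₐ[k] S} {g : R →ₐ[k] R}
    (hg : Function.Injective g) (hcomm : f.comp g = (e : S →ₐ[k] S).comp f) (b : R) :
    ∃ h a : R, h ≠ 0 ∧ g h * b = g a := by
  obtain ⟨h, a, hh, hb⟩ := exists_mul_eq_of_mem_fiberProductIdeal (f := f.comp g) (hf.comp hg)
    (fiberProductIdeal_comp_eq hcomm ▸ tmul_sub_tmul_mem_fiberProductIdeal f b)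
  exact ⟨h, a, hh, hf (by rw [map_mul]; exact hb)⟩

end FiberProduct

section PrincipalParts

open TensorProduct

variable (k S : Type*) [CommRing k] [CommRing S] [Algebra k S]

/-- The algebra of principal parts of order `< n`: the functions on the infinitesimal neighbourhood
of order `n` of the diagonal of `Spec S`, as an `S`-algebra through the first factor. -/
abbrev PrincipalParts (n : ℕ) : Type _ := S ⊗[k] S ⧸ KaehlerDifferential.ideal k S ^ n

namespace PrincipalParts

variable {S}

/-- The jet `1 ⊗ t` of a function `t`, its generic Taylor expansion. -/
noncomputable def jet (n : ℕ) : S →ₐ[k] PrincipalParts k S n :=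
  (Ideal.Quotient.mkₐ k _).comp Algebra.TensorProduct.includeRight

variable {k} {n : ℕ}

lemma mk_tmul (s t : S) : (Ideal.Quotient.mk _ (s ⊗ₜ[k] t) : PrincipalParts k S n) =
    s • jet k n t := by
  have e : s ⊗ₜ[k] t = s • ((1 : S) ⊗ₜ[k] t) := by
    rw [TensorProduct.smul_tmul', smul_eq_mul, mul_one]
  rw [e]
  rfl

@[elab_as_elim]
lemma induction {p : PrincipalParts k S n → Prop} (x : PrincipalParts k S n)
    (smul_jet : ∀ s t : S, p (s • jet k n t)) (add : ∀ x y, p x → p y → p (x + y)) : p x := by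
  obtain ⟨x, rfl⟩ := Ideal.Quotient.mk_surjective x
  induction x using TensorProduct.induction_on with
  | zero => simpa using smul_jet 0 0
  | tmul s t => rw [mk_tmul]; exact smul_jet s t
  | add x y hx hy => rw [map_add]; exact add _ _ hx hy

instance finite [Algebra.FiniteType k S] : Module.Finite S (PrincipalParts k S n) := by
  have : Algebra.FiniteType S (PrincipalParts k S n) :=
    .of_surjective (Ideal.Quotient.mkₐ S _) (Ideal.Quotient.mkₐ_surjective _ _)
  have isIntegral_jet (t : S) : IsIntegral S (jet k n t) := by
    refine ⟨(Polynomial.X - Polynomial.C t) ^ n, (Polynomial.monic_X_sub_C t).pow n, ?_⟩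
    rw [Polynomial.eval₂_pow, Polynomial.eval₂_sub, Polynomial.eval₂_X, Polynomial.eval₂_C]
    change (Ideal.Quotient.mk _ ((1 : S) ⊗ₜ[k] t) - Ideal.Quotient.mk _ (t ⊗ₜ[k] (1 : S))) ^ n = 0
    rw [← map_sub, ← map_pow, Ideal.Quotient.eq_zero_iff_mem]
    exact Ideal.pow_mem_pow (KaehlerDifferential.one_smul_sub_smul_one_mem_ideal k t) n
  have : Algebra.IsIntegral S (PrincipalParts k S n) :=
    ⟨fun x => PrincipalParts.induction x (fun s t => (isIntegral_jet t).smul s)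
      fun _ _ => IsIntegral.add⟩
  exact Algebra.IsIntegral.finite

lemma map_congr_ideal (e : S ≃ₐ[k] S) :
    (KaehlerDifferential.ideal k S).map (Algebra.TensorProduct.congr e e).toRingEquiv =
      KaehlerDifferential.ideal k S := by
  have comp_eq : (Algebra.TensorProduct.lmul' k).comp
      (Algebra.TensorProduct.congr e e : S ⊗[k] S →ₐ[k] S ⊗[k] S) =
      (e : S →ₐ[k] S).comp (Algebra.TensorProduct.lmul' k) := by
    ext <;> simp
  have hcomap : (KaehlerDifferential.ideal k S).comap
      (Algebra.TensorProduct.congr e e).toRingEquiv = KaehlerDifferential.ideal k S := by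
    ext x
    change Algebra.TensorProduct.lmul' k (Algebra.TensorProduct.congr e e x) = 0 ↔
      Algebra.TensorProduct.lmul' k x = 0
    exact (Eq.congr_left (DFunLike.congr_fun comp_eq x)).trans (map_eq_zero_iff e e.injective)
  conv_lhs => rw [← hcomap]
  exact Ideal.map_comap_of_surjective _ (Algebra.TensorProduct.congr e e).surjective _

/-- The semilinear automorphism of the principal parts induced by an automorphism of `S`. -/
noncomputable def map (e : S ≃ₐ[k] S) :
    PrincipalParts k S n →ₛₗ[(e : S →+* S)] PrincipalParts k S n where
  __ := Ideal.quotientEquiv _ _ (Algebra.TensorProduct.congr e e).toRingEquiv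
    (by rw [Ideal.map_pow]; exact congrArg (· ^ n) (map_congr_ideal e).symm)
  map_smul' s x := by
    obtain ⟨x, rfl⟩ := Ideal.Quotient.mk_surjective x
    change Ideal.Quotient.mk _ (Algebra.TensorProduct.congr e e (s • x)) =
      Ideal.Quotient.mk _ (e s • Algebra.TensorProduct.congr e e x)
    congr 1
    rw [Algebra.smul_def, map_mul, Algebra.smul_def]
    simp

lemma map_bijective (e : S ≃ₐ[k] S) : Function.Bijective (map (n := n) e) :=
  (Ideal.quotientEquiv _ _ (Algebra.TensorProduct.congr e e).toRingEquiv _).bijective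

lemma map_jet (e : S ≃ₐ[k] S) (t : S) : map e (jet k n t) = jet k n (e t) := by
  change Ideal.Quotient.mk _ (Algebra.TensorProduct.congr e e (1 ⊗ₜ t)) = _
  simp [jet]

/-- Specialization of a jet at the rational point `χ`. -/
noncomputable def specialize (χ : S →ₐ[k] k) : PrincipalParts k S n →ₐ[k] S ⧸ RingHom.ker χ ^ n :=
  Ideal.quotientMapₐ _ (Algebra.TensorProduct.lift ((Algebra.ofId k S).comp χ) (AlgHom.id k S)
    fun _ _ => Commute.all _ _) <| by
    refine le_trans (Ideal.pow_right_mono ?_ n) (Ideal.le_comap_pow _ n)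
    rw [← KaehlerDifferential.span_range_eq_ideal, Ideal.span_le]
    rintro _ ⟨s, rfl⟩
    simp [Algebra.ofId_apply]

lemma specialize_smul_jet (χ : S →ₐ[k] k) (s t : S) :
    specialize χ (s • jet k n t) = Ideal.Quotient.mk _ (algebraMap k S (χ s) * t) := by
  rw [← mk_tmul]
  simp [specialize, Algebra.ofId_apply]

lemma specialize_smul (χ : S →ₐ[k] k) (s : S) (x : PrincipalParts k S n) :
    specialize χ (s • x) = χ s • specialize χ x := by
  induction x using PrincipalParts.induction with
  | smul_jet s' t =>
    rw [smul_smul, specialize_smul_jet, specialize_smul_jet, Algebra.smul_def]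
    simp only [map_mul, mul_assoc]
    rfl
  | add x y hx hy => rw [smul_add, map_add, map_add, smul_add, hx, hy]

variable {R : Type*} [CommRing R] [Algebra k R]

lemma span_range_jet_comp [IsNoetherianRing k] [Algebra.FiniteType k S] {f : R →ₐ[k] S}
    {e : S ≃ₐ[k] S} {g : R →ₐ[k] R} (hcomm : f.comp g = (e : S →ₐ[k] S).comp f) :
    Submodule.span S (Set.range fun r => jet k n (f (g r))) =
      Submodule.span S (Set.range fun r => jet k n (f r)) := by
  have : IsNoetherianRing S := Algebra.FiniteType.isNoetherianRing k S
  have : RingHomSurjective (e : S →+* S) := ⟨e.surjective⟩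
  let N := Submodule.span S (Set.range fun r => jet k n (f r))
  have map_eq : N.map (map e) = Submodule.span S (Set.range fun r => jet k n (f (g r))) := by
    rw [Submodule.map_span, ← Set.range_comp]
    congr 2
    funext r
    exact (map_jet e (f r)).trans (congrArg (jet k n) (DFunLike.congr_fun hcomm r).symm)
  have hle : N.map (map e) ≤ N := by
    rw [map_eq, Submodule.span_le]
    rintro _ ⟨r, rfl⟩
    exact Submodule.subset_span ⟨g r, rfl⟩
  rw [← map_eq]
  exact orderIso_apply_eq_of_apply_le
    (Submodule.orderIsoMapComapOfBijective (map e) (map_bijective e)) hle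

end PrincipalParts

lemma exists_sub_mem_ker_pow {k R S : Type*} [CommRing k] [IsNoetherianRing k] [CommRing R]
    [CommRing S] [Algebra k R] [Algebra k S] [Algebra.FiniteType k S] {f : R →ₐ[k] S}
    {e : S ≃ₐ[k] S} {g : R →ₐ[k] R} (hcomm : f.comp g = (e : S →ₐ[k] S).comp f)
    (χ : S →ₐ[k] k) (n : ℕ) (b : R) : ∃ a, f b - f (g a) ∈ RingHom.ker χ ^ n := by
  have exists_specialize_eq : ∀ x ∈ Submodule.span S
      (Set.range fun r => PrincipalParts.jet k n (f (g r))),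
      ∃ a, PrincipalParts.specialize χ x = Ideal.Quotient.mk _ (f (g a)) := by
    intro x hx
    induction hx using Submodule.span_induction with
    | mem x hx =>
      obtain ⟨r, rfl⟩ := hx
      exact ⟨r, by simpa using PrincipalParts.specialize_smul_jet (n := n) χ 1 (f (g r))⟩
    | zero => exact ⟨0, by simp⟩
    | add x y _ _ hx hy =>
      obtain ⟨a, ha⟩ := hx
      obtain ⟨a', ha'⟩ := hy
      exact ⟨a + a', by simp only [map_add, ha, ha']⟩
    | smul s x _ hx =>
      obtain ⟨a, ha⟩ := hx
      refine ⟨χ s • a, ?_⟩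
      rw [PrincipalParts.specialize_smul, ha, map_smul, map_smul]
      rfl
  obtain ⟨a, ha⟩ := exists_specialize_eq (PrincipalParts.jet k n (f b)) <| by
    rw [PrincipalParts.span_range_jet_comp hcomm]
    exact Submodule.subset_span ⟨b, rfl⟩
  refine ⟨a, ?_⟩
  rw [← Ideal.Quotient.eq_zero_iff_mem, map_sub, ← ha, sub_eq_zero]
  simpa using (PrincipalParts.specialize_smul_jet (n := n) χ 1 (f b)).symm

end PrincipalParts

lemma exists_algHom_ker_eq {k S : Type*} [Field k] [IsAlgClosed k] [CommRing S] [Algebra k S]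
    [Algebra.FiniteType k S] (Q : Ideal S) [Q.IsMaximal] : ∃ χ : S →ₐ[k] k, RingHom.ker χ = Q := by
  let : Field (S ⧸ Q) := Ideal.Quotient.field Q
  have : Module.Finite k (S ⧸ Q) := finite_of_finite_type_of_isJacobsonRing k (S ⧸ Q)
  let e := AlgEquiv.ofBijective (Algebra.ofId k (S ⧸ Q))
    IsAlgClosed.algebraMap_bijective_of_isIntegral
  refine ⟨(e.symm : (S ⧸ Q) →ₐ[k] k).comp (Ideal.Quotient.mkₐ k Q), ?_⟩
  ext s
  simp [RingHom.mem_ker, Ideal.Quotient.eq_zero_iff_mem]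

/-! ### Existence of a contracted hypersurface -/

section Birational

/-- `g` is injective and induces an isomorphism of fraction fields, written without
denominators. -/
structure IsBirationalHom {A B : Type*} [CommRing A] [CommRing B] (g : A →+* B) : Prop where
  injective : Function.Injective g
  exists_map_mul_eq_map : ∀ b, ∃ h a, h ≠ 0 ∧ g h * b = g a

namespace IsBirationalHom

variable {A B : Type*} [CommRing A] [CommRing B] [IsDomain B] {g : A →+* B}

lemma comap_ne_bot (hg : IsBirationalHom g) {p : Ideal B} (hp : p ≠ ⊥) : p.comap g ≠ ⊥ := by
  obtain ⟨b, hb, hb0⟩ := Submodule.exists_mem_ne_zero_of_ne_bot hp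
  obtain ⟨h, a, hh, e⟩ := hg.exists_map_mul_eq_map b
  refine (Submodule.ne_bot_iff _).2 ⟨a, ?_, ?_⟩
  · rw [Ideal.mem_comap, ← e]
    exact p.mul_mem_left _ hb
  · rintro rfl
    rw [map_zero] at e
    exact mul_ne_zero ((map_ne_zero_iff g hg.injective).2 hh) hb0 e

variable [IsDomain A] [IsNoetherianRing A] [IsIntegrallyClosed A]

/-- An element of `B` outside the valuation ring at `g⁻¹ p` would have its inverse in the maximal
ideal, hence in `p`. -/
lemma exists_map_mul_eq_map_of_height_comap_eq_one (hg : IsBirationalHom g) {p : Ideal B}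
    (hp : p.IsPrime) (hp1 : (p.comap g).height = 1) (b : B) :
    ∃ s ∉ p.comap g, ∃ a, g s * b = g a := by
  obtain ⟨h, a, hh, e⟩ := hg.exists_map_mul_eq_map b
  have hgh : g h ≠ 0 := (map_ne_zero_iff g hg.injective).2 hh
  rcases exists_dvd_mul_or_exists_mul_eq (hp.comap g) hp1 a h with
    ⟨s, hs, a', ha'⟩ | ⟨s, hs, h', hh', e'⟩
  · refine ⟨s, hs, a', mul_left_cancel₀ hgh ?_⟩
    rw [← map_mul, ← ha', map_mul, ← e]
    ring
  · have hgs : g s = g h' * b := by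
      refine mul_left_cancel₀ hgh ?_
      rw [← map_mul, mul_comm, e', map_mul, ← e]
      ring
    exact absurd (Ideal.mem_comap.2 (hgs ▸ p.mul_mem_right _ hh')) hs

lemma injOn_comap (hg : IsBirationalHom g) :
    Set.InjOn (Ideal.comap g) {p | p.IsPrime ∧ (p.comap g).height = 1} := by
  suffices le_of_comap_eq : ∀ {p q : Ideal B}, p.IsPrime → (p.comap g).height = 1 → q.IsPrime →
      p.comap g = q.comap g → p ≤ q from
    fun p hp q hq e => le_antisymm (le_of_comap_eq hp.1 hp.2 hq.1 e)
      (le_of_comap_eq hq.1 hq.2 hp.1 e.symm)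
  intro p q hp hp1 hq e b hb
  obtain ⟨s, hs, a, hsa⟩ := hg.exists_map_mul_eq_map_of_height_comap_eq_one hp hp1 b
  have ha : a ∈ q.comap g := by
    rw [← e, Ideal.mem_comap, ← hsa]
    exact p.mul_mem_left _ hb
  rw [Ideal.mem_comap, ← hsa] at ha
  exact (hq.mem_or_mem ha).resolve_left fun h => hs (e ▸ h)

lemma surjective_of_forall_exists_comap_eq (hg : IsBirationalHom g)
    (H : ∀ P : Ideal A, P.IsPrime → P.height = 1 → ∃ p : Ideal B, p.IsPrime ∧ p.comap g = P) :
    Function.Surjective g := by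
  intro b
  obtain ⟨h, a, hh, e⟩ := hg.exists_map_mul_eq_map b
  by_cases hdvd : h ∣ a
  · obtain ⟨c, rfl⟩ := hdvd
    exact ⟨c, (mul_left_cancel₀ ((map_ne_zero_iff g hg.injective).2 hh)
      (e.trans (map_mul _ _ _))).symm⟩
  · obtain ⟨P, hP, hP1, hden⟩ := exists_height_eq_one_of_not_dvd hh hdvd
    obtain ⟨p, hp, rfl⟩ := H P hP hP1
    obtain ⟨s, hs, a', e'⟩ := hg.exists_map_mul_eq_map_of_height_comap_eq_one hp hP1 b
    refine absurd (hden s ⟨a', hg.injective ?_⟩) hs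
    rw [map_mul, map_mul, ← e, ← e']
    ring

end IsBirationalHom

/-- The hypothesis says that `A_{g⁻¹ p} → B_p` is surjective. -/
lemma height_comap_eq_of_forall_exists {A B : Type*} [CommRing A] [CommRing B] [IsDomain B]
    {g : A →+* B} (hg : Function.Injective g) {p : Ideal B} [hp : p.IsPrime]
    (h : ∀ b, ∃ s ∉ p.comap g, ∃ a, g s * b = g a) : (p.comap g).height = p.height := by
  let φ := Localization.localRingHom (p.comap g) p g rfl
  have hinj : Function.Injective φ := by
    rw [injective_iff_map_eq_zero]
    intro x hx
    obtain ⟨a, s, rfl⟩ := IsLocalization.exists_mk'_eq (p.comap g).primeCompl x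
    rw [Localization.localRingHom_mk', IsLocalization.mk'_eq_zero_iff] at hx
    obtain ⟨⟨m, hm⟩, hma⟩ := hx
    have hga : g a = 0 := (mul_eq_zero.1 hma).resolve_left fun h0 => hm (by
      rw [show m = 0 from h0]
      exact p.zero_mem)
    rw [(map_eq_zero_iff g hg).1 hga, IsLocalization.mk'_zero]
  have hsurj : Function.Surjective φ := by
    intro x
    obtain ⟨b, ⟨s, hs⟩, rfl⟩ := IsLocalization.exists_mk'_eq p.primeCompl x
    obtain ⟨s₁, hs₁, a₁, e₁⟩ := h b
    obtain ⟨s₂, hs₂, a₂, e₂⟩ := h s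
    have ha₂ : a₂ ∉ p.comap g := by
      rw [Ideal.mem_comap, ← e₂]
      exact fun h => (hp.mem_or_mem h).elim hs₂ hs
    refine ⟨IsLocalization.mk' _ (a₁ * s₂) (⟨s₁, hs₁⟩ * ⟨a₂, ha₂⟩ : (p.comap g).primeCompl), ?_⟩
    rw [Localization.localRingHom_mk', IsLocalization.mk'_eq_iff_eq]
    congr 1
    simp only [Submonoid.coe_mul, map_mul, ← e₁, ← e₂]
    ring
  have hdim := ringKrullDim_eq_of_ringEquiv (RingEquiv.ofBijective φ ⟨hinj, hsurj⟩)
  rw [IsLocalization.AtPrime.ringKrullDim_eq_height (p.comap g),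
    IsLocalization.AtPrime.ringKrullDim_eq_height p] at hdim
  exact_mod_cast hdim

end Birational

section DominantImage

open Topology in
lemma mem_nhds_or_compl_mem_nhds_of_isConstructible {X : Type*} [TopologicalSpace X] {x : X}
    (hx : Dense {x}) {s : Set X} (hs : IsConstructible s) : s ∈ 𝓝 x ∨ sᶜ ∈ 𝓝 x := by
  induction hs using IsConstructible.empty_union_induction with
  | open_retrocompact U hU _ =>
    rcases U.eq_empty_or_nonempty with rfl | hne
    · exact Or.inr (by simp)
    · obtain ⟨_, rfl, hxU⟩ := hx.exists_mem_open hU hne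
      exact Or.inl (hU.mem_nhds hxU)
  | union s _ t _ hs ht =>
    rcases hs with hs | hs
    · exact Or.inl (Filter.mem_of_superset hs Set.subset_union_left)
    rcases ht with ht | ht
    · exact Or.inl (Filter.mem_of_superset ht Set.subset_union_right)
    · exact Or.inr (by rw [Set.compl_union]; exact Filter.inter_mem hs ht)
  | compl s _ hs => rwa [compl_compl, or_comm]

variable {R S : Type*} [CommRing R] [CommRing S]

lemma exists_ne_zero_forall_mem_range_comap [IsDomain R] {f : R →+* S}
    (hf : Function.Injective f) (hfp : f.FinitePresentation) :
    ∃ r : R, r ≠ 0 ∧ ∀ p : PrimeSpectrum R, r ∉ p.asIdeal →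
      p ∈ Set.range (PrimeSpectrum.comap f) := by
  obtain ⟨q, hq, hq0⟩ := Ideal.exists_comap_eq_of_mem_minimalPrimes_of_injective hf ⊥
    (by rw [IsDomain.minimalPrimes_eq_singleton_bot]; rfl)
  have hbot : (⊥ : PrimeSpectrum R) ∈ Set.range (PrimeSpectrum.comap f) :=
    ⟨⟨q, hq⟩, PrimeSpectrum.ext hq0⟩
  have hdense : Dense {(⊥ : PrimeSpectrum R)} := fun p =>
    ((PrimeSpectrum.le_iff_specializes ⊥ p).1 bot_le).mem_closure
  have hnhds := (mem_nhds_or_compl_mem_nhds_of_isConstructible hdense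
    (PrimeSpectrum.isConstructible_range_comap hfp)).resolve_right
      fun h => mem_of_mem_nhds h hbot
  obtain ⟨_, ⟨r, rfl⟩, hr, hrU⟩ :=
    PrimeSpectrum.isTopologicalBasis_basic_opens.mem_nhds_iff.1 hnhds
  exact ⟨r, by simpa using hr, fun p hp => hrU hp⟩

/-- The hypersurfaces of `Spec R` whose generic point is not in the image of `Spec S`. -/
def missedDivisors (f : R →+* S) : Set (Ideal R) :=
  {p | p.IsPrime ∧ p.height = 1 ∧ ∀ P : Ideal S, P.IsPrime → P.comap f ≠ p}

lemma finite_missedDivisors [IsDomain R] [IsNoetherianRing R] {f : R →+* S}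
    (hf : Function.Injective f) (hfp : f.FinitePresentation) : (missedDivisors f).Finite := by
  obtain ⟨r, hr, hmem⟩ := exists_ne_zero_forall_mem_range_comap hf hfp
  refine (Ideal.finite_minimalPrimes_of_isNoetherianRing R (Ideal.span {r})).subset ?_
  rintro p ⟨hp, hp1, hmiss⟩
  have hrp : r ∈ p := by
    by_contra hrp
    obtain ⟨P, hP⟩ := hmem ⟨p, hp⟩ hrp
    exact hmiss P.asIdeal P.2 (congrArg PrimeSpectrum.asIdeal hP)
  refine Ideal.mem_minimalPrimes_of_height_le ((Ideal.span_singleton_le_iff_mem p).2 hrp) ?_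
  rw [hp1, Order.one_le_iff_ne_zero, ne_eq, Ideal.height_eq_zero_iff_eq_bot,
    Ideal.span_singleton_eq_bot]
  exact hr

section Equivariant

variable {f : R →+* S} {e : S ≃+* S} {g : R →+* R}

lemma comap_comap_comap_symm (hcomm : f.comp g = (e : S →+* S).comp f) (P : Ideal S) :
    ((P.comap (e.symm : S →+* S)).comap f).comap g = P.comap f := by
  rw [Ideal.comap_comap, hcomm, Ideal.comap_comap, ← RingHom.comp_assoc]
  simp

variable [IsDomain R] [IsNoetherianRing R] [IsIntegrallyClosed R]

lemma mapsTo_comap_missedDivisors (hg : IsBirationalHom g)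
    (hcomm : f.comp g = (e : S →+* S).comp f)
    (hone : ∀ p : Ideal R, p.IsPrime → p.height = 1 → (p.comap g).height = 1) :
    Set.MapsTo (Ideal.comap g) (missedDivisors f) (missedDivisors f) := by
  rintro p ⟨hp, hp1, hmiss⟩
  refine ⟨hp.comap g, hone p hp hp1, fun P hP hPp => ?_⟩
  have hP' : (P.comap (e.symm : S →+* S)).IsPrime := hP.comap _
  have hcomap := (comap_comap_comap_symm hcomm P).trans hPp
  have hheight : (((P.comap (e.symm : S →+* S)).comap f).comap g).height = 1 := by
    rw [hcomap, hone p hp hp1]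
  exact hmiss _ hP' (hg.injOn_comap ⟨hP'.comap f, hheight⟩ ⟨hp, hone p hp hp1⟩ hcomap)

lemma exists_comap_eq_of_forall_height_comap_eq_one (hf : Function.Injective f)
    (hfp : f.FinitePresentation) (hg : IsBirationalHom g)
    (hcomm : f.comp g = (e : S →+* S).comp f)
    (hone : ∀ p : Ideal R, p.IsPrime → p.height = 1 → (p.comap g).height = 1)
    {P : Ideal R} (hP : P.IsPrime) (hP1 : P.height = 1) :
    ∃ p : Ideal R, p.IsPrime ∧ p.comap g = P := by
  have hsub : missedDivisors f ⊆ {p | p.IsPrime ∧ (p.comap g).height = 1} :=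
    fun p hp => ⟨hp.1, hone p hp.1 hp.2.1⟩
  have hbij : Set.BijOn (Ideal.comap g) (missedDivisors f) (missedDivisors f) :=
    ((finite_missedDivisors hf hfp).injOn_iff_bijOn_of_mapsTo
      (mapsTo_comap_missedDivisors hg hcomm hone)).1
      (hg.injOn_comap.mono hsub)
  by_cases hmiss : P ∈ missedDivisors f
  · obtain ⟨p, hp, e⟩ := hbij.surjOn hmiss
    exact ⟨p, hp.1, e⟩
  · obtain ⟨Q, hQ, rfl⟩ : ∃ Q : Ideal S, Q.IsPrime ∧ Q.comap f = P := by
      by_contra! h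
      exact hmiss ⟨hP, hP1, h⟩
    exact ⟨_, (hQ.comap (e.symm : S →+* S)).comap f, comap_comap_comap_symm hcomm Q⟩

lemma exists_height_eq_one_two_le_height_comap (hf : Function.Injective f)
    (hfp : f.FinitePresentation) (hg : IsBirationalHom g)
    (hcomm : f.comp g = (e : S →+* S).comp f) (hsurj : ¬ Function.Surjective g) :
    ∃ p : Ideal R, p.IsPrime ∧ p.height = 1 ∧ 2 ≤ (p.comap g).height := by
  by_contra! hlt
  refine hsurj (hg.surjective_of_forall_exists_comap_eq fun P =>
    exists_comap_eq_of_forall_height_comap_eq_one hf hfp hg hcomm fun p hp hp1 => ?_)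
  have := hp.comap g
  refine le_antisymm (Order.le_of_lt_succ (by simpa [one_add_one_eq_two] using hlt p hp hp1)) ?_
  rw [Order.one_le_iff_ne_zero, ne_eq, Ideal.height_eq_zero_iff_eq_bot]
  exact hg.comap_ne_bot (Ideal.ne_bot_of_height_eq_one hp1)

end Equivariant

end DominantImage

/-! ### Extension of derivations -/

section DerivationExtension

variable {k A B K L : Type*} [CommRing k]

lemma formallySmooth_of_charZero [Field K] [Field L] [Algebra K L] [CharZero K] :
    Algebra.FormallySmooth K L := by
  obtain ⟨s, hs⟩ := exists_isTranscendenceBasis K L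
  have : Algebra.IsAlgebraic (IntermediateField.adjoin K (Set.range ((↑) : s → L))) L :=
    hs.isAlgebraic_field
  exact Algebra.FormallySmooth.of_algebraicIndependent_of_isSeparable hs.1

lemma formallySmooth_of_injective [CommRing B] [IsDomain B] [CharZero B] [Field K]
    [Algebra B K] (h : Function.Injective (algebraMap B K)) : Algebra.FormallySmooth B K := by
  have : FaithfulSMul B K := (faithfulSMul_iff_algebraMap_injective B K).2 h
  let : Algebra (FractionRing B) K := FractionRing.liftAlgebra B K
  have : IsScalarTower B (FractionRing B) K := FractionRing.isScalarTower_liftAlgebra B K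
  have : CharZero (FractionRing B) :=
    charZero_of_injective_algebraMap (IsFractionRing.injective B (FractionRing B))
  have : Algebra.FormallySmooth (FractionRing B) K := formallySmooth_of_charZero
  have : Algebra.FormallySmooth B (FractionRing B) := .of_isLocalization (nonZeroDivisors B)
  exact .comp B (FractionRing B) K

/-- Formal smoothness makes `K ⊗ Ω[B⁄k] → Ω[K⁄k]` injective, hence split. -/
lemma exists_derivation_comp_algebraMap_eq [CommRing B] [Field K] [Algebra k B] [Algebra k K]
    [Algebra B K] [IsScalarTower k B K] [Algebra.FormallySmooth B K] (D : Derivation k B K) :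
    ∃ D' : Derivation k K K, ∀ b, D' (algebraMap B K b) = D b := by
  have hinj : Function.Injective (KaehlerDifferential.mapBaseChange k B K) := by
    rw [injective_iff_map_eq_zero]
    intro x hx
    obtain ⟨x, rfl⟩ := (Algebra.H1Cotangent.exact_δ_mapBaseChange k B K x).1 hx
    rw [Subsingleton.elim x 0, map_zero]
  obtain ⟨r, hr⟩ := LinearMap.exists_leftInverse_of_injective _ (LinearMap.ker_eq_bot.2 hinj)
  refine ⟨(D.liftKaehlerDifferential.liftBaseChange K ∘ₗ r).compDer (KaehlerDifferential.D k K),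
    fun b => ?_⟩
  have hb : KaehlerDifferential.D k K (algebraMap B K b) =
      KaehlerDifferential.mapBaseChange k B K (1 ⊗ₜ KaehlerDifferential.D k B b) := by
    rw [KaehlerDifferential.mapBaseChange_tmul, KaehlerDifferential.map_D, one_smul]
  change D.liftKaehlerDifferential.liftBaseChange K (r (KaehlerDifferential.D k K _)) = D b
  rw [hb, ← LinearMap.comp_apply r, hr]
  simp

variable [CommRing A] [Algebra k A] [Field K] [Algebra k K] [Algebra A K]

lemma exists_forall_smul_derivation_eq_algebraMap [IsDomain A] [IsFractionRing A K]
    [Algebra.FiniteType k A] (D : Derivation k A K) :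
    ∃ c : A, c ≠ 0 ∧ ∀ a, ∃ a', c • D a = algebraMap A K a' := by
  classical
  obtain ⟨s, hs⟩ := Algebra.FiniteType.out (R := k) (A := A)
  obtain ⟨⟨c, hc⟩, hint⟩ := IsLocalization.exist_integer_multiples_of_finset (nonZeroDivisors A)
    (s.image D)
  refine ⟨c, nonZeroDivisors.ne_zero hc, fun a => ?_⟩
  have ha : a ∈ Algebra.adjoin k (s : Set A) := hs ▸ Algebra.mem_top
  induction ha using Algebra.adjoin_induction with
  | mem x hx =>
    obtain ⟨a', ha'⟩ := hint (D x) (Finset.mem_image_of_mem _ hx)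
    exact ⟨a', ha'.symm⟩
  | algebraMap r => exact ⟨0, by simp only [Derivation.map_algebraMap, smul_zero, map_zero]⟩
  | add x y _ _ hx hy =>
    obtain ⟨x', hx⟩ := hx
    obtain ⟨y', hy⟩ := hy
    exact ⟨x' + y', by rw [map_add, smul_add, hx, hy, map_add]⟩
  | mul x y _ _ hx hy =>
    obtain ⟨x', hx⟩ := hx
    obtain ⟨y', hy⟩ := hy
    refine ⟨x * y' + y * x', ?_⟩
    rw [Derivation.leibniz, smul_add, smul_comm, hy, smul_comm c y, hx]
    simp only [Algebra.smul_def, map_add, map_mul]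

lemma exists_derivation_algebraMap_eq_smul [IsScalarTower k A K]
    (hinj : Function.Injective (algebraMap A K)) (D : Derivation k A K) (c : A)
    (hc : ∀ a, ∃ a', c • D a = algebraMap A K a') :
    ∃ θ : Derivation k A A, ∀ a, algebraMap A K (θ a) = c • D a := by
  choose θ hθ using hc
  let lin : A →ₗ[k] A :=
    { toFun := θ
      map_add' := fun x y => hinj (by rw [← hθ, map_add, map_add, ← hθ, ← hθ, smul_add])
      map_smul' := fun r x => hinj (by
        rw [← hθ, Derivation.map_smul, RingHom.id_apply, Algebra.smul_def r (θ x), map_mul, ← hθ,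
          ← IsScalarTower.algebraMap_apply k A K, ← Algebra.smul_def, smul_comm]) }
  refine ⟨Derivation.mk' lin fun a b => hinj ?_, fun a => (hθ a).symm⟩
  change algebraMap A K (θ (a * b)) = algebraMap A K (a * θ b + b * θ a)
  rw [← hθ, Derivation.leibniz, map_add, map_mul, map_mul, ← hθ, ← hθ]
  simp only [Algebra.smul_def]
  ring

variable [IsDomain A] [Algebra.FiniteType k A] [CommRing B] [IsDomain B] [CharZero B] [Algebra k B]
  [Algebra B A] [IsScalarTower k B A]

lemma exists_derivation_algebraMap_eq_mul (hBA : Function.Injective (algebraMap B A))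
    (D : Derivation k B B) :
    ∃ c : A, c ≠ 0 ∧ ∃ θ : Derivation k A A,
      ∀ b, θ (algebraMap B A b) = c * algebraMap B A (D b) := by
  let K := FractionRing A
  have hBK : Function.Injective (algebraMap B K) := by
    rw [IsScalarTower.algebraMap_eq B A K]
    exact (IsFractionRing.injective A K).comp hBA
  have := formallySmooth_of_injective hBK
  obtain ⟨D', hD'⟩ := exists_derivation_comp_algebraMap_eq ((Algebra.linearMap B K).compDer D)
  obtain ⟨c, hc, hint⟩ := exists_forall_smul_derivation_eq_algebraMap (D'.compAlgebraMap A)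
  obtain ⟨θ, hθ⟩ := exists_derivation_algebraMap_eq_smul (IsFractionRing.injective A K)
    (D'.compAlgebraMap A) c hint
  refine ⟨c, hc, θ, fun b => IsFractionRing.injective A K ?_⟩
  rw [hθ, Derivation.compAlgebraMap_apply, ← IsScalarTower.algebraMap_apply, hD', map_mul,
    Algebra.smul_def, ← IsScalarTower.algebraMap_apply]
  rfl

end DerivationExtension

/-! ### Ideals stable under derivations -/

section DerivationStable

variable {A : Type*} [CommRing A] {p : Ideal A} {t : A}

lemma eq_zero_of_forall_exists_mul_eq_mul [IsDomain A] [IsNoetherianRing A] [p.IsPrime] {u : A}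
    (ht : t ∈ p) (hu : u ∉ p) {T : Set A} (hT : ∀ x ∈ T, ∃ y ∈ T, u * x = t * y) {x : A}
    (hx : x ∈ T) : x = 0 := by
  let L := Localization.AtPrime p
  have hpow : ∀ n, ∀ x ∈ T, algebraMap A L x ∈ IsLocalRing.maximalIdeal L ^ n := by
    intro n
    induction n with
    | zero => simp
    | succ n ih =>
      intro x hx
      obtain ⟨y, hy, e⟩ := hT x hx
      have hU : IsUnit (algebraMap A L u) :=
        IsLocalization.map_units L (⟨u, hu⟩ : p.primeCompl)
      rw [← Ideal.unit_mul_mem_iff_mem _ hU, ← map_mul, e, map_mul, pow_succ']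
      exact Ideal.mul_mem_mul ((IsLocalization.AtPrime.to_map_mem_maximal_iff L p t).2 ht) (ih y hy)
  have h0 : algebraMap A L x ∈ (⨅ n : ℕ, IsLocalRing.maximalIdeal L ^ n : Ideal L) := by
    simpa only [Submodule.mem_iInf] using fun n => hpow n x hx
  rw [Ideal.iInf_pow_eq_bot_of_isLocalRing _ (Ideal.IsPrime.ne_top'), Ideal.mem_bot] at h0
  exact (map_eq_zero_iff _ (IsLocalization.injective L p.primeCompl_le_nonZeroDivisors)).1 h0

lemma IsLocalGenerator.exists_pow_mul_mem [IsDomain A] [IsNoetherianRing A] [p.IsPrime]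
    (ht : IsLocalGenerator p t) {c : Ideal A} (hc : c ≠ ⊥) : ∃ n, ∃ y ∉ p, t ^ n * y ∈ c := by
  obtain ⟨htp, u, hu, hdvd⟩ := ht
  obtain ⟨x, hx, hx0⟩ := Submodule.exists_mem_ne_zero_of_ne_bot hc
  by_contra! hcon
  refine hx0 (eq_zero_of_forall_exists_mul_eq_mul htp hu (T := {y | ∃ n, t ^ n * y ∈ c}) ?_
    ⟨0, by simpa using hx⟩)
  rintro y ⟨n, hn⟩
  obtain ⟨z, hz⟩ := hdvd y (by by_contra hy; exact hcon n y hy hn)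
  refine ⟨z, ⟨n + 1, ?_⟩, hz⟩
  rw [pow_succ, mul_assoc, ← hz, mul_left_comm]
  exact c.mul_mem_left _ hn

lemma derivation_eq_zero_of_isAlgebraic {B : Type*} [CommRing B] [IsDomain B] [Algebra A B]
    [CharZero A] [IsDomain A] (hinj : Function.Injective (algebraMap A B)) (D : Derivation A B B)
    {b : B} (hb : IsAlgebraic A b) : D b = 0 := by
  obtain ⟨f, hf, hfb⟩ := hb
  induction hn : f.natDegree using Nat.strong_induction_on generalizing f with
  | _ n ih =>
    have hmul : Polynomial.aeval b f.derivative * D b = 0 := by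
      rw [← smul_eq_mul, ← D.map_aeval, hfb, map_zero]
    refine (mul_eq_zero.1 hmul).elim (fun hfb' => ?_) id
    have hdeg : f.natDegree ≠ 0 := by
      intro h
      rw [Polynomial.eq_C_of_natDegree_eq_zero h] at hf hfb
      rw [Polynomial.aeval_C, map_eq_zero_iff _ hinj] at hfb
      exact hf (by rw [hfb, map_zero])
    exact ih _ (hn ▸ Polynomial.natDegree_derivative_lt hdeg) f.derivative
      (fun h => hdeg (Polynomial.derivative_eq_zero.1 h)) hfb' rfl

variable {k σ : Type*} [CommRing k] [Algebra k A]

lemma derivation_eq_zero_of_isTranscendenceBasis [IsDomain A] [CharZero A] {y : σ → A}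
    (hy : IsTranscendenceBasis k y) (D : Derivation k A A) (hD : ∀ i, D (y i) = 0) : D = 0 := by
  have : Nontrivial k := (algebraMap k A).domain_nontrivial
  let A₀ := Algebra.adjoin k (Set.range y)
  have hA₀ : Set.EqOn D (0 : Derivation k A A) A₀ :=
    Derivation.eqOn_adjoin (by rintro _ ⟨i, rfl⟩; exact hD i)
  let lin : A →ₗ[A₀] A :=
    { toFun := D
      map_add' := map_add D
      map_smul' := fun c x => by
        rw [Subalgebra.smul_def, smul_eq_mul, D.leibniz, hA₀ c.2]
        simp [Subalgebra.smul_def] }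
  let D₀ : Derivation A₀ A A := Derivation.mk' lin D.leibniz
  have : Algebra.IsAlgebraic A₀ A := hy.isAlgebraic
  ext a
  exact derivation_eq_zero_of_isAlgebraic Subtype.val_injective D₀
    (Algebra.IsAlgebraic.isAlgebraic a)

lemma algebraicIndependent_option_elim [IsDomain A] [p.IsPrime] (ht : t ∈ p) (ht0 : t ≠ 0)
    {y : σ → A} (hy : AlgebraicIndependent k fun i => Ideal.Quotient.mk p (y i)) :
    AlgebraicIndependent k fun o : Option σ => o.elim t y := by
  have hker : ∀ a ∈ Algebra.adjoin k (Set.range y), a ∈ p → a = 0 := by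
    intro a ha hap
    rw [Algebra.adjoin_range_eq_range_aeval] at ha
    obtain ⟨f, rfl⟩ := ha
    rw [hy.eq_zero_of_aeval_eq_zero f, map_zero]
    rw [← Ideal.Quotient.eq_zero_iff_mem] at hap
    exact (MvPolynomial.aeval_algebraMap_apply (A ⧸ p) y f).trans hap
  have hy' : AlgebraicIndependent k y := .of_comp (Ideal.Quotient.mkₐ k p) hy
  rw [hy'.option_iff_transcendental, transcendental_iff]
  intro f hf
  by_contra hf0
  obtain ⟨q, hfq, hq⟩ := Polynomial.exists_eq_pow_rootMultiplicity_mul_and_not_dvd f hf0 0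
  rw [map_zero, sub_zero] at hfq hq
  have hqt : Polynomial.aeval t q = 0 := by
    rw [hfq, map_mul, map_pow, Polynomial.aeval_X] at hf
    exact (mul_eq_zero.1 hf).resolve_left (pow_ne_zero _ ht0)
  refine hq (Polynomial.X_dvd_iff.2 (Subtype.ext (hker _ (q.coeff 0).2 ?_)))
  rw [← q.divX_mul_X_add, map_add, map_mul, Polynomial.aeval_X, Polynomial.aeval_C] at hqt
  change algebraMap (Algebra.adjoin k (Set.range y)) A (q.coeff 0) ∈ p
  rw [eq_neg_of_add_eq_zero_right hqt]
  exact p.neg_mem (p.mul_mem_left _ ht)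

lemma exists_derivation_apply_eq_of_algebraicIndependent [IsDomain A] {K : Type*}
    [Field K] [CharZero k] [IsDomain k]
    [Algebra k K] [Algebra A K] [IsScalarTower k A K] [FaithfulSMul A K] {x : σ → A}
    (hx : AlgebraicIndependent k x) (v : σ → K) :
    ∃ D : Derivation k A K, ∀ i, D (x i) = v i := by
  let : Algebra (MvPolynomial σ k) K := ((IsScalarTower.toAlgHom k A K).comp
    (MvPolynomial.aeval x)).toAlgebra
  have : IsScalarTower k (MvPolynomial σ k) K := .of_algHom _
  have := formallySmooth_of_injective (B := MvPolynomial σ k) (K := K)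
    ((FaithfulSMul.algebraMap_injective A K).comp hx)
  obtain ⟨D, hD⟩ := exists_derivation_comp_algebraMap_eq
    (MvPolynomial.mkDerivation (A := K) k v)
  refine ⟨D.compAlgebraMap A, fun i => ?_⟩
  rw [Derivation.compAlgebraMap_apply, ← MvPolynomial.mkDerivation_X k v, ← hD]
  congr 1
  exact congrArg (algebraMap A K) (MvPolynomial.aeval_X x i).symm

lemma IsLocalGenerator.derivation_mem [p.IsPrime] (ht : IsLocalGenerator p t)
    {θ : Derivation k A A} (hθt : θ t ∈ p) {s : A} (hs : s ∈ p) : θ s ∈ p := by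
  obtain ⟨htp, u, hu, hdvd⟩ := ht
  obtain ⟨s', e⟩ := hdvd s hs
  refine (‹p.IsPrime›.mem_or_mem (?_ : u * θ s ∈ p)).resolve_left hu
  have hleib := congrArg θ e
  rw [θ.leibniz, θ.leibniz] at hleib
  simp only [smul_eq_mul] at hleib
  rw [eq_sub_of_add_eq hleib]
  exact p.sub_mem (p.add_mem (p.mul_mem_right _ htp) (p.mul_mem_left _ hθt)) (p.mul_mem_right _ hs)

lemma derivation_mem_of_isTranscendenceBasis [CharZero k] [FaithfulSMul k (A ⧸ p)]
    [p.IsPrime] {y : σ → A}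
    (hy : IsTranscendenceBasis k fun i => Ideal.Quotient.mk p (y i)) {θ : Derivation k A A}
    (hθ : ∀ s ∈ p, θ s ∈ p) (hθy : ∀ i, θ (y i) = 0) (a : A) : θ a ∈ p := by
  have : CharZero (A ⧸ p) :=
    charZero_of_injective_algebraMap (FaithfulSMul.algebraMap_injective k (A ⧸ p))
  let D := Derivation.liftOfSurjective (f := Ideal.Quotient.mkₐ k p) (d := θ)
    Ideal.Quotient.mk_surjective fun s hs =>
      Ideal.Quotient.eq_zero_iff_mem.2 (hθ s (Ideal.Quotient.eq_zero_iff_mem.1 hs))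
  have hD : ∀ a, D (Ideal.Quotient.mk p a) = Ideal.Quotient.mk p (θ a) :=
    Derivation.liftOfSurjective_apply _ _
  have hD0 : D = 0 := derivation_eq_zero_of_isTranscendenceBasis hy D fun i => by
    rw [hD, hθy, map_zero]
  rw [← Ideal.Quotient.eq_zero_iff_mem, ← hD, hD0, Derivation.zero_apply]

end DerivationStable

section AffineDomain

variable {k A : Type*} [Field k] [CharZero k] [CommRing A] [IsDomain A] [Algebra k A]
  [Algebra.FiniteType k A] [IsNoetherianRing A] {p : Ideal A} {t : A}

/-- Extend `∂ / ∂t` to a derivation `D` into the fraction field, in coordinates consisting of `t`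
and lifts `y` of a transcendence basis of `A ⧸ p`. If an integral multiple `g D` preserves `p`, it
induces zero on `A ⧸ p`, because it kills `y`; so it is divisible by `t` over `A_p`. This cannot
continue indefinitely. -/
lemma IsLocalGenerator.exists_derivation_notMem [p.IsPrime] (ht : IsLocalGenerator p t)
    (ht0 : t ≠ 0) : ∃ θ : Derivation k A A, θ t ∉ p := by
  obtain ⟨σ, hσ⟩ := exists_isTranscendenceBasis k (A ⧸ p)
  choose y hy using fun i : σ => Ideal.Quotient.mk_surjective (i : A ⧸ p)
  have hyb : IsTranscendenceBasis k fun i : σ => Ideal.Quotient.mk p (y i) := by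
    simpa only [hy] using hσ
  let K := FractionRing A
  have hK := IsFractionRing.injective A K
  obtain ⟨D, hD⟩ := exists_derivation_apply_eq_of_algebraicIndependent
    (algebraicIndependent_option_elim ht.1 ht0 hyb.1)
    (fun o : Option σ => o.elim (1 : K) 0)
  have hDt : D t = 1 := hD none
  have hDy : ∀ i, D (y i) = 0 := fun i => hD (some i)
  obtain ⟨g₀, hg₀, hint⟩ := exists_forall_smul_derivation_eq_algebraMap D
  have ht' := ht
  obtain ⟨htp, u, hu, hdvd⟩ := ht'
  by_contra! hcon
  refine hg₀ (eq_zero_of_forall_exists_mul_eq_mul htp hu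
    (T := {g | ∀ a, ∃ a', g • D a = algebraMap A K a'}) ?_ hint)
  intro g hg
  obtain ⟨θ, hθ⟩ := exists_derivation_algebraMap_eq_smul hK D g hg
  have hθt : θ t = g := hK (by rw [hθ, hDt, Algebra.smul_def, mul_one])
  have hθp : ∀ a, θ a ∈ p := derivation_mem_of_isTranscendenceBasis hyb
    (fun s => ht.derivation_mem (hcon θ)) fun i => hK (by rw [hθ, hDy, smul_zero, map_zero])
  obtain ⟨g', hg'⟩ := hdvd g (hθt ▸ hcon θ)
  refine ⟨g', fun a => ?_, hg'⟩
  obtain ⟨a', ha'⟩ := hdvd _ (hθp a)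
  have htK : algebraMap A K t ≠ 0 := (map_ne_zero_iff _ hK).2 ht0
  refine ⟨a', mul_left_cancel₀ htK ?_⟩
  rw [← map_mul, ← ha', map_mul, hθ, Algebra.smul_def, Algebra.smul_def, ← mul_assoc, ← mul_assoc,
    ← map_mul, ← map_mul, hg']

/-- A derivation transversal to `V(p)` lowers the order of vanishing along `V(p)`. -/
lemma not_le_of_forall_derivation_mem [IsIntegrallyClosed A] {c : Ideal A} (hc0 : c ≠ ⊥)
    (hc : ∀ θ : Derivation k A A, ∀ x ∈ c, θ x ∈ c) (hp : p.IsPrime) (hp1 : p.height = 1) :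
    ¬ c ≤ p := by
  obtain ⟨t, ht⟩ := exists_isLocalGenerator_of_height_eq_one hp hp1
  obtain ⟨θ, hθ⟩ := ht.exists_derivation_notMem (k := k)
    (ht.ne_zero (Ideal.ne_bot_of_height_eq_one hp1))
  intro hcp
  obtain ⟨n, y, hy, hn⟩ := ht.exists_pow_mul_mem hc0
  induction n generalizing y with
  | zero => exact hy (hcp (by simpa using hn))
  | succ n ih =>
    refine ih (((n + 1 : ℕ) : A) * (y ^ 2 * θ t)) ?_ ?_
    · have hunit : IsUnit ((n + 1 : ℕ) : A) := by
        simpa using (IsUnit.mk0 ((n + 1 : ℕ) : k) (by exact_mod_cast n.succ_ne_zero)).map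
          (algebraMap k A)
      rw [Ideal.unit_mul_mem_iff_mem _ hunit]
      exact fun h => (hp.mem_or_mem h).elim (fun h => hy (hp.mem_of_pow_mem _ h)) hθ
    · have hmem := c.sub_mem (c.mul_mem_left y (hc θ _ hn)) (c.mul_mem_left (θ y) hn)
      rw [θ.leibniz, θ.leibniz_pow] at hmem
      convert hmem using 1
      simp only [smul_eq_mul, nsmul_eq_mul, Nat.add_sub_cancel]
      ring

end AffineDomain

/-! ### Evaluation of power series at a closed point -/

open TensorProduct

section TensorDerivation

attribute [local instance] Algebra.TensorProduct.rightAlgebra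

variable {k P A H : Type*} [CommRing k] [CommRing P] [CommRing A] [CommRing H]
  [Algebra k A] [Algebra k H] [Algebra P A] [Algebra P H]

lemma tensorProduct_right_smul_eq_mul (f : H) (x : A ⊗[P] H) : f • x = (1 ⊗ₜ[P] f) * x := by
  rw [Algebra.smul_def]; rfl

lemma tensorProduct_left_smul_eq_mul (a : A) (x : A ⊗[P] H) : a • x = (a ⊗ₜ[P] 1) * x := by
  rw [Algebra.smul_def]; rfl

lemma one_tmul_algebraMap (p : P) : (1 : A) ⊗ₜ[P] algebraMap P H p = algebraMap P A p ⊗ₜ 1 := by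
  rw [Algebra.algebraMap_eq_smul_one, Algebra.algebraMap_eq_smul_one, smul_tmul]

lemma isScalarTower_rightAlgebra [Algebra k P] [IsScalarTower k P A] [IsScalarTower k P H] :
    IsScalarTower k H (A ⊗[P] H) where
  smul_assoc r f x := by
    simp only [tensorProduct_right_smul_eq_mul]
    rw [← smul_mul_assoc, smul_tmul', ← algebraMap_smul P r f, ← algebraMap_smul P r (1 : A),
      smul_tmul]

variable (d₁ : Derivation k A (A ⊗[P] H)) (d₂ : Derivation k H (A ⊗[P] H))

lemma smul_derivation_add_smul_derivation
    (h : ∀ p, d₁ (algebraMap P A p) = d₂ (algebraMap P H p)) (p : P) (a : A) (f : H) :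
    f • d₁ (p • a) + (p • a) • d₂ f = (p • f) • d₁ a + a • d₂ (p • f) := by
  simp only [Algebra.smul_def p, Derivation.leibniz, h, mul_smul]
  simp only [tensorProduct_right_smul_eq_mul, tensorProduct_left_smul_eq_mul,
    one_tmul_algebraMap]
  ring

/-- The derivation of a tensor product that restricts to given derivations of its two factors. -/
noncomputable def tensorDerivation (h : ∀ p, d₁ (algebraMap P A p) = d₂ (algebraMap P H p)) :
    Derivation k (A ⊗[P] H) (A ⊗[P] H) :=
  let T : A ⊗[P] H →+ A ⊗[P] H := liftAddHom
    (AddMonoidHom.mk' (fun a => AddMonoidHom.mk' (fun f => f • d₁ a + a • d₂ f) fun f g => by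
        rw [add_smul, map_add, smul_add]; abel)
      fun a b => by
        ext f
        simp only [AddMonoidHom.mk'_apply, AddMonoidHom.add_apply, map_add, smul_add, add_smul]
        abel)
    (smul_derivation_add_smul_derivation d₁ d₂ h)
  have hT (a : A) (f : H) : T (a ⊗ₜ f) = f • d₁ a + a • d₂ f := rfl
  Derivation.mk'
    { T with
      map_smul' := fun r x => by
        change T (r • x) = r • T x
        induction x with
        | zero => rw [smul_zero, map_zero, smul_zero]
        | add x y hx hy => rw [smul_add, map_add, hx, hy, map_add, smul_add]
        | tmul a f =>
          rw [smul_tmul', hT, hT, Derivation.map_smul, smul_add, smul_assoc]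
          simp only [tensorProduct_right_smul_eq_mul, mul_smul_comm] }
    fun x y => by
      change T (x * y) = x * T y + y * T x
      induction x with
      | zero => simp only [zero_mul, map_zero, mul_zero, add_zero]
      | add x x' hx hx' => rw [add_mul, map_add, hx, hx', map_add]; ring
      | tmul a f =>
        induction y with
        | zero => simp only [zero_mul, map_zero, mul_zero, add_zero]
        | add y y' hy hy' => rw [mul_add, map_add, hy, hy', map_add]; ring
        | tmul b g =>
          have hmul (a : A) (f : H) : a ⊗ₜ[P] f = (a ⊗ₜ 1) * (1 ⊗ₜ f) := by simp
          rw [Algebra.TensorProduct.tmul_mul_tmul, hT, hT, hT, hmul a, hmul b]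
          simp only [Derivation.leibniz, mul_smul]
          simp only [tensorProduct_right_smul_eq_mul, tensorProduct_left_smul_eq_mul]
          ring

lemma tensorDerivation_tmul (h : ∀ p, d₁ (algebraMap P A p) = d₂ (algebraMap P H p)) (a : A)
    (f : H) : tensorDerivation d₁ d₂ h (a ⊗ₜ f) = f • d₁ a + a • d₂ f :=
  rfl

end TensorDerivation

section SeriesDerivation

attribute [local instance] Algebra.TensorProduct.rightAlgebra

lemma derivation_sum_apply {k A M ι : Type*} [CommSemiring k] [CommSemiring A] [AddCommMonoid M]
    [Algebra k A] [Module A M] [Module k M] (s : Finset ι) (D : ι → Derivation k A M) (a : A) :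
    (∑ i ∈ s, D i) a = ∑ i ∈ s, D i a :=
  (congrFun (map_sum (Derivation.coeFnAddMonoidHom (R := k) (A := A) (M := M)) D s) a).trans
    (Finset.sum_apply a s _)

variable {k σ A : Type*} [Fintype σ] [CommRing k] [CommRing A] [Algebra k A]
  [Algebra (MvPolynomial σ k) A] [IsScalarTower k (MvPolynomial σ k) A]

lemma derivation_algebraMap_eq_sum_pderiv (θ : Derivation k A A) (f : MvPolynomial σ k) :
    θ (algebraMap (MvPolynomial σ k) A f) =
      ∑ i, θ (algebraMap (MvPolynomial σ k) A (MvPolynomial.X i)) *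
        algebraMap (MvPolynomial σ k) A (MvPolynomial.pderiv i f) := by
  have h : θ.compAlgebraMap (MvPolynomial σ k) =
      ∑ i, θ (algebraMap (MvPolynomial σ k) A (MvPolynomial.X i)) •
        (Algebra.linearMap (MvPolynomial σ k) A).compDer (MvPolynomial.pderiv i) := by
    classical
    refine MvPolynomial.derivation_ext fun j => ?_
    simp [derivation_sum_apply, MvPolynomial.pderiv_X, Pi.single_apply]
  simpa [derivation_sum_apply] using congr($h f)

/-- The extension to `A ⊗ k⟦x⟧` of a derivation `θ` of `A`: by the chain rule it acts on power
series as `∑ i, θ (xᵢ) ∂/∂xᵢ`. -/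
noncomputable def seriesDerivation (θ : Derivation k A A) :
    Derivation k (A ⊗[MvPolynomial σ k] MvPowerSeries σ k)
      (A ⊗[MvPolynomial σ k] MvPowerSeries σ k) :=
  have := isScalarTower_rightAlgebra (k := k) (P := MvPolynomial σ k) (A := A)
    (H := MvPowerSeries σ k)
  tensorDerivation
    ((Algebra.linearMap A (A ⊗[MvPolynomial σ k] MvPowerSeries σ k)).compDer θ)
    (∑ i, θ (algebraMap (MvPolynomial σ k) A (MvPolynomial.X i)) •
      (Algebra.linearMap (MvPowerSeries σ k)
        (A ⊗[MvPolynomial σ k] MvPowerSeries σ k)).compDer (MvPowerSeries.pderiv k i))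
    fun f => by
      rw [derivation_sum_apply]
      change θ _ ⊗ₜ 1 = ∑ i, θ _ • 1 ⊗ₜ[MvPolynomial σ k]
        MvPowerSeries.pderiv k i (f : MvPowerSeries σ k)
      rw [derivation_algebraMap_eq_sum_pderiv, sum_tmul]
      refine Finset.sum_congr rfl fun i _ => ?_
      rw [MvPowerSeries.pderiv_coe, ← smul_eq_mul (θ _), ← smul_tmul']
      exact congrArg _ (one_tmul_algebraMap (MvPolynomial.pderiv i f)).symm

lemma seriesDerivation_tmul (θ : Derivation k A A) (a : A) (f : MvPowerSeries σ k) :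
    seriesDerivation θ (a ⊗ₜ f) = θ a ⊗ₜ f +
      ∑ i, (a * θ (algebraMap (MvPolynomial σ k) A (MvPolynomial.X i))) ⊗ₜ
        MvPowerSeries.pderiv k i f := by
  rw [seriesDerivation, tensorDerivation_tmul, derivation_sum_apply, Finset.smul_sum]
  have h₁ : ((Algebra.linearMap A (A ⊗[MvPolynomial σ k] MvPowerSeries σ k)).compDer θ) a =
      θ a ⊗ₜ 1 := rfl
  rw [h₁, tensorProduct_right_smul_eq_mul, Algebra.TensorProduct.tmul_mul_tmul, one_mul, mul_one]
  congr 1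
  refine Finset.sum_congr rfl fun i _ => ?_
  change a • θ _ • (1 ⊗ₜ[MvPolynomial σ k] MvPowerSeries.pderiv k i f) = _
  rw [smul_tmul', smul_tmul', smul_eq_mul, smul_eq_mul, mul_one]

end SeriesDerivation

section SeriesEval

variable {k σ A S : Type*} [CommRing k] [CommRing A] [CommRing S]
  [Algebra (MvPolynomial σ k) S] {Q : Ideal S}
  (hQ : ∀ i, algebraMap (MvPolynomial σ k) S (MvPolynomial.X i) ∈ Q)

include hQ in
lemma idealOfVars_pow_le_comap (n : ℕ) :
    MvPolynomial.idealOfVars σ k ^ n ≤ (Q ^ n).comap (Algebra.ofId (MvPolynomial σ k) S) := by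
  refine (Ideal.pow_right_mono ?_ n).trans (Ideal.le_comap_pow _ n)
  rw [MvPolynomial.idealOfVars, Ideal.span_le]
  rintro _ ⟨i, rfl⟩
  exact hQ i

variable [Finite σ] [Algebra (MvPolynomial σ k) A] [Algebra A S]
  [IsScalarTower (MvPolynomial σ k) A S]

/-- Evaluation of `A ⊗ k⟦x⟧` modulo `Q ^ n`, where `Q` is a closed point at which the coordinates
`x` vanish: power series are truncated in total degree `n`. -/
noncomputable def seriesEval (n : ℕ) :
    A ⊗[MvPolynomial σ k] MvPowerSeries σ k →ₐ[A] S ⧸ Q ^ n :=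
  Algebra.TensorProduct.lift (Algebra.ofId A (S ⧸ Q ^ n))
    ((Ideal.quotientMapₐ (Q ^ n) (Algebra.ofId (MvPolynomial σ k) S)
      (idealOfVars_pow_le_comap hQ n)).comp (MvPowerSeries.truncTotalAlgHom σ k n))
    fun _ _ => .all _ _

lemma seriesEval_tmul (n : ℕ) (a : A) (f : MvPowerSeries σ k) :
    seriesEval hQ n (a ⊗ₜ f) = Ideal.Quotient.mk (Q ^ n)
      (algebraMap A S a * algebraMap (MvPolynomial σ k) S (f.truncTotal n)) := by
  rw [seriesEval, Algebra.TensorProduct.lift_tmul, map_mul]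
  rfl

lemma factorPow_seriesEval {n m : ℕ} (hnm : n ≤ m) (x : A ⊗[MvPolynomial σ k] MvPowerSeries σ k) :
    Ideal.Quotient.factorPow Q hnm (seriesEval hQ m x) = seriesEval hQ n x := by
  induction x with
  | zero => simp only [map_zero]
  | add x y hx hy => simp only [map_add, hx, hy]
  | tmul a f =>
    rw [seriesEval_tmul, seriesEval_tmul, Ideal.Quotient.factor_mk, Ideal.Quotient.eq, ← mul_sub,
      ← map_sub]
    exact Ideal.mul_mem_left _ _ (idealOfVars_pow_le_comap hQ n
      (MvPowerSeries.truncTotal_sub_truncTotal_mem_pow_idealOfVars hnm le_rfl f))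

lemma seriesEval_eq_mk_of_le {n m : ℕ} (hnm : n ≤ m)
    {x : A ⊗[MvPolynomial σ k] MvPowerSeries σ k} {s : S}
    (hs : seriesEval hQ m x = Ideal.Quotient.mk (Q ^ m) s) :
    seriesEval hQ n x = Ideal.Quotient.mk (Q ^ n) s := by
  rw [← factorPow_seriesEval hQ hnm, hs, Ideal.Quotient.factor_mk]

end SeriesEval

section SeriesKernel

lemma pderiv_truncTotal_succ {k σ : Type*} [CommRing k] [Finite σ] (f : MvPowerSeries σ k) (i : σ)
    (n : ℕ) :
    MvPolynomial.pderiv i (f.truncTotal (n + 1)) = (MvPowerSeries.pderiv k i f).truncTotal n := by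
  ext d
  have hdeg : (d + Finsupp.single i 1).degree = d.degree + 1 := by
    rw [map_add, Finsupp.degree_single]
  rw [MvPolynomial.coeff_pderiv, MvPowerSeries.coeff_truncTotal_eq_ite,
    MvPowerSeries.coeff_truncTotal_eq_ite, MvPowerSeries.coeff_pderiv, hdeg]
  simp only [Nat.add_lt_add_iff_right, ite_mul, zero_mul]

lemma derivation_mem_pow {k S : Type*} [CommRing k] [CommRing S] [Algebra k S]
    (Θ : Derivation k S S) (Q : Ideal S) (n : ℕ) : ∀ s ∈ Q ^ (n + 1), Θ s ∈ Q ^ n := by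
  induction n with
  | zero => simp
  | succ n ih =>
    intro s hs
    rw [pow_succ] at hs
    refine Submodule.mul_induction_on hs (fun x hx y hy => ?_) (fun x y hx hy => ?_)
    · rw [Θ.leibniz, smul_eq_mul, smul_eq_mul, mul_comm y]
      refine add_mem (Ideal.mul_mem_right _ _ hx) ?_
      rw [pow_succ]
      exact Ideal.mul_mem_mul (ih x hx) hy
    · rw [map_add]; exact add_mem hx hy

lemma exists_forall_mem_pow_of_mul_mem_pow {S : Type*} [CommRing S] [IsDomain S]
    [IsNoetherianRing S] (Q : Ideal S) {a : S} (ha : a ≠ 0) :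
    ∃ c, ∀ n s, a * s ∈ Q ^ (n + c) → s ∈ Q ^ n := by
  obtain ⟨c, hc⟩ := Ideal.exists_pow_inf_eq_pow_smul Q (Ideal.span {a})
  refine ⟨c, fun n s hs => ?_⟩
  have has : a * s ∈ (Q ^ (n + c) • ⊤ ⊓ Ideal.span {a} : Ideal S) :=
    ⟨by simpa using hs, Ideal.mul_mem_right _ _ (Ideal.mem_span_singleton_self a)⟩
  rw [hc (n + c) (Nat.le_add_left c n), Nat.add_sub_cancel] at has
  obtain ⟨z, hz, e⟩ := Ideal.mem_mul_span_singleton.1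
    (Submodule.smul_mono le_rfl inf_le_right has : a * s ∈ Q ^ n * Ideal.span {a})
  rwa [mul_left_cancel₀ ha (by rw [← e, mul_comm] : a * s = a * z)]

variable {k σ A S : Type*} [CommRing k] [CommRing A] [CommRing S]
  [Algebra (MvPolynomial σ k) A] [Algebra (MvPolynomial σ k) S] [Algebra A S]
  [IsScalarTower (MvPolynomial σ k) A S] {Q : Ideal S}
  (hQ : ∀ i, algebraMap (MvPolynomial σ k) S (MvPolynomial.X i) ∈ Q)

/-- The elements of `A ⊗ k⟦x⟧` that vanish to infinite order at the closed point `Q`. -/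
noncomputable def seriesKernel [Finite σ] : Ideal (A ⊗[MvPolynomial σ k] MvPowerSeries σ k) :=
  ⨅ n, RingHom.ker (seriesEval hQ n)

lemma mem_seriesKernel [Finite σ] {x : A ⊗[MvPolynomial σ k] MvPowerSeries σ k} :
    x ∈ seriesKernel hQ ↔ ∀ n, seriesEval hQ n x = 0 := by
  simp only [seriesKernel, Ideal.mem_iInf, RingHom.mem_ker]

variable [Fintype σ] [Algebra k A] [Algebra k S] [IsScalarTower k (MvPolynomial σ k) A]

lemma exists_seriesEval_seriesDerivation {θ : Derivation k A A} {c : S} {Θ : Derivation k S S}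
    (hΘ : ∀ a, Θ (algebraMap A S a) = c * algebraMap A S (θ a)) (n : ℕ)
    (x : A ⊗[MvPolynomial σ k] MvPowerSeries σ k) :
    ∃ s, seriesEval hQ (n + 1) x = Ideal.Quotient.mk _ s ∧
      Ideal.Quotient.mk _ c * seriesEval hQ n (seriesDerivation θ x) =
        Ideal.Quotient.mk _ (Θ s) := by
  induction x with
  | zero => exact ⟨0, by simp only [map_zero], by simp only [map_zero, mul_zero]⟩
  | add x y hx hy =>
    obtain ⟨s, h1, h2⟩ := hx
    obtain ⟨t, h3, h4⟩ := hy
    exact ⟨s + t, by rw [map_add, h1, h3, map_add], by simp only [map_add, mul_add, h2, h4]⟩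
  | tmul a f =>
    refine ⟨_, seriesEval_tmul hQ _ a f, ?_⟩
    rw [seriesDerivation_tmul, map_add, map_sum,
      seriesEval_eq_mk_of_le hQ n.le_succ (seriesEval_tmul hQ (n + 1) (θ a) f)]
    simp only [seriesEval_tmul, ← pderiv_truncTotal_succ]
    rw [← map_sum, ← map_add, ← map_mul, Θ.leibniz,
      IsScalarTower.algebraMap_apply (MvPolynomial σ k) A S (f.truncTotal (n + 1)), hΘ, hΘ,
      derivation_algebraMap_eq_sum_pderiv θ (f.truncTotal (n + 1))]
    congr 1
    simp only [smul_eq_mul, map_sum, map_mul, Finset.mul_sum, mul_add,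
      ← IsScalarTower.algebraMap_apply (MvPolynomial σ k) A S]
    rw [add_comm]
    congr 1
    · exact Finset.sum_congr rfl fun i _ => by ring
    · ring

lemma seriesDerivation_mem_seriesKernel [IsDomain A] [CharZero A] [IsDomain S]
    [IsScalarTower k A S] [IsNoetherianRing S] [Algebra.FiniteType k S]
    (hinj : Function.Injective (algebraMap A S)) (θ : Derivation k A A)
    {x : A ⊗[MvPolynomial σ k] MvPowerSeries σ k} (hx : x ∈ seriesKernel hQ) :
    seriesDerivation θ x ∈ seriesKernel hQ := by
  rw [mem_seriesKernel] at hx ⊢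
  intro n
  obtain ⟨c, hc, Θ, hΘ⟩ := exists_derivation_algebraMap_eq_mul hinj θ
  obtain ⟨m, hm⟩ := exists_forall_mem_pow_of_mul_mem_pow Q hc
  obtain ⟨s, hs, hΘs⟩ := exists_seriesEval_seriesDerivation hQ hΘ (n + m) x
  rw [hx, eq_comm, Ideal.Quotient.eq_zero_iff_mem] at hs
  rw [Ideal.Quotient.eq_zero_iff_mem.2 (derivation_mem_pow Θ Q _ s hs)] at hΘs
  obtain ⟨r, hr⟩ := Ideal.Quotient.mk_surjective (seriesEval hQ (n + m) (seriesDerivation θ x))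
  rw [← hr, ← map_mul, Ideal.Quotient.eq_zero_iff_mem] at hΘs
  rw [seriesEval_eq_mk_of_le hQ (Nat.le_add_right n m) hr.symm, Ideal.Quotient.eq_zero_iff_mem]
  exact hm n r hΘs

end SeriesKernel

/-! ### Splitting off a branch of the completion -/

section GenericSplitting

lemma exists_mem_sup_annihilator_of_isLocalization {W W' : Type*} [CommRing W] [CommRing W']
    [Algebra W W'] {T : Submonoid W} [IsLocalization T W'] [IsSemisimpleRing W']
    (hT : T ≤ nonZeroDivisors W) (κ : Ideal W) : ∃ t ∈ T, t ∈ κ ⊔ κ.annihilator := by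
  obtain ⟨I, hI⟩ := exists_isCompl (κ.map (algebraMap W W'))
  obtain ⟨ε, hε, ε', hε', hsum⟩ := Submodule.mem_sup.1 (hI.sup_eq_top ▸ Submodule.mem_top :
    (1 : W') ∈ κ.map (algebraMap W W') ⊔ I)
  obtain ⟨⟨y, t⟩, hy⟩ := (IsLocalization.mem_map_algebraMap_iff T W').1 hε
  refine ⟨t, t.2, Submodule.mem_sup.2 ⟨y, y.2, t - y, ?_, add_sub_cancel _ _⟩⟩
  refine Submodule.mem_annihilator.2 fun x hx => IsLocalization.injective W' hT ?_
  have hεx : ε' * algebraMap W W' x = 0 := (Submodule.mem_bot W').1 <| hI.inf_eq_bot ▸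
    ⟨Ideal.mul_mem_left _ _ (Ideal.mem_map_of_mem _ hx), I.mul_mem_right _ hε'⟩
  rw [smul_eq_mul, map_mul, map_sub, ← hy, map_zero]
  linear_combination algebraMap W W' t * hεx - algebraMap W W' t * algebraMap W W' x * hsum

section FractionField

variable (P A : Type*) [CommRing P] [IsDomain P] [CommRing A] [IsDomain A] [Algebra P A]
  [FaithfulSMul P A]

lemma flat_fractionRing : Module.Flat P (FractionRing A) := by
  let : Algebra (FractionRing P) (FractionRing A) := FractionRing.liftAlgebra P (FractionRing A)
  have := FractionRing.isScalarTower_liftAlgebra P (FractionRing A)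
  have : Module.Flat P (FractionRing P) := IsLocalization.flat _ (nonZeroDivisors P)
  exact .trans P (FractionRing P) (FractionRing A)

lemma formallyUnramified_fractionRing [CharZero P] [Algebra.IsAlgebraic P A] :
    Algebra.FormallyUnramified P (FractionRing A) := by
  let : Algebra (FractionRing P) (FractionRing A) := FractionRing.liftAlgebra P (FractionRing A)
  have := FractionRing.isScalarTower_liftAlgebra P (FractionRing A)
  have : CharZero (FractionRing P) :=
    charZero_of_injective_algebraMap (IsFractionRing.injective P (FractionRing P))
  have := IsLocalization.isAlgebraic (FractionRing A) (nonZeroDivisors A)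
  have : Algebra.IsAlgebraic P (FractionRing A) := .trans P A (FractionRing A)
  have : Algebra.IsAlgebraic (FractionRing P) (FractionRing A) :=
    (IsFractionRing.comap_isAlgebraic_iff (A := P)).1 inferInstance
  have : Algebra.FormallyUnramified (FractionRing P) (FractionRing A) := .of_isSeparable _ _
  have : Algebra.FormallyUnramified P (FractionRing P) := .of_isLocalization (nonZeroDivisors P)
  exact .comp P (FractionRing P) (FractionRing A)

end FractionField

lemma map_fractionRing_tensorProduct_injective {P A : Type*} [CommRing P] [CommRing A]
    [Algebra P A] (M : Type*) [CommRing M] [Algebra P M] [Module.Flat P M] :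
    Function.Injective (Algebra.TensorProduct.map
      (IsScalarTower.toAlgHom P A (FractionRing A)) (.id P M)) :=
  Module.Flat.rTensor_preserves_injective_linearMap
    (IsScalarTower.toAlgHom P A (FractionRing A)).toLinearMap
    (IsFractionRing.injective A (FractionRing A))

variable {P A : Type*} [CommRing P] [IsDomain P] [CommRing A] [IsDomain A] [Algebra P A]
  [FaithfulSMul P A]

lemma isSemisimpleRing_tensorProduct [CharZero P] [Module.Finite P A] (M : Type*) [Field M]
    [Algebra P M] [Module.Flat P M] : IsSemisimpleRing (A ⊗[P] M) := by
  have := formallyUnramified_fractionRing P A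
  have : Algebra.EssFiniteType A (FractionRing A) := .of_isLocalization _ (nonZeroDivisors A)
  have : Algebra.EssFiniteType P (FractionRing A) := .comp P A (FractionRing A)
  have := Algebra.FormallyUnramified.isReduced_of_field M (M ⊗[P] FractionRing A)
  have : IsReduced (A ⊗[P] M) := isReduced_of_injective
    ((Algebra.TensorProduct.comm P (FractionRing A) M).toAlgHom.comp
      (Algebra.TensorProduct.map (IsScalarTower.toAlgHom P A (FractionRing A)) (.id P M)))
    ((Algebra.TensorProduct.comm P (FractionRing A) M).injective.comp
      (map_fractionRing_tensorProduct_injective M))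
  have : IsArtinianRing (M ⊗[P] A) := isArtinian_of_tower M inferInstance
  have := (Algebra.TensorProduct.comm P M A).surjective.isArtinianRing
  exact IsArtinianRing.isSemisimpleRing_of_isReduced _

lemma map_includeRight_le_nonZeroDivisors (H : Type*) [CommRing H] [Algebra P H]
    [Module.Flat P H] :
    (nonZeroDivisors H).map (Algebra.TensorProduct.includeRight : H →ₐ[P] A ⊗[P] H) ≤
      nonZeroDivisors (A ⊗[P] H) := by
  rintro _ ⟨h, hh, rfl⟩
  have := flat_fractionRing P A
  have hmul : LinearMap.lTensor (FractionRing A) (LinearMap.mulRight P h) =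
      LinearMap.mulRight P (1 ⊗ₜ h) := TensorProduct.ext' fun _ _ => by simp
  have hreg : Function.Injective (LinearMap.mulRight P ((1 : FractionRing A) ⊗ₜ[P] h)) :=
    hmul ▸ Module.Flat.lTensor_preserves_injective_linearMap _
      fun _ _ => (mul_cancel_right_mem_nonZeroDivisors hh).1
  refine mem_nonZeroDivisors_of_injective (map_fractionRing_tensorProduct_injective H)
    (mem_nonZeroDivisors_iff_right.2 fun x hx => hreg ?_)
  simpa using hx

/-- An ideal `κ` of `A ⊗ H` is generically a direct factor, since `A ⊗ Frac H` is a finite product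
of fields. -/
lemma exists_tmul_mem_sup_annihilator [CharZero P] [Module.Finite P A] {H : Type*} [CommRing H]
    [IsDomain H] [Algebra P H] [Module.Flat P H] (κ : Ideal (A ⊗[P] H)) :
    ∃ c : H, c ≠ 0 ∧ 1 ⊗ₜ c ∈ κ ⊔ κ.annihilator := by
  let f : A ⊗[P] H →ₐ[A] A ⊗[P] FractionRing H :=
    Algebra.TensorProduct.map (.id A A) (IsScalarTower.toAlgHom P H (FractionRing H))
  let : Algebra (A ⊗[P] H) (A ⊗[P] FractionRing H) := f.toAlgebra
  have : IsScalarTower A (A ⊗[P] H) (A ⊗[P] FractionRing H) := .of_algebraMap_eq fun a =>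
    (f.commutes a).symm
  have : Module.Flat H (FractionRing H) := IsLocalization.flat _ (nonZeroDivisors H)
  have : Module.Flat P (FractionRing H) := .trans P H (FractionRing H)
  have := isSemisimpleRing_tensorProduct (P := P) (A := A) (FractionRing H)
  have := IsLocalization.tensorProduct_tensorProduct_right P A (nonZeroDivisors H) (FractionRing H)
    (RingHom.ext fun h => by simp [RingHom.algebraMap_toAlgebra, f])
  obtain ⟨_, ⟨c, hc, rfl⟩, hmem⟩ := exists_mem_sup_annihilator_of_isLocalization
    (W' := A ⊗[P] FractionRing H) (map_includeRight_le_nonZeroDivisors H) κ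
  exact ⟨c, nonZeroDivisors.ne_zero hc, hmem⟩

end GenericSplitting

section DirectFactor

lemma exists_eq_sum_smul_of_smul_eq_smul {A M : Type*} [CommRing A] [AddCommGroup M] [Module A M]
    [Module.Flat A M] {r s : A} {x y : M} (h : r • x = s • y) :
    ∃ (n : ℕ) (a : Fin n → A) (z : Fin n → M), x = ∑ j, a j • z j ∧ ∀ j, s ∣ r * a j := by
  have hrel : ∑ i, (![r, -s] : Fin 2 → A) i • (![x, y] : Fin 2 → M) i = 0 := by
    simp [Fin.sum_univ_two, h]
  obtain ⟨n, a, z, hx, ha⟩ := Module.Flat.iff_forall_isTrivialRelation.1 ‹_› hrel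
  refine ⟨n, a 0, z, by simpa using hx 0, fun j => ⟨a 1 j, ?_⟩⟩
  have hj := ha j
  simp only [Fin.sum_univ_two, Matrix.cons_val_zero, Matrix.cons_val_one] at hj
  linear_combination hj

/-- A nonzero `δ` in the contraction is `κ`-part plus annihilator-part, `δ = x + u`, and `e = u / δ`
lies in `H` by flatness and condition `S₂`. -/
lemma exists_idempotent_of_sup_annihilator {A H : Type*} [CommRing A] [IsDomain A]
    [IsNoetherianRing A] [IsIntegrallyClosed A] [CommRing H] [Algebra A H] [Module.Flat A H]
    (κ : Ideal H) (hκ : (κ ⊔ κ.annihilator).comap (algebraMap A H) ≠ ⊥)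
    (hκ₁ : ∀ p : Ideal A, p.IsPrime → p.height = 1 →
      ¬ (κ ⊔ κ.annihilator).comap (algebraMap A H) ≤ p) :
    ∃ e : H, e * e = e ∧ (∀ x ∈ κ, e * x = 0) ∧
      ∃ δ : A, δ ≠ 0 ∧ algebraMap A H δ * (1 - e) ∈ κ := by
  obtain ⟨δ, hδ, hδ0⟩ := Submodule.exists_mem_ne_zero_of_ne_bot hκ
  have cancel {x y : H} (h : δ • x = δ • y) : x = y :=
    Module.Flat.isSMulRegular_of_nonZeroDivisors (mem_nonZeroDivisors_of_ne_zero hδ0) h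
  obtain ⟨c, hc, hdvd⟩ := exists_mem_forall_dvd_of_dvd_mul hκ₁ hδ0
  obtain ⟨x, hx, u, hu, hδxu⟩ := Submodule.mem_sup.1 (Ideal.mem_comap.1 hδ)
  obtain ⟨x', hx', u', hu', hcxu⟩ := Submodule.mem_sup.1 (Ideal.mem_comap.1 hc)
  simp only [Submodule.mem_annihilator, smul_eq_mul] at hu hu'
  have hsmul : c • u = δ • u' := by
    rw [Algebra.smul_def, Algebra.smul_def, ← hδxu, ← hcxu]
    linear_combination hu x' hx' - hu' x hx
  obtain ⟨n, a, z, huz, ha⟩ := exists_eq_sum_smul_of_smul_eq_smul (A := A) (M := H) hsmul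
  choose b hb using fun j => hdvd _ (ha j)
  obtain ⟨e, he⟩ : ∃ e : H, u = δ • e := ⟨∑ j, b j • z j, by
    simp only [huz, Finset.smul_sum, hb, mul_smul]⟩
  have hδe : algebraMap A H δ * (1 - e) = x := by
    rw [Algebra.smul_def] at he
    linear_combination he - hδxu
  have heκ : ∀ y ∈ κ, e * y = 0 := fun y hy => cancel (by
    rw [smul_zero, ← hu y hy, he, smul_mul_assoc])
  refine ⟨e, cancel ?_, heκ, δ, hδ0, hδe ▸ hx⟩
  rw [Algebra.smul_def, Algebra.smul_def]
  linear_combination (-1 : H) * (hδe ▸ heκ x hx : e * (algebraMap A H δ * (1 - e)) = 0)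

lemma derivation_mem_sup_annihilator {k H : Type*} [CommRing k] [CommRing H] [Algebra k H]
    (D : Derivation k H H) {κ : Ideal H} (hκ : ∀ x ∈ κ, D x ∈ κ) {x : H}
    (hx : x ∈ κ ⊔ κ.annihilator) : D x ∈ κ ⊔ κ.annihilator := by
  obtain ⟨y, hy, u, hu, rfl⟩ := Submodule.mem_sup.1 hx
  rw [map_add]
  refine add_mem (Submodule.mem_sup_left (hκ y hy)) (Submodule.mem_sup_right ?_)
  simp only [Submodule.mem_annihilator, smul_eq_mul] at hu ⊢
  intro z hz
  have hleib := D.leibniz u z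
  rw [hu z hz, map_zero, smul_eq_mul, smul_eq_mul, hu _ (hκ z hz)] at hleib
  linear_combination -hleib

end DirectFactor

section StableIdeal

variable {k σ A : Type*} [Fintype σ] [Field k] [CharZero k] [CommRing A] [IsDomain A]
  [Algebra k A] [Algebra (MvPolynomial σ k) A] [IsScalarTower k (MvPolynomial σ k) A]
  [Algebra.FiniteType k A] (hinj : Function.Injective (algebraMap (MvPolynomial σ k) A))
  {J : Ideal (A ⊗[MvPolynomial σ k] MvPowerSeries σ k)}
  (hJ : ∀ θ : Derivation k A A, ∀ x ∈ J, seriesDerivation θ x ∈ J)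

include hinj hJ

lemma exists_tmul_pderiv_mem {δ : A} (hδ : δ ≠ 0) {f : MvPowerSeries σ k} (hf : δ ⊗ₜ f ∈ J)
    (i : σ) : ∃ δ' : A, δ' ≠ 0 ∧ δ' ⊗ₜ MvPowerSeries.pderiv k i f ∈ J := by
  classical
  obtain ⟨g, hg, θ, hθ⟩ := exists_derivation_algebraMap_eq_mul hinj (MvPolynomial.pderiv i)
  refine ⟨δ * δ * g, mul_ne_zero (mul_ne_zero hδ hδ) hg, ?_⟩
  have hsum : seriesDerivation θ (δ ⊗ₜ f) = θ δ ⊗ₜ f + (δ * g) ⊗ₜ MvPowerSeries.pderiv k i f := by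
    simp only [seriesDerivation_tmul, hθ]
    rw [Finset.sum_eq_single i (fun j _ hji => ?_) (by simp), MvPolynomial.pderiv_X_self, map_one,
      mul_one]
    rw [MvPolynomial.pderiv_X_of_ne hji, map_zero, mul_zero, mul_zero, zero_tmul]
  convert J.sub_mem (J.mul_mem_left (δ ⊗ₜ 1) (hJ θ _ hf)) (J.mul_mem_left (θ δ ⊗ₜ 1) hf) using 1
  simp only [hsum, mul_add, Algebra.TensorProduct.tmul_mul_tmul, one_mul]
  rw [mul_comm (θ δ), add_sub_cancel_left, mul_assoc]

/-- Differentiate until the series becomes a unit. -/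
lemma exists_tmul_one_mem {f : MvPowerSeries σ k} (hf : f ≠ 0) {δ : A} (hδ : δ ≠ 0)
    (hmem : δ ⊗ₜ f ∈ J) : ∃ δ' : A, δ' ≠ 0 ∧ δ' ⊗ₜ 1 ∈ J := by
  classical
  obtain ⟨α, hα⟩ := MvPowerSeries.ne_zero_iff_exists_coeff_ne_zero f |>.1 hf
  clear hf
  induction hd : α.degree generalizing f α δ with
  | zero =>
    rw [Finsupp.degree_eq_zero_iff] at hd
    have hunit : f * f⁻¹ = 1 := MvPowerSeries.mul_inv_cancel f (by simpa [hd] using hα)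
    have := J.mul_mem_right (1 ⊗ₜ f⁻¹) hmem
    rw [Algebra.TensorProduct.tmul_mul_tmul, hunit, mul_one] at this
    exact ⟨δ, hδ, this⟩
  | succ d ih =>
    obtain ⟨i, hi⟩ : ∃ i, α i ≠ 0 := by
      by_contra! h
      simp [show α = 0 from Finsupp.ext h] at hd
    obtain ⟨β, rfl⟩ : ∃ β, α = β + Finsupp.single i 1 :=
      ⟨α - Finsupp.single i 1, (tsub_add_cancel_of_le (by
        rw [Finsupp.single_le_iff]; omega)).symm⟩
    obtain ⟨δ', hδ', hmem'⟩ := exists_tmul_pderiv_mem hinj hJ hδ hmem i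
    refine ih hδ' hmem' β ?_ ?_
    · rw [MvPowerSeries.coeff_pderiv]
      exact mul_ne_zero hα (Nat.cast_add_one_ne_zero _)
    · rw [map_add, Finsupp.degree_single] at hd
      omega

end StableIdeal

/-! ### Surjectivity of evaluation onto formally approximable elements -/

section MittagLeffler

variable {P A : Type*} [CommRing P] [AddCommGroup A] [Module P A] [Module.Finite P A]

lemma exists_forall_le_sup_smul_top {I : Ideal P} [IsArtinianRing (P ⧸ I)]
    {L : ℕ → Submodule P A} (hL : Antitone L) :
    ∃ N, ∀ n, N ≤ n → L N ≤ L n ⊔ I • ⊤ := by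
  let q := Submodule.mkQ (I • ⊤ : Submodule P A)
  have : Module.Finite (P ⧸ I) (A ⧸ (I • ⊤ : Submodule P A)) :=
    .of_restrictScalars_finite P (P ⧸ I) _
  have : IsArtinian P (A ⧸ (I • ⊤ : Submodule P A)) :=
    isArtinian_of_surjective_algebraMap (R := P ⧸ I) Ideal.Quotient.mk_surjective
  obtain ⟨N, hN⟩ := IsArtinian.monotone_stabilizes
    ⟨fun n => OrderDual.toDual ((L n).map q), fun _ _ hab => Submodule.map_mono (hL hab)⟩
  refine ⟨N, fun n hn => ?_⟩
  have hmap : (L N).map q = (L n).map q := hN n hn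
  rw [sup_comm, ← Submodule.comap_map_mkQ, ← hmap]
  exact Submodule.le_comap_map _ _

/-- The approximations `y n` of a limit modulo `L n` can be replaced by approximations `α n` that
converge `m`-adically. -/
lemma exists_sub_mem_pow_smul_top {m : Ideal P} (hm : ∀ j, IsArtinianRing (P ⧸ m ^ j))
    {L : ℕ → Submodule P A} (hL : Antitone L) {y : ℕ → A}
    (hy : ∀ i j, i ≤ j → y j - y i ∈ L i) :
    ∃ α : ℕ → A, ∀ j, α (j + 1) - α j ∈ m ^ j • (⊤ : Submodule P A) ∧
      α j - y j ∈ L j ⊔ m ^ j • ⊤ := by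
  have improve (j : ℕ) (a : A) (ha : ∀ n, a - y n ∈ L n ⊔ m ^ j • ⊤) :
      ∃ a', (∀ n, a' - y n ∈ L n ⊔ m ^ (j + 1) • ⊤) ∧
        a' - a ∈ m ^ j • (⊤ : Submodule P A) := by
    have := hm (j + 1)
    obtain ⟨N, hN⟩ := exists_forall_le_sup_smul_top (I := m ^ (j + 1)) hL
    obtain ⟨l, hl, t, ht, hlt⟩ := Submodule.mem_sup.1 (ha N)
    refine ⟨y N + l, fun n => ?_, ?_⟩
    · have hmem : y N + l - y (max n N) ∈ L N := by
        convert sub_mem hl (hy N (max n N) (le_max_right n N)) using 1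
        abel
      convert add_mem (sup_le_sup_right (hL (le_max_left n N)) _ (hN _ (le_max_right n N) hmem))
        (Submodule.mem_sup_left (hy n (max n N) (le_max_left n N))) using 1
      abel
    · convert neg_mem ht using 1
      rw [eq_sub_of_add_eq hlt]
      abel
  choose! next hnext hnext_sub using improve
  let α : ℕ → A := fun n => Nat.rec 0 next n
  have hα (j : ℕ) : ∀ n, α j - y n ∈ L n ⊔ m ^ j • ⊤ := by
    induction j with
    | zero => simp
    | succ j ih => exact hnext j _ ih
  exact ⟨α, fun j => ⟨hnext_sub j _ (hα j), hα j j⟩⟩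

end MittagLeffler

section Convergence

lemma isArtinianRing_quotient_idealOfVars_pow (k σ : Type*) [Field k] [Finite σ] (j : ℕ) :
    IsArtinianRing (MvPolynomial σ k ⧸ MvPolynomial.idealOfVars σ k ^ j) := by
  have : Finite {x : σ →₀ ℕ // x.degree < j} := (Finsupp.finite_of_degree_lt j).to_subtype
  let coeffs : MvPolynomial σ k →ₗ[k] {x : σ →₀ ℕ // x.degree < j} → k :=
    LinearMap.pi fun x => MvPolynomial.lcoeff k x.1
  have hker : LinearMap.ker coeffs = (MvPolynomial.idealOfVars σ k ^ j).restrictScalars k := by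
    ext p
    simp [coeffs, funext_iff, MvPolynomial.mem_pow_idealOfVars_iff']
  let quotientCoeffs : (MvPolynomial σ k ⧸ MvPolynomial.idealOfVars σ k ^ j) →ₗ[k]
      {x : σ →₀ ℕ // x.degree < j} → k :=
    ((MvPolynomial.idealOfVars σ k ^ j).restrictScalars k).liftQ coeffs hker.ge
  have : Module.Finite k (MvPolynomial σ k ⧸ MvPolynomial.idealOfVars σ k ^ j) :=
    .of_injective quotientCoeffs
      (LinearMap.ker_eq_bot.1 (Submodule.ker_liftQ_eq_bot' _ _ hker.symm))
  exact isArtinian_of_tower k inferInstance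

lemma exists_truncTotal_sub_sum_mem {k σ : Type*} [CommRing k] [Finite σ]
    {p : ℕ → MvPolynomial σ k} (hp : ∀ j, p j ∈ MvPolynomial.idealOfVars σ k ^ j) :
    ∃ f : MvPowerSeries σ k, ∀ n,
      f.truncTotal n - ∑ j ∈ Finset.range n, p j ∈ MvPolynomial.idealOfVars σ k ^ n := by
  let f : MvPowerSeries σ k := fun x => ∑ j ∈ Finset.range (x.degree + 1), (p j).coeff x
  refine ⟨f, fun n => (MvPolynomial.mem_pow_idealOfVars_iff' n _).2 fun x hx => ?_⟩
  have hf : (f.truncTotal n).coeff x = ∑ j ∈ Finset.range (x.degree + 1), (p j).coeff x :=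
    MvPowerSeries.coeff_truncTotal _ hx
  rw [MvPolynomial.coeff_sub, hf, MvPolynomial.coeff_sum, sub_eq_zero]
  refine Finset.sum_subset (Finset.range_subset_range.2 hx) fun j _ hj => ?_
  exact (MvPolynomial.mem_pow_idealOfVars_iff' j _).1 (hp j) x (by rw [Finset.mem_range] at hj; lia)

lemma exists_forall_seriesEval_eq_mk_algebraMap {k σ A S : Type*} [CommRing k] [Finite σ]
    [CommRing A] [CommRing S] [Algebra (MvPolynomial σ k) A] [Algebra (MvPolynomial σ k) S]
    [Algebra A S] [IsScalarTower (MvPolynomial σ k) A S] [Module.Finite (MvPolynomial σ k) A]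
    {Q : Ideal S} (hQ : ∀ i, algebraMap (MvPolynomial σ k) S (MvPolynomial.X i) ∈ Q) {α : ℕ → A}
    (hα : ∀ j, α (j + 1) - α j ∈
      MvPolynomial.idealOfVars σ k ^ j • (⊤ : Submodule (MvPolynomial σ k) A)) :
    ∃ β : A ⊗[MvPolynomial σ k] MvPowerSeries σ k,
      ∀ n, seriesEval hQ n β = Ideal.Quotient.mk (Q ^ n) (algebraMap A S (α n)) := by
  obtain ⟨r, e, he⟩ := Module.Finite.exists_fin (R := MvPolynomial σ k) (M := A)
  have hdiff (j : ℕ) : ∃ p : Fin r → MvPolynomial σ k,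
      (∀ i, p i ∈ MvPolynomial.idealOfVars σ k ^ j) ∧ α (j + 1) - α j = ∑ i, p i • e i := by
    have hj := hα j
    rw [← he, Submodule.mem_ideal_smul_span_iff_exists_sum] at hj
    obtain ⟨a, ha, hsum⟩ := hj
    exact ⟨a, ha, by rw [← hsum, Finsupp.sum_fintype _ _ (by simp)]⟩
  choose p hp hpe using hdiff
  choose f hf using fun i => exists_truncTotal_sub_sum_mem fun j => hp j i
  have hαn (n : ℕ) : α n = α 0 + ∑ i, (∑ j ∈ Finset.range n, p j i) • e i := by
    simp only [Finset.sum_smul]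
    rw [Finset.sum_comm, ← Finset.sum_congr rfl fun j _ => hpe j, Finset.sum_range_sub]
    abel
  refine ⟨algebraMap A _ (α 0) + ∑ i, e i ⊗ₜ f i, fun n => ?_⟩
  rw [hαn n, map_add, AlgHom.commutes, map_sum, map_add, map_add, map_sum, map_sum]
  congr 1
  refine Finset.sum_congr rfl fun i _ => ?_
  rw [seriesEval_tmul, Ideal.Quotient.eq, Algebra.smul_def, map_mul, mul_comm (algebraMap A S _),
    ← IsScalarTower.algebraMap_apply (MvPolynomial σ k) A S, ← sub_mul, ← map_sub]
  exact Ideal.mul_mem_right _ _ (idealOfVars_pow_le_comap hQ n (hf i n))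

lemma exists_forall_seriesEval_eq_mk {k σ A S : Type*} [Field k] [Finite σ] [CommRing A]
    [CommRing S] [Algebra (MvPolynomial σ k) A] [Algebra (MvPolynomial σ k) S] [Algebra A S]
    [IsScalarTower (MvPolynomial σ k) A S] [Module.Finite (MvPolynomial σ k) A] {Q : Ideal S}
    (hQ : ∀ i, algebraMap (MvPolynomial σ k) S (MvPolynomial.X i) ∈ Q) {b : S}
    (hb : ∀ n, ∃ x : A, b - algebraMap A S x ∈ Q ^ n) :
    ∃ β : A ⊗[MvPolynomial σ k] MvPowerSeries σ k,
      ∀ n, seriesEval hQ n β = Ideal.Quotient.mk (Q ^ n) b := by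
  let L (n : ℕ) : Submodule (MvPolynomial σ k) A :=
    ((Q ^ n).comap (algebraMap A S)).restrictScalars (MvPolynomial σ k)
  have hL : Antitone L := fun _ _ hij _ hx => Ideal.pow_le_pow_right hij hx
  have hmem {n : ℕ} {x : A} : x ∈ L n ↔ algebraMap A S x ∈ Q ^ n := Iff.rfl
  have hLm (n : ℕ) : MvPolynomial.idealOfVars σ k ^ n • ⊤ ≤ L n := by
    refine Submodule.smul_le.2 fun r hr a _ => hmem.2 ?_
    rw [Algebra.smul_def, map_mul, ← IsScalarTower.algebraMap_apply (MvPolynomial σ k) A S]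
    exact Ideal.mul_mem_right _ _ (idealOfVars_pow_le_comap hQ n hr)
  choose y hy using hb
  obtain ⟨α, hα⟩ := exists_sub_mem_pow_smul_top (isArtinianRing_quotient_idealOfVars_pow k σ) hL
    (y := y) fun i j hij => hmem.2 <| by
      convert sub_mem (hy i) (Ideal.pow_le_pow_right hij (hy j)) using 1
      rw [map_sub]
      abel
  obtain ⟨β, hβ⟩ := exists_forall_seriesEval_eq_mk_algebraMap hQ fun j => (hα j).1
  refine ⟨β, fun n => (hβ n).trans ((Ideal.Quotient.eq).2 ?_)⟩
  have hn := hmem.1 (sup_le le_rfl (hLm n) (hα n).2)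
  convert sub_mem hn (hy n) using 1
  rw [map_sub]
  abel

end Convergence

/-! ### Regularity at the image of a closed point -/

section Branch

lemma flat_mvPowerSeries (k σ : Type*) [CommRing k] [IsNoetherianRing k] [Finite σ] :
    Module.Flat (MvPolynomial σ k) (MvPowerSeries σ k) :=
  .of_linearEquiv (MvPowerSeries.toAdicCompletionAlgEquiv σ k).toLinearEquiv

lemma exists_finite_algHom_apply_X_eq_zero {k A : Type*} [Field k] [CommRing A] [Nontrivial A]
    [Algebra k A] [Algebra.FiniteType k A] (χ : A →ₐ[k] k) :
    ∃ (d : ℕ) (g : MvPolynomial (Fin d) k →ₐ[k] A), Function.Injective g ∧ g.Finite ∧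
      ∀ i, χ (g (MvPolynomial.X i)) = 0 := by
  obtain ⟨d, g, hg, hfin⟩ := exists_finite_inj_algHom_of_fg k A
  let c (i : Fin d) : k := χ (g (MvPolynomial.X i))
  let t : MvPolynomial (Fin d) k ≃ₐ[k] MvPolynomial (Fin d) k := .ofAlgHom
    (MvPolynomial.aeval fun i => MvPolynomial.X i - MvPolynomial.C (c i))
    (MvPolynomial.aeval fun i => MvPolynomial.X i + MvPolynomial.C (c i))
    (by ext i : 1; simp [← MvPolynomial.algebraMap_eq])
    (by ext i : 1; simp [← MvPolynomial.algebraMap_eq])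
  have htX (i : Fin d) : t (MvPolynomial.X i) = MvPolynomial.X i - algebraMap k _ (c i) := by
    simp [t, MvPolynomial.algebraMap_eq]
  refine ⟨d, g.comp t, hg.comp t.injective, hfin.comp (.of_surjective _ t.surjective), fun i => ?_⟩
  change χ (g (t _)) = 0
  rw [htX, map_sub, map_sub, AlgHom.commutes, AlgHom.commutes]
  exact sub_self (c i)

variable {k σ A S : Type*} [Finite σ] [CommRing A] [IsDomain A] [CommRing S] [IsDomain S]

/-- The branch of `Spec A` seen from the point `Q` of `Spec S` is cut out in the completion
`A ⊗ k⟦x⟧` by an idempotent. This replaces the analytic irreducibility of normal varieties. -/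
lemma exists_idempotent_seriesKernel [Field k] [CharZero k] [Algebra k A] [Algebra k S]
    [Algebra.FiniteType k A] [Algebra.FiniteType k S] [IsIntegrallyClosed A]
    [Algebra (MvPolynomial σ k) A] [Algebra (MvPolynomial σ k) S] [Algebra A S]
    [IsScalarTower (MvPolynomial σ k) A S] [IsScalarTower k (MvPolynomial σ k) A]
    [IsScalarTower k A S] [Module.Finite (MvPolynomial σ k) A]
    (hP : Function.Injective (algebraMap (MvPolynomial σ k) A))
    (hinj : Function.Injective (algebraMap A S)) {Q : Ideal S}
    (hQ : ∀ i, algebraMap (MvPolynomial σ k) S (MvPolynomial.X i) ∈ Q) :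
    ∃ e : A ⊗[MvPolynomial σ k] MvPowerSeries σ k, e * e = e ∧
      (∀ x ∈ seriesKernel hQ, e * x = 0) ∧
      ∃ δ : A, δ ≠ 0 ∧ algebraMap A _ δ * (1 - e) ∈ seriesKernel hQ := by
  let := Fintype.ofFinite σ
  have : IsNoetherianRing A := Algebra.FiniteType.isNoetherianRing k A
  have : IsNoetherianRing S := Algebra.FiniteType.isNoetherianRing k S
  have : CharZero A := charZero_of_injective_algebraMap (algebraMap k A).injective
  have : IsDomain (MvPowerSeries σ k) := NoZeroDivisors.to_isDomain _
  have := flat_mvPowerSeries k σ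
  have : FaithfulSMul (MvPolynomial σ k) A := (faithfulSMul_iff_algebraMap_injective _ _).2 hP
  set J := seriesKernel (A := A) hQ ⊔ (seriesKernel hQ).annihilator
  have hJ (θ : Derivation k A A) : ∀ x ∈ J, seriesDerivation θ x ∈ J := fun x hx =>
    derivation_mem_sup_annihilator _
      (fun y hy => seriesDerivation_mem_seriesKernel hQ hinj θ hy) hx
  obtain ⟨c, hc, hcJ⟩ := exists_tmul_mem_sup_annihilator (A := A) (seriesKernel hQ)
  obtain ⟨δ, hδ, hδJ⟩ := exists_tmul_one_mem hP hJ hc one_ne_zero hcJ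
  have hJ0 : J.comap (algebraMap A _) ≠ ⊥ := fun h =>
    hδ ((Submodule.mem_bot A).1 (h ▸ Ideal.mem_comap.2 hδJ))
  refine exists_idempotent_of_sup_annihilator _ hJ0 fun p =>
    not_le_of_forall_derivation_mem (k := k) hJ0 fun θ x hx => ?_
  simpa [seriesDerivation_tmul] using hJ θ _ (Ideal.mem_comap.1 hx)

section

variable {k σ A S : Type*} [CommRing k] [Finite σ] [CommRing A] [CommRing S]
  [Algebra (MvPolynomial σ k) A] [Algebra (MvPolynomial σ k) S] [Algebra A S]
  [IsScalarTower (MvPolynomial σ k) A S] {Q : Ideal S}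
  (hQ : ∀ i, algebraMap (MvPolynomial σ k) S (MvPolynomial.X i) ∈ Q)

lemma mem_seriesKernel_of_seriesEval_one_eq_zero {e : A ⊗[MvPolynomial σ k] MvPowerSeries σ k}
    (he : IsIdempotentElem e) (he₁ : seriesEval hQ 1 e = 0) : e ∈ seriesKernel hQ := by
  refine (mem_seriesKernel hQ).2 fun n => ?_
  rcases n.eq_zero_or_pos with rfl | hn
  · have : Subsingleton (S ⧸ Q ^ 0) := Ideal.Quotient.subsingleton_iff.2 (by simp)
    exact Subsingleton.elim _ _
  obtain ⟨s, hs⟩ := Ideal.Quotient.mk_surjective (seriesEval hQ n e)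
  have hsQ := seriesEval_eq_mk_of_le hQ hn hs.symm
  rw [he₁, eq_comm, Ideal.Quotient.eq_zero_iff_mem, pow_one] at hsQ
  rw [← (he.map (seriesEval hQ n)).pow_eq hn.ne', ← hs, ← map_pow,
    Ideal.Quotient.eq_zero_iff_mem]
  exact Ideal.pow_mem_pow hsQ n

lemma eq_zero_of_algebraMap_mem_seriesKernel [IsDomain S] [IsNoetherianRing S] (hQ₁ : Q ≠ ⊤)
    (hinj : Function.Injective (algebraMap A S)) {δ : A}
    (hδ : algebraMap A (A ⊗[MvPolynomial σ k] MvPowerSeries σ k) δ ∈ seriesKernel hQ) : δ = 0 := by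
  have hmem : algebraMap A S δ ∈ (⨅ n, Q ^ n : Ideal S) := Submodule.mem_iInf _ |>.2 fun n => by
    rw [← Ideal.Quotient.eq_zero_iff_mem]
    exact ((seriesEval hQ n).commutes δ).symm.trans ((mem_seriesKernel hQ).1 hδ n)
  rwa [Ideal.iInf_pow_eq_bot_of_isDomain Q hQ₁, Ideal.mem_bot, map_eq_zero_iff _ hinj] at hmem

end

/-- With `e` the idempotent of the branch and `β` an element of the completion with value `b`, the
relation `a e = h (e β)` and flatness yield `h ∣ s a` for elements `s` of `A` generating an ideal of
the completion that contains `e`; as `e` does not vanish at the point, some `s` does not. -/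
lemma exists_algebraMap_notMem_mul_eq_mul [Field k] [CharZero k] [Algebra k A] [Algebra k S]
    [Algebra.FiniteType k A] [Algebra.FiniteType k S] [IsIntegrallyClosed A]
    [Algebra (MvPolynomial σ k) A] [Algebra (MvPolynomial σ k) S] [Algebra A S]
    [IsScalarTower (MvPolynomial σ k) A S] [IsScalarTower k (MvPolynomial σ k) A]
    [IsScalarTower k A S] [Module.Finite (MvPolynomial σ k) A]
    (hP : Function.Injective (algebraMap (MvPolynomial σ k) A))
    (hinj : Function.Injective (algebraMap A S)) {Q : Ideal S} (hQ₁ : Q ≠ ⊤)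
    (hQ : ∀ i, algebraMap (MvPolynomial σ k) S (MvPolynomial.X i) ∈ Q) {b : S} {a h : A}
    (hba : algebraMap A S h * b = algebraMap A S a)
    (hb : ∀ n, ∃ x : A, b - algebraMap A S x ∈ Q ^ n) :
    ∃ s, algebraMap A S s ∉ Q ∧ ∃ a', s * a = h * a' := by
  have : IsNoetherianRing S := Algebra.FiniteType.isNoetherianRing k S
  have := flat_mvPowerSeries k σ
  obtain ⟨e, hee, heκ, δ, hδ, hδe⟩ := exists_idempotent_seriesKernel hP hinj hQ
  have hsmul (x : A) (y : A ⊗[MvPolynomial σ k] MvPowerSeries σ k) :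
      x • y = algebraMap A _ x * y := Algebra.smul_def x y
  have hcomm (n : ℕ) (x : A) : seriesEval hQ n (algebraMap A _ x) =
      Ideal.Quotient.mk (Q ^ n) (algebraMap A S x) := (seriesEval hQ n).commutes x
  have he₁ : seriesEval hQ 1 e ≠ 0 := fun h₁ => by
    have he₀ : e = 0 := hee ▸ heκ e (mem_seriesKernel_of_seriesEval_one_eq_zero hQ hee h₁)
    rw [he₀, sub_zero, mul_one] at hδe
    exact hδ (eq_zero_of_algebraMap_mem_seriesKernel hQ hQ₁ hinj hδe)
  obtain ⟨β, hβ⟩ := exists_forall_seriesEval_eq_mk hQ hb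
  have hrel : a • e = h • (e * β) := by
    have hκ := heκ (algebraMap A _ a - algebraMap A _ h * β) <| (mem_seriesKernel hQ).2 fun n => by
      rw [map_sub, map_mul, hcomm, hcomm, hβ, ← map_mul, hba, sub_self]
    rw [hsmul, hsmul]
    linear_combination hκ
  obtain ⟨r, s, z, hes, hdvd⟩ := exists_eq_sum_smul_of_smul_eq_smul (A := A)
    (M := A ⊗[MvPolynomial σ k] MvPowerSeries σ k) hrel
  obtain ⟨j, hj⟩ : ∃ j, algebraMap A S (s j) ∉ Q := by
    by_contra! hall
    refine he₁ ?_
    rw [hes, map_sum]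
    refine Finset.sum_eq_zero fun j _ => ?_
    rw [hsmul, map_mul, hcomm,
      Ideal.Quotient.eq_zero_iff_mem.2 (by simpa using hall j), zero_mul]
  exact ⟨s j, hj, by simpa only [dvd_def, mul_comm (s j)] using hdvd j⟩

lemma exists_apply_ne_zero_mul_eq_mul {k A S : Type*} [Field k] [CharZero k] [CommRing A]
    [IsDomain A] [CommRing S] [IsDomain S] [Algebra k A] [Algebra k S] [Algebra.FiniteType k A]
    [Algebra.FiniteType k S] [IsIntegrallyClosed A] {ψ : A →ₐ[k] S} (hψ : Function.Injective ψ)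
    (χ : S →ₐ[k] k) {b : S} {a h : A} (hba : ψ h * b = ψ a)
    (hb : ∀ n, ∃ x, b - ψ x ∈ RingHom.ker χ ^ n) :
    ∃ s, χ (ψ s) ≠ 0 ∧ ∃ a', s * a = h * a' := by
  obtain ⟨d, g, hg, hfin, hgχ⟩ := exists_finite_algHom_apply_X_eq_zero (χ.comp ψ)
  let : Algebra (MvPolynomial (Fin d) k) A := g.toRingHom.toAlgebra
  let : Algebra A S := ψ.toRingHom.toAlgebra
  let : Algebra (MvPolynomial (Fin d) k) S := (ψ.comp g).toRingHom.toAlgebra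
  have : IsScalarTower (MvPolynomial (Fin d) k) A S := .of_algebraMap_eq fun _ => rfl
  have : IsScalarTower k (MvPolynomial (Fin d) k) A := .of_algebraMap_eq fun r =>
    (g.commutes r).symm
  have : IsScalarTower k A S := .of_algebraMap_eq fun r => (ψ.commutes r).symm
  have : Module.Finite (MvPolynomial (Fin d) k) A := hfin
  exact exists_algebraMap_notMem_mul_eq_mul hg hψ (RingHom.ker_ne_top χ.toRingHom) hgχ hba hb

end Branch

/-! ### The exceptional divisor -/

lemma heightOf_eq_height {R : Type*} [CommRing R] (p : Ideal R) [hp : p.IsPrime] :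
    p.heightOf = p.height := by
  refine .trans ?_ (PrimeSpectrum.height_eq_orderHeight ⟨p, hp⟩).symm
  exact le_antisymm (iInf₂_le (⟨p, hp⟩ : PrimeSpectrum R) (le_refl p))
    (le_iInf₂ fun q hq => Order.height_mono (show (⟨p, hp⟩ : PrimeSpectrum R) ≤ q from hq))

section Semiconjugate

variable {k R S : Type*} [Field k] [IsAlgClosed k] [CharZero k] [CommRing R] [IsDomain R]
  [CommRing S] [IsDomain S] [Algebra k R] [Algebra k S] [Algebra.FiniteType k R]
  [Algebra.FiniteType k S] [IsIntegrallyClosed R] {f : R →ₐ[k] S} {e : S ≃ₐ[k] S}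
  {g : R →ₐ[k] R}

lemma height_comap_eq_of_map_ne_top (hf : Function.Injective f) (hg : Function.Injective g)
    (hcomm : f.comp g = (e : S →ₐ[k] S).comp f) {p : Ideal R} [p.IsPrime] (hp : p.map f ≠ ⊤) :
    (p.comap g).height = p.height := by
  obtain ⟨Q, hQ, hle⟩ := Ideal.exists_le_maximal _ hp
  obtain ⟨χ, rfl⟩ := exists_algHom_ker_eq (k := k) Q
  refine height_comap_eq_of_forall_exists (g := (g : R →+* R)) hg fun b => ?_
  obtain ⟨h, a, hh, hb⟩ := exists_map_mul_eq_map hf hg hcomm b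
  obtain ⟨s, hs, a', ha'⟩ := exists_apply_ne_zero_mul_eq_mul (ψ := f.comp g) (hf.comp hg) χ
    (b := f b) (a := a) (h := h) (by simp [← hb]) fun n => exists_sub_mem_ker_pow hcomm χ n b
  refine ⟨s, fun hsp => hs (hle (Ideal.mem_map_of_mem f hsp)), a', ?_⟩
  have hgh : g h ≠ 0 := (map_ne_zero_iff g hg).2 hh
  have hga' := congrArg g ha'
  rw [map_mul, map_mul, ← hb] at hga'
  exact mul_left_cancel₀ hgh (by simpa [mul_left_comm] using hga')

end Semiconjugate

theorem exists_exceptional_divisor_avoiding_image_general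
    {k R S : Type*} [Field k] [IsAlgClosed k] [CharZero k]
    [CommRing R] [IsDomain R] [CommRing S] [IsDomain S]
    [Algebra k R] [Algebra k S] [Algebra.FiniteType k R] [Algebra.FiniteType k S]
    [IsIntegrallyClosed R]
    (ι : R →ₐ[k] S) (hι : Function.Injective ι)
    (F : S →ₐ[k] S) (hF : Function.Bijective F)
    (G : R →ₐ[k] R) (hcomm : ∀ r, ι (G r) = F (ι r))
    (hG : ¬ Function.Bijective G) :
    ∃ p : Ideal R, p.IsPrime ∧ p.heightOf = 1 ∧
      2 ≤ (Ideal.comap G p).heightOf ∧ Ideal.map ι p = ⊤ := by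
  let e : S ≃ₐ[k] S := .ofBijective F hF
  have hcomp : ι.comp G = (e : S →ₐ[k] S).comp ι := AlgHom.ext hcomm
  have hGinj : Function.Injective G := fun x y hxy =>
    hι (hF.1 (by rw [← hcomm, ← hcomm, hxy]))
  have : IsNoetherianRing R := Algebra.FiniteType.isNoetherianRing k R
  have hfp : (ι : R →+* S).FinitePresentation := by
    refine RingHom.FinitePresentation.of_finiteType.1 (.of_comp_finiteType (f := algebraMap k R) ?_)
    rw [ι.comp_algebraMap]
    exact RingHom.finiteType_algebraMap.2 inferInstance
  obtain ⟨p, hp, hp₁, hp₂⟩ := exists_height_eq_one_two_le_height_comap (f := (ι : R →+* S))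
    (e := (e : S ≃+* S)) (g := (G : R →+* R)) hι hfp
    ⟨hGinj, exists_map_mul_eq_map hι hGinj hcomp⟩ (RingHom.ext hcomm)
    fun hsurj => hG ⟨hGinj, hsurj⟩
  refine ⟨p, hp, (heightOf_eq_height p).trans hp₁, (heightOf_eq_height (p.comap G)).symm ▸ hp₂, ?_⟩
  by_contra hmap
  have hheight := height_comap_eq_of_map_ne_top hι hGinj hcomp hmap
  exact absurd (hp₂.trans_eq (hheight.trans hp₁)) (by decide)

/-- Let `R`, `S` be affine domains over `ℂ`, `ι : R → S` an injective `ℂ`-algebra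
homomorphism, and `R` integrally closed in its fraction field.  Let `F : S → S` be a
bijective `ℂ`-algebra homomorphism and `G : R → R` a `ℂ`-algebra homomorphism with
`ι ∘ G = F ∘ ι`.  If `G` is not bijective, then there is a height-one prime `p` of `R`
whose preimage `G⁻¹(p)` has height at least 2 and whose image `ι(p)` generates the unit
ideal of `S`. -/
theorem exists_exceptional_divisor_avoiding_image
    {R S : Type*} [CommRing R] [IsDomain R] [CommRing S] [IsDomain S]
    [Algebra ℂ R] [Algebra ℂ S] [Algebra.FiniteType ℂ R] [Algebra.FiniteType ℂ S]
    [IsIntegrallyClosed R]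
    (ι : R →ₐ[ℂ] S) (hι : Function.Injective ι)
    (F : S →ₐ[ℂ] S) (hF : Function.Bijective F)
    (G : R →ₐ[ℂ] R) (hcomm : ∀ r, ι (G r) = F (ι r))
    (hG : ¬ Function.Bijective G) :
    ∃ p : Ideal R, p.IsPrime ∧ p.heightOf = 1 ∧
      2 ≤ (Ideal.comap G p).heightOf ∧ Ideal.map ι p = ⊤ :=
  exists_exceptional_divisor_avoiding_image_general ι hι F hF G hcomm hG
end

section
/- Let X and Y be integral affine schemes of finite type over ℂ whose underlying topological spaces have the same (finite) Krull dimension. Let ρ : X → Y be a dominant morphism over ℂ, and let f : X → X and g : Y → Y be morphisms over ℂ such that ρ ∘ f = g ∘ ρ. If g is an isomorphism, then f is an isomorphism. -/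
open AlgebraicGeometry CategoryTheory

/-
Let `B → A` be the map of coordinate rings given by `ρ`, `φ : A → A` the one given by `f` and
`σ : B ≃ B` the one given by `g`. Since `ρ` is dominant and the dimensions agree, `A` is algebraic
over `B`. Hence every nonzero ideal of `A` meets `B`, so `φ` is injective, and `φ` extends to a
`σ`-semilinear map `Φ` of `K = Frac A`, which is bijective because `K` is finite over `Frac B`.

It remains to see that `φ` hits each of finitely many generators of `A`. Suppose they lie in a
noetherian `B`-submodule `F` of `K` with `Φ⁻¹ F = F`, and let `M` be the image of `A` in `K`. The
submodules `Φ⁻ⁿ (M ∩ F)` form an ascending chain in `F`; it is stationary, and cancelling the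
surjection `Φⁿ` gives `Φ⁻¹ (M ∩ F) = M ∩ F`. So the `Φ`-preimage of each generator lies in `A`.

Such an `F` is the colon submodule of a power of `L` into the integral closure of `B` in `K`, where
`L ≠ 0` is the ideal of the locus in `Spec B` over which `A` fails to be integral. It is noetherian
because the integral closure is finite over `B`, and stable under `Φ⁻¹` because `σ⁻¹ L ⊆ L`, with
equality by the ascending chain condition in `B`.
-/

section StationaryChain

lemma isFixedPt_of_le_map {α : Type*} [PartialOrder α] {f : α → α} (hf : Monotone f)
    (hinj : Function.Injective f) {x y : α} [WellFoundedGT (Set.Iic y)] (hxy : x ≤ y)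
    (hx : x ≤ f x) (hy : f y ≤ y) : Function.IsFixedPt f x := by
  have hle (n : ℕ) : f^[n] x ≤ y :=
    (hf.iterate n hxy).trans (hf.antitone_iterate_of_map_le hy n.zero_le)
  obtain ⟨n, hn⟩ := WellFoundedGT.monotone_chain_condition
    (⟨fun n => ⟨f^[n] x, hle n⟩, hf.monotone_iterate_of_le_map hx⟩ : ℕ →o Set.Iic y)
  have hstat : f^[n] x = f^[n] (f x) := congrArg Subtype.val (hn (n + 1) n.le_succ)
  exact (hinj.iterate n hstat).symm

lemma comap_inf_eq_of_isNoetherian {R V : Type*} [Ring R] [AddCommGroup V] [Module R V]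
    {τ : R →+* R} [RingHomSurjective τ] {Φ : V →ₛₗ[τ] V} (hΦ : Function.Surjective Φ)
    {M F : Submodule R V} [IsNoetherian R F] (hM : M ≤ M.comap Φ) (hF : F.comap Φ = F) :
    (M ⊓ F).comap Φ = M ⊓ F := by
  have : WellFoundedGT (Set.Iic F) := F.mapIic.symm.toOrderEmbedding.wellFoundedGT
  refine isFixedPt_of_le_map (fun _ _ => Submodule.comap_mono)
    (Submodule.comap_injective_of_surjective hΦ) inf_le_right ?_ hF.le
  rw [Submodule.comap_inf, hF]
  exact inf_le_inf_right F hM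

lemma map_ringEquiv_eq_of_comap_le {R : Type*} [CommRing R] [IsNoetherianRing R] (σ : R ≃+* R)
    {I : Ideal R} (hI : I.comap (σ : R →+* R) ≤ I) : I.map (σ : R →+* R) = I := by
  have hinj : Function.Injective (Ideal.map (σ : R →+* R)) := fun I J h => by
    rw [← Ideal.comap_map_of_bijective _ σ.bijective (I := I),
      ← Ideal.comap_map_of_bijective _ σ.bijective (I := J)]
    exact congrArg _ h
  refine isFixedPt_of_le_map (fun _ _ => Ideal.map_mono) hinj le_top ?_ le_top
  exact (Ideal.map_comap_of_surjective (σ : R →+* R) σ.surjective I).ge.trans (Ideal.map_mono hI)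

end StationaryChain

section Dimension

lemma ringKrullDim_eq_of_isIntegral (R S : Type*) [CommRing R] [CommRing S] [Algebra R S]
    [Algebra.IsIntegral R S] [FaithfulSMul R S] : ringKrullDim R = ringKrullDim S := by
  apply le_antisymm
  · refine iSup_le fun l => ?_
    obtain ⟨Q, -, hQ, hQl⟩ := Ideal.exists_ideal_over_prime_of_isIntegral
      (S := S) l.head.asIdeal ⊥ <| by
        rw [Ideal.comap_bot_of_injective _ (FaithfulSMul.algebraMap_injective R S)]
        exact bot_le
    have : Q.LiesOver l.head.asIdeal := ⟨hQl.symm⟩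
    obtain ⟨L, hL, -⟩ := Ideal.exists_ltSeries_of_hasGoingUp l Q
    exact hL ▸ Order.LTSeries.length_le_krullDim L
  · exact Order.krullDim_le_of_strictMono (PrimeSpectrum.comap (algebraMap R S))
      fun _ _ => Ideal.IsIntegral.comap_lt_comap

lemma ringKrullDim_eq_toENat_trdeg (k R : Type*) [Field k] [CommRing R] [IsDomain R] [Algebra k R]
    [Algebra.FiniteType k R] : ringKrullDim R = (Algebra.trdeg k R).toENat := by
  obtain ⟨n, g, hinj, hint⟩ := exists_integral_inj_algHom_of_fg k R
  let P := MvPolynomial (Fin n) k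
  let _ : Algebra P R := g.toRingHom.toAlgebra
  have : IsScalarTower k P R := .of_algebraMap_eq fun x => (g.commutes x).symm
  have : Algebra.IsIntegral P R := ⟨hint⟩
  have : FaithfulSMul P R := (faithfulSMul_iff_algebraMap_injective _ _).mpr hinj
  have htr : (Algebra.trdeg k R).toENat = n := by
    have h := congrArg Cardinal.toENat (lift_trdeg_add_eq k P R)
    simpa [P, trdeg_eq_zero (R := P) (A := R)] using h.symm
  rw [htr, ← ringKrullDim_eq_of_isIntegral P R]
  simp [P]

lemma isAlgebraic_of_ringKrullDim_le (k : Type*) {B A : Type*} [Field k] [CommRing A] [CommRing B]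
    [IsDomain A] [IsDomain B] [Algebra k A] [Algebra k B] [Algebra B A] [IsScalarTower k B A]
    [FaithfulSMul B A] [Algebra.FiniteType k A] [Algebra.FiniteType k B]
    (h : ringKrullDim A ≤ ringKrullDim B) : Algebra.IsAlgebraic B A := by
  rw [ringKrullDim_eq_toENat_trdeg k A, ringKrullDim_eq_toENat_trdeg k B, WithBot.coe_le_coe] at h
  have hadd : (Algebra.trdeg k B).toENat + (Algebra.trdeg B A).toENat =
      (Algebra.trdeg k A).toENat := by
    simpa using congrArg Cardinal.toENat (lift_trdeg_add_eq k B A)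
  have hfin : (Algebra.trdeg k B).toENat ≠ ⊤ :=
    Cardinal.toENat_ne_top.mpr trdeg_lt_aleph0_of_finiteType
  have hzero : (Algebra.trdeg B A).toENat ≤ 0 := by
    rwa [← hadd, ← add_zero (Algebra.trdeg k B).toENat, add_assoc, zero_add,
      ENat.add_le_add_iff_left hfin] at h
  rw [← trdeg_eq_zero_iff, ← Cardinal.toENat_eq_zero]
  exact nonpos_iff_eq_zero.mp hzero

end Dimension

section IntegralClosure

lemma finite_integralClosure_tower_top (R S L : Type*) [CommRing R] [CommRing S] [CommRing L]
    [Algebra R S] [Algebra R L] [Algebra S L] [IsScalarTower R S L] [Algebra.IsIntegral R S]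
    [Module.Finite R (integralClosure R L)] : Module.Finite S (integralClosure S L) := by
  let e : integralClosure R L →ₗ[R] integralClosure S L :=
    { toFun := fun x => ⟨x, x.2.tower_top⟩
      map_add' := fun _ _ => rfl
      map_smul' := fun _ _ => rfl }
  have he : Function.Surjective e := fun x => ⟨⟨x, isIntegral_trans (A := S) _ x.2⟩, rfl⟩
  have : Module.Finite R (integralClosure S L) := .of_surjective e he
  exact .of_restrictScalars_finite R S _

lemma finite_integralClosure_of_charZero (R L : Type*) [CommRing R] [IsDomain R]
    [IsIntegrallyClosed R] [IsNoetherianRing R] [CharZero R] [Field L] [Algebra R L]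
    [FaithfulSMul R L] [Algebra.IsAlgebraic R L] [Algebra.EssFiniteType R L] :
    Module.Finite R (integralClosure R L) := by
  let F := FractionRing R
  let _ : Algebra F L := FractionRing.liftAlgebra R L
  have : Algebra.IsAlgebraic F L := (IsFractionRing.comap_isAlgebraic_iff (A := R)).mp ‹_›
  have : Algebra.EssFiniteType F L := .of_comp R F L
  have : FiniteDimensional F L := Algebra.finite_of_essFiniteType_of_isAlgebraic
  have : CharZero F := charZero_of_injective_algebraMap (IsFractionRing.injective R F)
  exact IsIntegralClosure.finite R F L _

lemma finite_integralClosure_of_finiteType (k B L : Type*) [Field k] [CharZero k] [CommRing B]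
    [Algebra k B] [Algebra.FiniteType k B] [Field L] [Algebra B L] [FaithfulSMul B L]
    [Algebra.IsAlgebraic B L] [Algebra.EssFiniteType B L] :
    Module.Finite B (integralClosure B L) := by
  have : IsDomain B := (FaithfulSMul.algebraMap_injective B L).isDomain (algebraMap B L)
  obtain ⟨n, g, hinj, hfin⟩ := exists_finite_inj_algHom_of_fg k B
  let P := MvPolynomial (Fin n) k
  let _ : Algebra P B := g.toRingHom.toAlgebra
  let _ : Algebra P L := ((algebraMap B L).comp (algebraMap P B)).toAlgebra
  have : IsScalarTower P B L := .of_algebraMap_eq fun _ => rfl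
  have : Module.Finite P B := hfin
  have : FaithfulSMul P B := (faithfulSMul_iff_algebraMap_injective _ _).mpr hinj
  have : FaithfulSMul P L := .trans P B L
  have : Algebra.IsAlgebraic P L := .trans P B L
  have : Algebra.EssFiniteType P L := .comp P B L
  have := finite_integralClosure_of_charZero P L
  exact finite_integralClosure_tower_top P B L

end IntegralClosure

section SemilinearExtension

variable {R R' A A' : Type*} [CommRing R] [CommRing R'] [CommRing A] [CommRing A'] [Algebra R A]
  [Algebra R' A']

lemma isIntegral_map_iff_of_injective {σ : R ≃+* R'} {φ : A →+* A'} (hφ : Function.Injective φ)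
    (h : ∀ r, φ (algebraMap R A r) = algebraMap R' A' (σ r)) {x : A} :
    IsIntegral R' (φ x) ↔ IsIntegral R x := by
  refine ⟨fun ⟨p, hp, hpx⟩ => ⟨p.map (σ.symm : R' →+* R), hp.map _, hφ ?_⟩, fun hx =>
    hx.map_of_comp_eq (σ : R →+* R') φ (RingHom.ext fun r => (h r).symm)⟩
  have hcomp : (φ.comp (algebraMap R A)).comp (σ.symm : R' →+* R) = algebraMap R' A' :=
    RingHom.ext fun r => by simp [h]
  rw [Polynomial.eval₂_map, Polynomial.hom_eval₂, ← RingHom.comp_assoc, hcomp, hpx, map_zero]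

lemma map_smul_of_map_algebraMap {σ : R ≃+* R'} {φ : A →+* A'}
    (h : ∀ r, φ (algebraMap R A r) = algebraMap R' A' (σ r)) (r : R) (x : A) :
    φ (r • x) = σ r • φ x := by
  rw [Algebra.smul_def, map_mul, h, ← Algebra.smul_def]

/-- The ideal of denominators of `x` over the integral closure of `R`: the `r` such that `r • x` is
integral over `R`. -/
def denominatorIdeal (R : Type*) {A : Type*} [CommRing R] [CommRing A] [Algebra R A] (x : A) :
    Ideal R :=
  (Subalgebra.toSubmodule (integralClosure R A)).comap (LinearMap.toSpanSingleton R A x)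

lemma mem_denominatorIdeal {r : R} {x : A} : r ∈ denominatorIdeal R x ↔ IsIntegral R (r • x) :=
  Iff.rfl

lemma comap_denominatorIdeal {σ : R ≃+* R'} {φ : A →+* A'} (hφ : Function.Injective φ)
    (h : ∀ r, φ (algebraMap R A r) = algebraMap R' A' (σ r)) (x : A) :
    (denominatorIdeal R' (φ x)).comap (σ : R →+* R') = denominatorIdeal R x := by
  ext r
  rw [mem_denominatorIdeal, ← isIntegral_map_iff_of_injective hφ h, map_smul_of_map_algebraMap h]
  rfl

/-- The ideal of `R` cutting out the complement of the largest open subset of `Spec R` over which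
`A` is integral. -/
def nonintegralLocusIdeal (R A : Type*) [CommRing R] [CommRing A] [Algebra R A] : Ideal R :=
  ⨅ x : A, (denominatorIdeal R x).radical

lemma comap_nonintegralLocusIdeal_le {σ : R ≃+* R'} {φ : A →+* A'} (hφ : Function.Injective φ)
    (h : ∀ r, φ (algebraMap R A r) = algebraMap R' A' (σ r)) :
    (nonintegralLocusIdeal R' A').comap (σ : R →+* R') ≤ nonintegralLocusIdeal R A := by
  refine le_iInf fun x => ?_
  rw [← comap_denominatorIdeal hφ h x, ← Ideal.comap_radical]
  exact Ideal.comap_mono (iInf_le _ (φ x))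

open Pointwise in
lemma nonintegralLocusIdeal_ne_bot (R A : Type*) [CommRing R] [NoZeroDivisors R] [CommRing A]
    [Algebra R A] [Algebra.FiniteType R A] [Algebra.IsAlgebraic R A] :
    nonintegralLocusIdeal R A ≠ ⊥ := by
  obtain ⟨s, hs⟩ := ‹Algebra.FiniteType R A›
  obtain ⟨q, hq0, hq⟩ := Algebra.IsAlgebraic.exists_integral_multiples R s
  have hadjoin : Algebra.adjoin R (q • (s : Set A)) ≤ integralClosure R A := by
    refine Algebra.adjoin_le ?_
    rintro _ ⟨a, ha, rfl⟩
    exact hq a ha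
  refine (Submodule.ne_bot_iff _).mpr ⟨q, Ideal.mem_iInf.mpr fun x => ?_, hq0⟩
  obtain ⟨n, hn⟩ := Algebra.pow_smul_mem_adjoin_smul q (s : Set A) (x := x) (hs ▸ Algebra.mem_top)
  exact Ideal.mem_radical_iff.mpr ⟨n, hadjoin (hn n le_rfl)⟩

lemma exists_nonintegralLocusIdeal_pow_le [IsNoetherianRing R] (s : Finset A) :
    ∃ n, ∀ x ∈ s, nonintegralLocusIdeal R A ^ n ≤ denominatorIdeal R x := by
  choose n hn using fun x : A => Ideal.exists_pow_le_of_le_radical_of_fg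
    (iInf_le (fun x : A => (denominatorIdeal R x).radical) x) (IsNoetherian.noetherian _)
  exact ⟨s.sup n, fun x hx => (Ideal.pow_le_pow_right (Finset.le_sup hx)).trans (hn x)⟩

/-- The elements of `A` that every element of `J` multiplies into the integral closure of `R`, i.e.
the colon submodule `(integralClosure R A : J)`. -/
def integralColon (J : Ideal R) (A : Type*) [CommRing A] [Algebra R A] : Submodule R A where
  carrier := {x | J ≤ denominatorIdeal R x}
  zero_mem' r _ := by simp [mem_denominatorIdeal, isIntegral_zero]
  add_mem' hx hy r hr := by
    rw [mem_denominatorIdeal, smul_add]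
    exact (hx hr).add (hy hr)
  smul_mem' c x hx r hr := by
    rw [mem_denominatorIdeal, smul_comm]
    exact (hx hr).smul c

lemma mem_integralColon {J : Ideal R} {x : A} : x ∈ integralColon J A ↔ J ≤ denominatorIdeal R x :=
  Iff.rfl

lemma algebraMap_mem_integralColon_iff {K : Type*} [CommRing K] [Algebra R K] [Algebra A K]
    [IsScalarTower R A K] [FaithfulSMul A K] {J : Ideal R} {x : A} :
    algebraMap A K x ∈ integralColon J K ↔ x ∈ integralColon J A := by
  refine forall₂_congr fun r _ => ?_
  have hsmul : r • algebraMap A K x = algebraMap A K (r • x) :=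
    (map_smul (IsScalarTower.toAlgHom R A K) r x).symm
  rw [mem_denominatorIdeal, mem_denominatorIdeal, hsmul]
  exact isIntegral_algebraMap_iff (FaithfulSMul.algebraMap_injective A K)

lemma map_mem_integralColon_map_iff {σ : R ≃+* R'} {φ : A →+* A'} (hφ : Function.Injective φ)
    (h : ∀ r, φ (algebraMap R A r) = algebraMap R' A' (σ r)) {J : Ideal R} {x : A} :
    φ x ∈ integralColon (J.map (σ : R →+* R')) A' ↔ x ∈ integralColon J A := by
  rw [mem_integralColon, mem_integralColon, Ideal.map_le_iff_le_comap, comap_denominatorIdeal hφ h]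

lemma isNoetherian_integralColon [IsDomain R] [Module.IsTorsionFree R A]
    [IsNoetherian R (integralClosure R A)] {J : Ideal R} (hJ : J ≠ ⊥) :
    IsNoetherian R (integralColon J A) := by
  obtain ⟨q, hqJ, hq0⟩ := Submodule.exists_mem_ne_zero_of_ne_bot hJ
  let mulq : integralColon J A →ₗ[R] integralClosure R A :=
    { toFun := fun x => ⟨q • (x : A), x.2 hqJ⟩
      map_add' := fun x y => Subtype.ext (smul_add _ _ _)
      map_smul' := fun c x => Subtype.ext (smul_comm _ _ _) }
  refine isNoetherian_of_injective mulq fun x y hxy => Subtype.ext ?_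
  exact smul_right_injective A hq0 (congrArg Subtype.val hxy)

end SemilinearExtension

section FractionField

lemma injective_of_isAlgebraic {R A A' : Type*} [CommRing R] [CommRing A] [IsDomain A] [CommRing A']
    [Algebra R A] [Algebra.IsAlgebraic R A] {φ : A →+* A'}
    (h : Function.Injective (φ.comp (algebraMap R A))) : Function.Injective φ := by
  refine (injective_iff_map_eq_zero φ).mpr fun a ha => by_contra fun ha0 => ?_
  refine Ideal.comap_ne_bot_of_algebraic_mem (R := R) (I := RingHom.ker φ) ha0 ha
    (Algebra.IsAlgebraic.isAlgebraic a) ?_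
  rwa [RingHom.comap_ker, ← RingHom.injective_iff_ker_eq_bot]

lemma surjective_of_finiteDimensional {F K : Type*} [Field F] [Field K] [Algebra F K]
    [FiniteDimensional F K] (σ : F ≃+* F) {Φ : K →+* K}
    (h : ∀ c, Φ (algebraMap F K c) = algebraMap F K (σ c)) : Function.Surjective Φ := by
  let E : IntermediateField F K := Φ.fieldRange.toIntermediateField fun c =>
    ⟨algebraMap F K (σ.symm c), by rw [h, σ.apply_symm_apply]⟩
  let e : K ≃+* E := RingEquiv.ofBijective Φ.rangeRestrict
    ⟨Φ.rangeRestrict.injective, Φ.rangeRestrict_surjective⟩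
  have hrank : Module.finrank F K = Module.finrank F E :=
    Algebra.finrank_eq_of_equiv_equiv σ e (RingHom.ext fun c => Subtype.ext (h c).symm)
  have htop : E = ⊤ := IntermediateField.eq_of_le_of_finrank_eq le_top <| by
    rw [IntermediateField.finrank_top', hrank]
  exact fun x => show x ∈ E from htop ▸ IntermediateField.mem_top

lemma surjective_of_isAlgebraic {R K : Type*} [CommRing R] [Field K] [Algebra R K]
    [FaithfulSMul R K] [Algebra.IsAlgebraic R K] [Algebra.EssFiniteType R K] (σ : R ≃+* R)
    {Φ : K →+* K} (h : ∀ r, Φ (algebraMap R K r) = algebraMap R K (σ r)) :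
    Function.Surjective Φ := by
  have : IsDomain R := (FaithfulSMul.algebraMap_injective R K).isDomain (algebraMap R K)
  let F := FractionRing R
  let _ : Algebra F K := FractionRing.liftAlgebra R K
  have : Algebra.IsAlgebraic F K := (IsFractionRing.comap_isAlgebraic_iff (A := R)).mp ‹_›
  have : Algebra.EssFiniteType F K := .of_comp R F K
  have : FiniteDimensional F K := Algebra.finite_of_essFiniteType_of_isAlgebraic
  let σF : F ≃+* F := IsFractionRing.ringEquivOfRingEquiv σ
  have hcomp : Φ.comp (algebraMap F K) = (algebraMap F K).comp σF :=
    IsLocalization.ringHom_ext (nonZeroDivisors R) <| RingHom.ext fun r => by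
      simp [σF, F, ← IsScalarTower.algebraMap_apply R (FractionRing R) K, h]
  exact surjective_of_finiteDimensional σF (RingHom.congr_fun hcomp)

end FractionField

section SurjectivityDescent

theorem mem_range_of_mem_integralColon {R A K : Type*} [CommRing R] [IsDomain R]
    [CommRing A] [CommRing K] [Algebra R A] [Algebra R K] [Algebra A K] [IsScalarTower R A K]
    [FaithfulSMul A K] [Module.IsTorsionFree R K] [IsNoetherian R (integralClosure R K)]
    {σ : R ≃+* R} {φ : A →+* A} {Φ : K →+* K}
    (hφ : ∀ r, φ (algebraMap R A r) = algebraMap R A (σ r))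
    (hΦ : ∀ a, Φ (algebraMap A K a) = algebraMap A K (φ a)) (hbij : Function.Bijective Φ)
    {J : Ideal R} (hJ : J ≠ ⊥) (hσJ : J.map (σ : R →+* R) = J) {a : A}
    (ha : a ∈ integralColon J A) : a ∈ φ.range := by
  have hΦσ (r : R) : Φ (algebraMap R K r) = algebraMap R K (σ r) := by
    rw [IsScalarTower.algebraMap_apply R A K, hΦ, hφ, ← IsScalarTower.algebraMap_apply]
  let Φl : K →ₛₗ[(σ : R →+* R)] K :=
    { toFun := Φ, map_add' := map_add Φ, map_smul' := map_smul_of_map_algebraMap hΦσ }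
  let M : Submodule R K := LinearMap.range (IsScalarTower.toAlgHom R A K).toLinearMap
  have hM : M ≤ M.comap Φl := by
    rintro _ ⟨b, rfl⟩
    exact ⟨φ b, (hΦ b).symm⟩
  have hF : (integralColon J K).comap Φl = integralColon J K := by
    ext x
    have hx := map_mem_integralColon_map_iff hbij.injective hΦσ (J := J) (x := x)
    rwa [hσJ] at hx
  have := isNoetherian_integralColon (A := K) hJ
  have hMF := comap_inf_eq_of_isNoetherian (Φ := Φl) hbij.surjective hM hF
  obtain ⟨x, hx⟩ := hbij.surjective (algebraMap A K a)
  have hxMF : x ∈ (M ⊓ integralColon J K).comap Φl := by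
    change Φ x ∈ M ⊓ integralColon J K
    rw [hx]
    exact ⟨⟨a, rfl⟩, algebraMap_mem_integralColon_iff.mpr ha⟩
  obtain ⟨⟨b, rfl⟩, -⟩ := hMF ▸ hxMF
  exact ⟨b, FaithfulSMul.algebraMap_injective A K ((hΦ b).symm.trans hx)⟩

theorem bijective_of_isAlgebraic {R A : Type*} [CommRing R] [IsNoetherianRing R] [CommRing A]
    [IsDomain A] [Algebra R A] [FaithfulSMul R A] [Algebra.FiniteType R A] [Algebra.IsAlgebraic R A]
    [Module.Finite R (integralClosure R (FractionRing A))] (σ : R ≃+* R) {φ : A →+* A}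
    (h : ∀ r, φ (algebraMap R A r) = algebraMap R A (σ r)) : Function.Bijective φ := by
  let K := FractionRing A
  have hRA : Function.Injective (algebraMap R A) := FaithfulSMul.algebraMap_injective R A
  have : IsDomain R := hRA.isDomain (algebraMap R A)
  have : FaithfulSMul R K := .trans R A K
  have : Algebra.IsAlgebraic R K := (IsFractionRing.isAlgebraic_iff' R A K).mp inferInstance
  have : Algebra.EssFiniteType A K := .of_isLocalization K (nonZeroDivisors A)
  have : Algebra.EssFiniteType R K := .comp R A K
  have hφ : Function.Injective φ := injective_of_isAlgebraic (R := R) <| by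
    rw [show φ.comp (algebraMap R A) = (algebraMap R A).comp (σ : R →+* R) from RingHom.ext h]
    exact hRA.comp σ.injective
  let Φ : K →+* K := IsFractionRing.map hφ
  have hΦ (a : A) : Φ (algebraMap A K a) = algebraMap A K (φ a) := IsLocalization.map_eq _ a
  have hΦσ (r : R) : Φ (algebraMap R K r) = algebraMap R K (σ r) := by
    rw [IsScalarTower.algebraMap_apply R A K, hΦ, h, ← IsScalarTower.algebraMap_apply]
  have hbij : Function.Bijective Φ := ⟨Φ.injective, surjective_of_isAlgebraic σ hΦσ⟩
  obtain ⟨s, hs⟩ := ‹Algebra.FiniteType R A›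
  obtain ⟨n, hn⟩ := exists_nonintegralLocusIdeal_pow_le (R := R) s
  let J := nonintegralLocusIdeal R A ^ n
  have hJ : J ≠ ⊥ := pow_ne_zero n (nonintegralLocusIdeal_ne_bot R A)
  have hσJ : J.map (σ : R →+* R) = J := by
    rw [Ideal.map_pow, map_ringEquiv_eq_of_comap_le σ (comap_nonintegralLocusIdeal_le hφ h)]
  let φrange : Subalgebra R A :=
    { φ.range with algebraMap_mem' := fun r => ⟨algebraMap R A (σ.symm r), by simp [h]⟩ }
  have hs_le : Algebra.adjoin R (s : Set A) ≤ φrange := Algebra.adjoin_le fun a ha =>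
    mem_range_of_mem_integralColon h hΦ hbij hJ hσJ (hn a ha)
  exact ⟨hφ, fun a => hs_le (hs ▸ Algebra.mem_top)⟩

theorem bijective_of_finiteType_of_charZero (k : Type*) {B A : Type*} [Field k] [CharZero k]
    [CommRing B] [CommRing A] [IsDomain A] [Algebra k B] [Algebra k A] [Algebra B A]
    [IsScalarTower k B A] [FaithfulSMul B A] [Algebra.FiniteType k B] [Algebra.FiniteType k A]
    [Algebra.IsAlgebraic B A] (σ : B ≃+* B) {φ : A →+* A}
    (h : ∀ b, φ (algebraMap B A b) = algebraMap B A (σ b)) : Function.Bijective φ := by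
  have : IsNoetherianRing B := Algebra.FiniteType.isNoetherianRing k B
  have : Algebra.FiniteType B A := .of_restrictScalars_finiteType k B A
  have : IsDomain B := (FaithfulSMul.algebraMap_injective B A).isDomain (algebraMap B A)
  have : FaithfulSMul B (FractionRing A) := .trans B A _
  have : Algebra.IsAlgebraic B (FractionRing A) :=
    (IsFractionRing.isAlgebraic_iff' B A _).mp inferInstance
  have : Algebra.EssFiniteType A (FractionRing A) := .of_isLocalization _ (nonZeroDivisors A)
  have : Algebra.EssFiniteType B (FractionRing A) := .comp B A _
  have := finite_integralClosure_of_finiteType k B (FractionRing A)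
  exact bijective_of_isAlgebraic σ h

end SurjectivityDescent

section AffineScheme

universe u

lemma topologicalKrullDim_eq_ringKrullDim_Γ (X : Scheme.{u}) [IsAffine X] :
    topologicalKrullDim X.carrier = ringKrullDim Γ(X, ⊤) :=
  (IsHomeomorph.topologicalKrullDim_eq _ X.isoSpec.hom.homeomorph.isHomeomorph).trans
    (PrimeSpectrum.topologicalKrullDim_eq_ringKrullDim _)

lemma isIso_iff_bijective_appTop {X Y : Scheme.{u}} [IsAffine X] [IsAffine Y] (f : X ⟶ Y) :
    IsIso f ↔ Function.Bijective f.appTop.hom :=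
  ((MorphismProperty.isomorphisms Scheme).arrow_mk_iso_iff (arrowIsoSpecΓOfIsAffine f)).trans
    isIso_SpecMap_iff

/-- The `R`-algebra structure on the global sections of a scheme over `Spec R`. It depends on the
structure morphism `s`, so it is not an instance. -/
noncomputable abbrev algebraΓ {R : CommRingCat.{u}} {X : Scheme.{u}} (s : X ⟶ Spec R) :
    Algebra R Γ(X, ⊤) :=
  ((Scheme.ΓSpecIso R).inv ≫ s.appTop).hom.toAlgebra

lemma finiteType_algebraΓ {R : CommRingCat.{u}} {X : Scheme.{u}} [IsAffine X] (s : X ⟶ Spec R)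
    [LocallyOfFiniteType s] : letI := algebraΓ s; Algebra.FiniteType R Γ(X, ⊤) :=
  (HasRingHomProperty.appTop @LocallyOfFiniteType s inferInstance).comp
    (.of_surjective _ (ConcreteCategory.bijective_of_isIso (Scheme.ΓSpecIso R).inv).2)

lemma injective_appTop_of_isDominant {X Y : Scheme.{u}} [IsReduced Y] (ρ : X ⟶ Y)
    [IsDominant ρ] [QuasiCompact ρ] : Function.Injective ρ.appTop := by
  have := IsSchemeTheoreticallyDominant.of_isDominant ρ
  exact ρ.app_injective ⊤

theorem endomorphism_isIso_of_base_isIso_general (k : Type u) [Field k] [CharZero k]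
    (X Y : Scheme.{u}) [IsAffine X] [IsAffine Y] [IsIntegral X] [IsIntegral Y]
    (sX : X ⟶ Spec (CommRingCat.of k)) (sY : Y ⟶ Spec (CommRingCat.of k))
    [LocallyOfFiniteType sX] [LocallyOfFiniteType sY]
    (hdim : topologicalKrullDim X.carrier ≤ topologicalKrullDim Y.carrier)
    (ρ : X ⟶ Y) [IsDominant ρ] (hρ : ρ ≫ sY = sX) (f : X ⟶ X) (g : Y ⟶ Y)
    (hcomm : f ≫ ρ = ρ ≫ g) [IsIso g] : IsIso f := by
  let A := Γ(X, ⊤)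
  let B := Γ(Y, ⊤)
  let _ : Algebra k A := algebraΓ sX
  let _ : Algebra k B := algebraΓ sY
  let _ : Algebra B A := ρ.appTop.hom.toAlgebra
  have : IsScalarTower k B A := .of_algebraMap_eq' <| congrArg CommRingCat.Hom.hom <|
    show (Scheme.ΓSpecIso (.of k)).inv ≫ sX.appTop =
      ((Scheme.ΓSpecIso (.of k)).inv ≫ sY.appTop) ≫ ρ.appTop by
    rw [Category.assoc, ← Scheme.Hom.comp_appTop, hρ]
  have : FaithfulSMul B A :=
    (faithfulSMul_iff_algebraMap_injective _ _).mpr (injective_appTop_of_isDominant ρ)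
  have : Algebra.FiniteType k A := finiteType_algebraΓ sX
  have : Algebra.FiniteType k B := finiteType_algebraΓ sY
  rw [topologicalKrullDim_eq_ringKrullDim_Γ, topologicalKrullDim_eq_ringKrullDim_Γ] at hdim
  have : Algebra.IsAlgebraic B A := isAlgebraic_of_ringKrullDim_le k hdim
  let σ : B ≃+* B := .ofBijective g.appTop.hom ((isIso_iff_bijective_appTop g).mp ‹_›)
  have hφσ : ρ.appTop ≫ f.appTop = g.appTop ≫ ρ.appTop := by
    rw [← Scheme.Hom.comp_appTop, hcomm, Scheme.Hom.comp_appTop]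
  rw [isIso_iff_bijective_appTop]
  exact bijective_of_finiteType_of_charZero k σ (ConcreteCategory.congr_hom hφσ)

end AffineScheme

/-- Theorem B (ii).  Let `X`, `Y` be irreducible complex affine algebraic varieties
(integral affine schemes of finite type over `ℂ`) of the same finite dimension.  Let
`ρ : X → Y` be a dominant morphism over `ℂ` and `f : X → X`, `g : Y → Y` morphisms over
`ℂ` with `ρ ∘ f = g ∘ ρ`.  If `g` is an isomorphism, so is `f`. -/
theorem endomorphism_isIso_of_base_isIso
    (X Y : Scheme) [IsAffine X] [IsAffine Y] [IsIntegral X] [IsIntegral Y]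
    (sX : X ⟶ Spec (CommRingCat.of ℂ)) (sY : Y ⟶ Spec (CommRingCat.of ℂ))
    [LocallyOfFiniteType sX] [LocallyOfFiniteType sY]
    (hfin : topologicalKrullDim X.carrier ≠ ⊤)
    (hdim : topologicalKrullDim X.carrier = topologicalKrullDim Y.carrier)
    (ρ : X ⟶ Y) [IsDominant ρ] (hρ : ρ ≫ sY = sX)
    (f : X ⟶ X) (hf : f ≫ sX = sX)
    (g : Y ⟶ Y) (hg : g ≫ sY = sY)
    (hcomm : f ≫ ρ = ρ ≫ g)
    [IsIso g] : IsIso f :=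
  endomorphism_isIso_of_base_isIso_general ℂ X Y sX sY hdim.le ρ hρ f g hcomm
end

section
/- Let k be a field of characteristic 0, let n be a natural number, let S be the polynomial ring k[x₁,…,xₙ] in n variables over k, and let R be a k-subalgebra of S that is isomorphic as a k-algebra to the polynomial ring in n variables over k. Let F : S → S be a k-algebra endomorphism with F(R) ⊆ R. Then F is bijective if and only if the restriction of F to R, viewed as a map R → R, is bijective. -/
/-!
An isomorphism of `R` with `S = k[x₁,…,xₙ]` turns the inclusion `R ⊆ S` into an injective
endomorphism `g` of `S` and the restriction `F|_R` into an endomorphism `H` of `S` with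
`F ∘ g = g ∘ H`. Since `S` is algebraic over `g(S)`, bijectivity of one of `F`, `H` makes both
injective, and two invariants of injective endomorphisms are compared.

*Degree.* All of them induce finite extensions of `Frac S`, and degrees multiply, so `F` and `H`
have the same degree: if one is birational, so is the other.

*Jacobian.* The chain rule gives `F(J g) · J F = g(J H) · J g`, and `J g ≠ 0` in characteristic 0.
If `H` is bijective then `J H` is a unit, so `F(J g) · J F` is associated to `J g`. Were `J F` not
a unit, then `F(J g)` would properly divide `J g`, and applying `F` again and again would give an
infinite chain of proper divisors. If `F` is bijective, the same argument for `F⁻¹` shows that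
`J H` is a unit.

*Keller.* An injective birational endomorphism `φ` with unit Jacobian is étale, hence flat. Write
`r ∈ S` as a quotient `φ(a) / φ(b)` with `a`, `b` coprime. By flatness the relation `φ(b) r = φ(a)`
comes from relations `b u = a v` in the source, where `b ∣ v`; this makes `φ(b)`, and so `b`, a
unit, and `r` lies in the image of `φ`.
-/

namespace ConnellZweibel

open Function Module MvPolynomial

section Descent

/-- If `c` were not a unit, then `d`, `σ d`, `σ (σ d)`, … would be an infinite chain of proper
divisors. -/
theorem isUnit_of_associated_map_mul {A : Type*} [CommMonoidWithZero A] [WfDvdMonoid A]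
    (σ : A →* A) [IsLocalHom σ] {c d : A} (hd : d ≠ 0) (h : Associated (σ d * c) d) :
    IsUnit c := by
  induction d using (wellFounded_dvdNotUnit (α := A)).induction generalizing c with
  | h d ih =>
    by_contra hc
    have hσd : σ d ≠ 0 := by
      intro h0
      rw [h0, zero_mul] at h
      exact hd (h.eq_zero_iff.mp rfl)
    have hdvd : DvdNotUnit (σ d) d := by
      obtain ⟨u, hu⟩ := h
      exact ⟨hσd, c * u, by simpa using hc, by rw [← mul_assoc, hu]⟩
    have hassoc : Associated (σ (σ d) * σ c) (σ d) := map_mul σ _ _ ▸ h.map σ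
    exact hc (isUnit_of_map_unit σ c (ih (σ d) hdvd hσd hassoc))

end Descent

section Degree

variable {K L M : Type*} [Field K] [Field L] [Field M]

theorem finrank_fieldRange_comp (g : L →+* M) (f : K →+* L) :
    finrank (g.comp f).fieldRange M = finrank f.fieldRange L * finrank g.fieldRange M := by
  have hle : f.fieldRange.map g ≤ g.fieldRange := by
    rintro _ ⟨x, -, rfl⟩
    exact ⟨x, rfl⟩
  rw [← RingHom.map_fieldRange, ← Subfield.relfinrank_top_right, ← Subfield.relfinrank_top_right,
    ← Subfield.relfinrank_top_right, ← Subfield.relfinrank_mul_relfinrank hle le_top,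
    RingHom.fieldRange_eq_map g, Subfield.relfinrank_map_map]

theorem finrank_fieldRange_eq_one_iff {f : K →+* L} :
    finrank f.fieldRange L = 1 ↔ Surjective f := by
  rw [← Subfield.relfinrank_top_right, Subfield.relfinrank_eq_one_iff, top_le_iff,
    RingHom.fieldRange_eq_top_iff]

theorem finrank_fieldRange_pos {f : K →+* L} (hf : f.Finite) : 0 < finrank f.fieldRange L := by
  have : f.fieldRange.subtype.Finite := .of_comp_finite (f := f.rangeRestrictField) hf
  have : FiniteDimensional f.fieldRange L := this
  exact finrank_pos

theorem surjective_iff_of_comp_eq {f : L →+* L} {g : K →+* L} {h : K →+* K} (hg : g.Finite)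
    (hcomp : f.comp g = g.comp h) : Surjective f ↔ Surjective h := by
  have hdeg : finrank g.fieldRange L * finrank f.fieldRange L =
      finrank g.fieldRange L * finrank h.fieldRange K := by
    rw [← finrank_fieldRange_comp, hcomp, finrank_fieldRange_comp, mul_comm]
  rw [← finrank_fieldRange_eq_one_iff, ← finrank_fieldRange_eq_one_iff,
    Nat.eq_of_mul_eq_mul_left (finrank_fieldRange_pos hg) hdeg]

end Degree

section FractionField

variable {A B : Type*} [CommRing A] [CommRing B] [IsDomain B]
  {K L : Type*} [Field K] [Algebra A K] [IsFractionRing A K]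
  [Field L] [Algebra B L] [IsFractionRing B L]

theorem fractionMap_algebraMap {f : A →+* B} (hf : Injective f) (a : A) :
    (IsFractionRing.map hf : K →+* L) (algebraMap A K a) = algebraMap B L (f a) :=
  IsLocalization.map_eq _ a

theorem surjective_fractionMap {f : A →+* B} (hf : Bijective f) :
    Surjective (IsFractionRing.map hf.1 : K →+* L) := by
  intro y
  obtain ⟨a, b, -, rfl⟩ := IsFractionRing.div_surjective (A := B) y
  obtain ⟨a, rfl⟩ := hf.2 a
  obtain ⟨b, rfl⟩ := hf.2 b
  exact ⟨algebraMap A K a / algebraMap A K b, by simp only [map_div₀, fractionMap_algebraMap]⟩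

variable [IsDomain A]

theorem moduleFinite_of_isFractionRing [Algebra A B] [Algebra.FiniteType A B]
    [Algebra.IsAlgebraic A B] [Algebra K L] [Algebra A L] [IsScalarTower A B L]
    [IsScalarTower A K L] : Module.Finite K L := by
  have : Algebra.IsAlgebraic B L := IsLocalization.isAlgebraic _ (nonZeroDivisors B)
  have : Algebra.IsAlgebraic A L := .trans A B L
  have : Algebra.IsAlgebraic K L := (IsFractionRing.comap_isAlgebraic_iff (A := A)).mp inferInstance
  have : Algebra.EssFiniteType B L := .of_isLocalization _ (nonZeroDivisors B)
  have : Algebra.EssFiniteType A L := .comp A B L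
  have : Algebra.EssFiniteType K L := .of_comp A K L
  exact Algebra.finite_of_essFiniteType_of_isAlgebraic

variable {k : Type*} [CommRing k] [Algebra k A] [Algebra k B] {g : A →ₐ[k] B}

theorem finite_fractionMap [Algebra.FiniteType k B] [Algebra.IsAlgebraic g.range B]
    (hg : Injective g) : (IsFractionRing.map hg : K →+* L).Finite := by
  algebraize [g.toRingHom, (IsFractionRing.map hg : K →+* L), (algebraMap B L).comp g.toRingHom]
  have : IsScalarTower k A B := .of_algHom g
  have : Algebra.FiniteType A B := .of_restrictScalars_finiteType k A B
  have : IsScalarTower A K L := .of_algebraMap_eq fun a ↦ (fractionMap_algebraMap hg a).symm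
  have : Algebra.IsAlgebraic A B :=
    .of_ringHom_of_comp_eq g.rangeRestrict (RingHom.id B) g.rangeRestrict_surjective
      injective_id rfl
  exact moduleFinite_of_isFractionRing (A := A) (B := B)

theorem surjective_fractionMap_iff_of_comp_eq [Algebra.FiniteType k B]
    [Algebra.IsAlgebraic g.range B] {F : B →ₐ[k] B} {H : A →ₐ[k] A} (hF : Injective F)
    (hg : Injective g) (hH : Injective H) (hcomp : F.comp g = g.comp H) :
    Surjective (IsFractionRing.map hF : L →+* L) ↔
      Surjective (IsFractionRing.map hH : K →+* K) := by
  refine surjective_iff_of_comp_eq (finite_fractionMap hg) ?_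
  refine IsLocalization.ringHom_ext (nonZeroDivisors A) (RingHom.ext fun a ↦ ?_)
  simp only [RingHom.comp_apply, fractionMap_algebraMap]
  exact congrArg _ (DFunLike.congr_fun hcomp a)

end FractionField

section Algebraic

theorem range_eq_adjoin {k σ B : Type*} [CommSemiring k] [CommSemiring B] [Algebra k B]
    (φ : MvPolynomial σ k →ₐ[k] B) :
    φ.range = Algebra.adjoin k (Set.range fun i ↦ φ (X i)) := by
  rw [Algebra.adjoin_range_eq_range_aeval]
  exact congrArg AlgHom.range (aeval_unique φ)

theorem isAlgebraic_range {k σ : Type*} [CommRing k] [IsDomain k] [Finite σ]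
    {φ : MvPolynomial σ k →ₐ[k] MvPolynomial σ k} (hφ : Injective φ) :
    Algebra.IsAlgebraic φ.range (MvPolynomial σ k) := by
  have hind : AlgebraicIndependent k fun i ↦ φ (X i) := (algebraicIndependent_X σ k).map' hφ
  rw [range_eq_adjoin]
  exact (hind.isTranscendenceBasis_of_lift_trdeg_le_of_finite
    (by simp [trdeg_of_isDomain])).isAlgebraic

theorem injective_of_injective_comp_algebraMap {A B C : Type*} [CommRing A] [CommRing B]
    [IsDomain B] [CommRing C] [Algebra A B] [Algebra.IsAlgebraic A B] {f : B →+* C}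
    (h : Injective (f.comp (algebraMap A B))) : Injective f := by
  rw [RingHom.injective_iff_ker_eq_bot]
  by_contra hf
  obtain ⟨x, hx, hx0⟩ := Submodule.exists_mem_ne_zero_of_ne_bot hf
  refine Ideal.comap_ne_bot_of_algebraic_mem hx0 hx (Algebra.IsAlgebraic.isAlgebraic (R := A) x) ?_
  rw [RingHom.comap_ker, (RingHom.injective_iff_ker_eq_bot _).mp h]

theorem injective_of_injective_comp {k A B C : Type*} [CommRing k] [CommRing A] [CommRing B]
    [IsDomain B] [CommRing C] [Algebra k A] [Algebra k B] [Algebra k C] {f : B →ₐ[k] C}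
    {g : A →ₐ[k] B} [Algebra.IsAlgebraic g.range B] (h : Injective (f.comp g)) : Injective f := by
  refine injective_of_injective_comp_algebraMap (A := g.range) (f := f.toRingHom) ?_
  rintro ⟨_, a, rfl⟩ ⟨_, b, rfl⟩ hab
  exact Subtype.ext (congrArg g (h hab))

end Algebraic

section Derivation

variable {B M : Type*} [CommRing B] [IsDomain B] [AddCommGroup M] [Module B M]
  [Module.IsTorsionFree B M]

theorem derivation_apply_eq_zero_of_isAlgebraic {A : Type*} [CommRing A] [CharZero A] [Algebra A B]
    [FaithfulSMul A B] [Module A M] [IsScalarTower A B M] (D : Derivation A B M) {x : B}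
    (hx : IsAlgebraic A x) : D x = 0 := by
  have : IsDomain A := (FaithfulSMul.algebraMap_injective A B).isDomain
  obtain ⟨p, hp, hpx⟩ := hx
  induction hn : p.natDegree using Nat.strong_induction_on generalizing p with
  | _ n ih =>
    subst hn
    have hpos : 0 < p.natDegree :=
      Polynomial.natDegree_pos_of_aeval_root hp hpx fun _ ↦
        (FaithfulSMul.algebraMap_eq_zero_iff A B).mp
    have hD : Polynomial.aeval x p.derivative • D x = 0 := by
      rw [← D.map_aeval, hpx, map_zero]
    obtain hp' | hDx := smul_eq_zero.mp hD
    · exact ih _ (Polynomial.natDegree_derivative_lt hpos.ne') p.derivative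
        (mt Polynomial.derivative_eq_zero.mp hpos.ne') hp' rfl
    · exact hDx

theorem derivation_eq_zero_of_isAlgebraic {k : Type*} [CommRing k] [CharZero B] [Algebra k B]
    [Module k M] {A : Subalgebra k B} [Algebra.IsAlgebraic A B] {D : Derivation k B M}
    (hD : ∀ a ∈ A, D a = 0) : D = 0 := by
  have : IsScalarTower A B M :=
    ⟨fun a b m ↦ by simp only [Subalgebra.smul_def, smul_eq_mul, mul_smul]⟩
  let DA : Derivation A B M := .mk'
    ⟨D.toLinearMap.toAddHom, fun a b ↦ by simp [Subalgebra.smul_def, hD a a.2]⟩ D.leibniz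
  ext b
  exact derivation_apply_eq_zero_of_isAlgebraic DA (Algebra.IsAlgebraic.isAlgebraic b)

end Derivation

section Jacobian

variable {k σ : Type*} [CommRing k] [Fintype σ]

theorem derivation_algHom_apply {A M : Type*} [CommRing A] [Algebra k A] [AddCommGroup M]
    [Module k M] [Module A M] [IsScalarTower k A M] (D : Derivation k A M)
    (φ : MvPolynomial σ k →ₐ[k] A) (p : MvPolynomial σ k) :
    D (φ p) = ∑ i, φ (pderiv i p) • D (φ (X i)) := by
  classical
  induction p using MvPolynomial.induction_on with
  | C a =>
    have : φ (C a) = algebraMap k A a := φ.commutes a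
    simp [this]
  | add p q hp hq => simp [hp, hq, add_smul, Finset.sum_add_distrib]
  | mul_X p i hp =>
    simp only [map_mul, Derivation.leibniz, smul_eq_mul, map_add, hp, add_smul,
      Finset.sum_add_distrib, Finset.smul_sum, mul_smul]
    simp [pderiv_X, Pi.single_apply, apply_ite]

variable [DecidableEq σ]

/-- The Jacobian determinant `det (∂φ(Xᵢ)/∂Xⱼ)` of an endomorphism of a polynomial ring. -/
noncomputable def jacobian (φ : MvPolynomial σ k →ₐ[k] MvPolynomial σ k) : MvPolynomial σ k :=
  (Matrix.of fun i j ↦ pderiv j (φ (X i))).det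

theorem jacobian_comp (F g : MvPolynomial σ k →ₐ[k] MvPolynomial σ k) :
    jacobian (F.comp g) = F (jacobian g) * jacobian F := by
  rw [jacobian, jacobian, jacobian, AlgHom.map_det, ← Matrix.det_mul]
  congr 1
  ext1 i j
  simp [Matrix.mul_apply, derivation_algHom_apply (pderiv j) F (g (X i))]

theorem jacobian_mul_eq_of_comp_eq {F g H : MvPolynomial σ k →ₐ[k] MvPolynomial σ k}
    (hcomp : F.comp g = g.comp H) :
    F (jacobian g) * jacobian F = g (jacobian H) * jacobian g := by
  rw [← jacobian_comp, hcomp, jacobian_comp]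

theorem jacobian_id : jacobian (AlgHom.id k (MvPolynomial σ k)) = 1 := by
  rw [jacobian, ← Matrix.det_one (n := σ)]
  congr 1
  ext1 i j
  simp [pderiv_X, Matrix.one_apply, Pi.single_apply]

theorem isUnit_jacobian_of_bijective {F : MvPolynomial σ k →ₐ[k] MvPolynomial σ k}
    (hF : Bijective F) : IsUnit (jacobian F) := by
  let e := AlgEquiv.ofBijective F hF
  have h : F.comp e.symm.toAlgHom = AlgHom.id k _ := by
    ext1 i
    exact e.apply_symm_apply _
  refine .of_mul_eq_one_right (F (jacobian e.symm.toAlgHom)) ?_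
  rw [← jacobian_comp, h, jacobian_id]

/-- A kernel vector `v` of the Jacobian matrix gives the derivation `∑ vⱼ ∂ⱼ`, which vanishes on
the range of `g`. -/
theorem jacobian_ne_zero [IsDomain k] [CharZero k] {g : MvPolynomial σ k →ₐ[k] MvPolynomial σ k}
    (hg : Injective g) : jacobian g ≠ 0 := by
  intro h
  obtain ⟨v, hv, hv0⟩ := Matrix.exists_mulVec_eq_zero_iff.mpr h
  let D : Derivation k (MvPolynomial σ k) (MvPolynomial σ k) := mkDerivation k v
  have hD (p : MvPolynomial σ k) : D p = ∑ j, pderiv j p * v j := by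
    simpa [D] using derivation_algHom_apply D (AlgHom.id k _) p
  have hDg (i : σ) : D (g (X i)) = 0 := by
    rw [hD]
    exact congrFun hv0 i
  have hrange : ∀ p ∈ g.range, D p = 0 := by
    rintro _ ⟨p, rfl⟩
    simpa [hDg] using derivation_algHom_apply D g p
  have := isAlgebraic_range hg
  have hD0 : D = 0 := derivation_eq_zero_of_isAlgebraic hrange
  exact hv (funext fun i ↦ by simpa [D] using DFunLike.congr_fun hD0 (X i))

end Jacobian

section Etale

open KaehlerDifferential

/-- The Jacobi–Zariski sequence places `H¹(L_{T/S})` and `Ω[T⁄S]` on the two sides of the map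
`T ⊗ Ω[S⁄R] → Ω[T⁄R]`. -/
theorem formallyEtale_of_bijective_mapBaseChange {R S T : Type*} [CommRing R] [CommRing S]
    [CommRing T] [Algebra R S] [Algebra R T] [Algebra S T] [IsScalarTower R S T]
    [Algebra.FormallySmooth R T] (h : Bijective (mapBaseChange R S T)) :
    Algebra.FormallyEtale S T := by
  refine ⟨subsingleton_of_forall_eq 0 fun y ↦ ?_, subsingleton_of_forall_eq 0 fun y ↦ ?_⟩
  · obtain ⟨x, rfl⟩ := map_surjective R S T y
    exact (exact_mapBaseChange_map R S T x).mpr (h.2 x)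
  · have hy : Algebra.H1Cotangent.δ R S T y = 0 := by
      apply h.1
      rw [map_zero]
      exact (Algebra.H1Cotangent.exact_δ_mapBaseChange R S T _).mpr ⟨y, rfl⟩
    obtain ⟨x, rfl⟩ := (Algebra.H1Cotangent.exact_map_δ R S T y).mp hy
    rw [Subsingleton.elim x 0, map_zero]

variable {k σ : Type*} [CommRing k] [Fintype σ] [DecidableEq σ]

theorem etale_of_isUnit_det {A B : Type*} [CommRing A] [CommRing B] [Algebra k A] [Algebra k B]
    [Algebra.FiniteType k A] [Algebra.Smooth k B] {x : σ → A} (bA : Basis σ A Ω[A⁄k])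
    (hbA : ∀ i, bA i = D k A (x i)) (bB : Basis σ B Ω[B⁄k]) (f : A →ₐ[k] B)
    (hf : IsUnit (Matrix.of fun i j ↦ bB.repr (D k B (f (x i))) j).det) :
    f.toRingHom.Etale := by
  algebraize [f.toRingHom]
  have : IsScalarTower k A B := .of_algHom f
  have : Algebra.FinitePresentation A B := .of_restrict_scalars_finitePresentation k A B
  have hM : LinearMap.toMatrix (bA.baseChange B) bB (mapBaseChange k A B) =
      (Matrix.of fun i j ↦ bB.repr (D k B (f (x i))) j).transpose := by
    ext i j
    rw [LinearMap.toMatrix_apply, Basis.baseChange_apply, mapBaseChange_tmul, hbA, map_D, one_smul]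
    rfl
  have hdet : IsUnit (LinearMap.toMatrix (bA.baseChange B) bB (mapBaseChange k A B)).det := by
    rwa [hM, Matrix.det_transpose]
  exact ⟨formallyEtale_of_bijective_mapBaseChange (LinearEquiv.ofIsUnitDet hdet).bijective,
    inferInstance⟩

theorem etale_of_isUnit_jacobian {φ : MvPolynomial σ k →ₐ[k] MvPolynomial σ k}
    (hφ : IsUnit (jacobian φ)) : φ.toRingHom.Etale := by
  have : Algebra.Smooth k (MvPolynomial σ k) := ⟨inferInstance, inferInstance⟩
  refine etale_of_isUnit_det (mvPolynomialBasis k σ) (mvPolynomialBasis_apply k σ)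
    (mvPolynomialBasis k σ) φ ?_
  simpa only [jacobian, mvPolynomialBasis_repr_apply] using hφ

end Etale

section Keller

theorem isUnit_algebraMap_of_isRelPrime {A B : Type*} [CommRing A] [DecompositionMonoid A]
    [CommRing B] [Algebra A B] [Flat A B] {a b : A} (hrel : IsRelPrime a b) {r : B}
    (hr : algebraMap A B b * r = algebraMap A B a) : IsUnit (algebraMap A B b) := by
  have hs : ∑ i, (![b, -a] : Fin 2 → A) i • (![r, 1] : Fin 2 → B) i = 0 := by
    simp [Algebra.smul_def, hr]
  obtain ⟨m, u, y, hy, hu⟩ :=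
    Flat.isTrivialRelation_of_sum_smul_eq_zero (R := A) (M := B) hs
  have hdvd (j : Fin m) : b ∣ u 1 j := by
    have hj : b * u 0 j = a * u 1 j := by
      simpa [Fin.sum_univ_two, add_neg_eq_zero] using hu j
    exact hrel.symm.dvd_of_dvd_mul_left ⟨u 0 j, hj.symm⟩
  have hone : 1 = ∑ j, algebraMap A B (u 1 j) * y j := by
    simpa [Algebra.smul_def] using hy 1
  rw [isUnit_iff_dvd_one, hone]
  exact Finset.dvd_sum fun j _ ↦ (map_dvd _ (hdvd j)).mul_right _

theorem surjective_of_flat {A B K L : Type*} [CommRing A] [IsDomain A] [UniqueFactorizationMonoid A]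
    [CommRing B] [IsDomain B] [Field K] [Algebra A K] [IsFractionRing A K] [Field L] [Algebra B L]
    [IsFractionRing B L] {f : A →+* B} [IsLocalHom f] (hflat : f.Flat) (hf : Injective f)
    (hbir : Surjective (IsFractionRing.map hf : K →+* L)) : Surjective f := by
  intro r
  obtain ⟨x, hx⟩ := hbir (algebraMap B L r)
  have hr : f (IsFractionRing.den A x) * r = f (IsFractionRing.num A x) := by
    apply IsFractionRing.injective B L
    rw [map_mul, ← hx, ← fractionMap_algebraMap (K := K) hf, ← fractionMap_algebraMap (K := K) hf,
      ← map_mul, mul_comm]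
    exact congrArg _ (IsFractionRing.num_mul_den_eq_num_iff_eq.mpr rfl)
  have hden : IsUnit (IsFractionRing.den A x : A) := by
    algebraize [f]
    exact isUnit_of_map_unit f _
      (isUnit_algebraMap_of_isRelPrime (IsFractionRing.num_den_reduced A x) hr)
  obtain ⟨a, rfl⟩ := IsFractionRing.isInteger_of_isUnit_den hden
  exact ⟨a, IsFractionRing.injective B L (by rw [← fractionMap_algebraMap (K := K) hf, hx])⟩

variable {k σ : Type*} [CommRing k]

/-- Units of the polynomial ring are constants, and `φ` fixes constants. -/
theorem isLocalHom_of_injective [IsReduced k] {τ : Type*}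
    {φ : MvPolynomial σ k →ₐ[k] MvPolynomial τ k} (hφ : Injective φ) : IsLocalHom φ := by
  refine ⟨fun b hb ↦ ?_⟩
  obtain ⟨c, hc, h⟩ := isUnit_iff_eq_C_of_isReduced.mp hb
  have hbc : b = C c := hφ (h.trans (φ.commutes c).symm)
  exact hbc ▸ hc.map C

variable [IsDomain k] [UniqueFactorizationMonoid k] [Fintype σ] [DecidableEq σ]

theorem bijective_of_isUnit_jacobian {φ : MvPolynomial σ k →ₐ[k] MvPolynomial σ k}
    (hφ : Injective φ) (hJ : IsUnit (jacobian φ))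
    (hbir : Surjective (IsFractionRing.map hφ :
      FractionRing (MvPolynomial σ k) →+* FractionRing (MvPolynomial σ k))) : Bijective φ := by
  have hlocal := isLocalHom_of_injective hφ
  have : IsLocalHom φ.toRingHom := ⟨hlocal.map_nonunit⟩
  have hflat := (RingHom.Etale.iff_flat_and_formallyUnramified.mp (etale_of_isUnit_jacobian hJ)).1
  exact ⟨hφ, surjective_of_flat hflat hφ hbir⟩

end Keller

section JacobianComparison

variable {k σ : Type*} [CommRing k] [IsDomain k] [CharZero k] [UniqueFactorizationMonoid k]
  [Fintype σ] [DecidableEq σ] {F g H : MvPolynomial σ k →ₐ[k] MvPolynomial σ k}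

theorem isUnit_jacobian_left_of_comp_eq (hF : Injective F) (hg : Injective g)
    (hcomp : F.comp g = g.comp H) (hH : IsUnit (jacobian H)) : IsUnit (jacobian F) := by
  have hlocal := isLocalHom_of_injective hF
  have : IsLocalHom (F : MvPolynomial σ k →* MvPolynomial σ k) := ⟨hlocal.map_nonunit⟩
  refine isUnit_of_associated_map_mul (F : MvPolynomial σ k →* MvPolynomial σ k)
    (jacobian_ne_zero hg) ?_
  change Associated (F (jacobian g) * jacobian F) (jacobian g)
  rw [jacobian_mul_eq_of_comp_eq hcomp]
  exact associated_unit_mul_left _ _ (hH.map g)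

theorem isUnit_jacobian_right_of_comp_eq (hF : Bijective F) (hg : Injective g)
    (hcomp : F.comp g = g.comp H) : IsUnit (jacobian H) := by
  let e := (AlgEquiv.ofBijective F hF).symm
  have hJ : jacobian g * e (jacobian F) = e (g (jacobian H)) * e (jacobian g) := by
    rw [← map_mul, ← jacobian_mul_eq_of_comp_eq hcomp, map_mul]
    exact congrArg (· * _) (e.apply_symm_apply (jacobian g)).symm
  have hassoc : Associated (e (jacobian g) * e (g (jacobian H))) (jacobian g) := by
    rw [mul_comm, ← hJ]
    exact associated_mul_unit_left _ _ ((isUnit_jacobian_of_bijective hF).map e)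
  have hgJH : IsUnit (g (jacobian H)) :=
    isUnit_of_map_unit e _ (isUnit_of_associated_map_mul (e : MvPolynomial σ k →* MvPolynomial σ k)
      (jacobian_ne_zero hg) hassoc)
  exact (isLocalHom_of_injective hg).map_nonunit _ hgJH

end JacobianComparison

theorem bijective_iff_of_comp_eq {k σ : Type*} [CommRing k] [IsDomain k] [CharZero k]
    [UniqueFactorizationMonoid k] [Finite σ] {F g H : MvPolynomial σ k →ₐ[k] MvPolynomial σ k}
    (hg : Injective g) (hcomp : F.comp g = g.comp H) : Bijective F ↔ Bijective H := by
  classical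
  have := Fintype.ofFinite σ
  have := isAlgebraic_range hg
  have hbir (hF : Injective F) (hH : Injective H) :=
    surjective_fractionMap_iff_of_comp_eq (K := FractionRing (MvPolynomial σ k))
      (L := FractionRing (MvPolynomial σ k)) hF hg hH hcomp
  constructor
  · intro hF
    have hH : Injective H := by
      have : Injective (g.comp H) := hcomp ▸ hF.1.comp hg
      exact Injective.of_comp this
    exact bijective_of_isUnit_jacobian hH (isUnit_jacobian_right_of_comp_eq hF hg hcomp)
      ((hbir hF.1 hH).mp (surjective_fractionMap hF))
  · intro hH
    have hF : Injective F := injective_of_injective_comp (g := g) (hcomp ▸ hg.comp hH.1)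
    exact bijective_of_isUnit_jacobian hF
      (isUnit_jacobian_left_of_comp_eq hF hg hcomp (isUnit_jacobian_of_bijective hH))
      ((hbir hF hH.1).mpr (surjective_fractionMap hH))

end ConnellZweibel

theorem connell_zweibel_general {k σ : Type*} [CommRing k] [IsDomain k] [CharZero k]
    [UniqueFactorizationMonoid k] [Finite σ] (R : Subalgebra k (MvPolynomial σ k))
    (hR : Nonempty (R ≃ₐ[k] MvPolynomial σ k)) (F : MvPolynomial σ k →ₐ[k] MvPolynomial σ k)
    (hF : ∀ r ∈ R, F r ∈ R) :
    Function.Bijective F ↔ Function.Bijective (fun r : R ↦ (⟨F r, hF r r.2⟩ : R)) := by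
  obtain ⟨e⟩ := hR
  let FR : R →ₐ[k] R := (F.comp R.val).codRestrict R fun r ↦ hF r r.2
  let g : MvPolynomial σ k →ₐ[k] MvPolynomial σ k := R.val.comp e.symm.toAlgHom
  let H : MvPolynomial σ k →ₐ[k] MvPolynomial σ k :=
    e.toAlgHom.comp (FR.comp e.symm.toAlgHom)
  have hg : Function.Injective g := Subtype.val_injective.comp e.symm.injective
  have hcomp : F.comp g = g.comp H := by
    ext1 i
    exact congrArg Subtype.val (e.symm_apply_apply (FR (e.symm (MvPolynomial.X i)))).symm
  have hH : Function.Bijective H ↔ Function.Bijective FR := by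
    change Function.Bijective (e ∘ FR ∘ e.symm) ↔ _
    rw [Function.Bijective.of_comp_iff' e.bijective,
      Function.Bijective.of_comp_iff _ e.symm.bijective]
  exact (ConnellZweibel.bijective_iff_of_comp_eq hg hcomp).trans hH

/-- The Connell–Zweibel theorem.  Let `k` be a field of characteristic 0, let
`S = k[x₁,…,xₙ]` and let `R` be a `k`-subalgebra of `S` that is `k`-isomorphic to the
polynomial ring in `n` variables.  If `F : S → S` is a `k`-algebra endomorphism with
`F(R) ⊆ R`, then `F` is bijective iff the restriction `F|_R : R → R` is bijective. -/
theorem connell_zweibel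
    {k : Type*} [Field k] [CharZero k] (n : ℕ)
    (R : Subalgebra k (MvPolynomial (Fin n) k))
    (hR : Nonempty (↥R ≃ₐ[k] MvPolynomial (Fin n) k))
    (F : MvPolynomial (Fin n) k →ₐ[k] MvPolynomial (Fin n) k)
    (hF : ∀ r ∈ R, F r ∈ R) :
    Function.Bijective F ↔
      Function.Bijective (fun r : ↥R => (⟨F r.1, hF r.1 r.2⟩ : ↥R)) := by
  exact connell_zweibel_general R hR F hF
end

section
/- Let R and S be integral domains that are finitely generated ℂ-algebras, let ι : R → S be an injective ℂ-algebra homomorphism, and let F : S → S and G : R → R be ℂ-algebra homomorphisms with ι ∘ G = F ∘ ι. If F is injective and the induced endomorphism of the fraction field Frac(S) (extending F) is bijective (i.e., the corresponding morphism f : Spec S → Spec S is birational), then G is injective and the induced endomorphism of the fraction field Frac(R) is bijective (i.e., the corresponding morphism g : Spec R → Spec R is birational). -/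
/-!
A surjective endomorphism of a Noetherian ring is injective. Let `A → B` be a faithfully flat map
such that `B ⊗[A] B` is Noetherian, and let `σ` be a surjective endomorphism of `B` restricting to
an endomorphism `τ` of `A`. Then `σ ⊗ σ` is a surjective, hence injective, endomorphism of
`B ⊗[A] B`. If `σ b` comes from `A`, then `σ ⊗ σ` identifies `b ⊗ 1` with `1 ⊗ b`, so these two are
equal and `b` comes from `A` by descent: `τ` is surjective as well. Apply this to `A = Frac R` and
`B = Frac S`; here `B ⊗[A] B` is Noetherian because `B` is essentially of finite type over `A`.
-/

open scoped TensorProduct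

lemma injective_of_surjective_of_isNoetherianRing {R : Type*} [Ring R] [IsNoetherianRing R]
    {f : R →+* R} (hf : Function.Surjective f) : Function.Injective f := by
  have hmono : Monotone (Ideal.comap f) := fun _ _ ↦ Ideal.comap_mono
  obtain ⟨n, hn⟩ := WellFoundedGT.monotone_chain_condition
    ⟨fun n ↦ (Ideal.comap f)^[n] ⊥, hmono.monotone_iterate_of_le_map bot_le⟩
  have hstable : (Ideal.comap f)^[n] ⊥ = (Ideal.comap f)^[n] (Ideal.comap f ⊥) :=
    hn (n + 1) n.le_succ
  rw [RingHom.injective_iff_ker_eq_bot, RingHom.ker_eq_comap_bot]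
  exact ((Ideal.comap_injective_of_surjective f hf).iterate n hstable).symm

lemma mem_range_algebraMap_iff_tmul_one_eq_one_tmul {A B : Type*} [CommRing A] [CommRing B]
    [Algebra A B] [Module.FaithfullyFlat A B] {b : B} :
    b ∈ Set.range (algebraMap A B) ↔ b ⊗ₜ[A] (1 : B) = 1 ⊗ₜ[A] b := by
  rw [← sub_eq_zero, ← Algebra.TensorProduct.includeLeftSubRight_apply]
  exact (Algebra.IsEffective.of_faithfullyFlat A B b).symm

lemma tensorProduct_mapRingHom_surjective {R S T R' S' T' : Type*} [CommRing R] [CommRing S]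
    [CommRing T] [Algebra R S] [Algebra R T] [CommRing R'] [CommRing S'] [CommRing T']
    [Algebra R' S'] [Algebra R' T'] {f : R →+* R'} {g : S →+* S'} {h : T →+* T'}
    (hg : g.comp (algebraMap R S) = (algebraMap R' S').comp f)
    (hh : h.comp (algebraMap R T) = (algebraMap R' T').comp f)
    (hg_surj : Function.Surjective g) (hh_surj : Function.Surjective h) :
    Function.Surjective (Algebra.TensorProduct.mapRingHom f g h hg hh) := by
  intro z
  induction z with
  | zero => exact ⟨0, map_zero _⟩
  | tmul s' t' =>
    obtain ⟨s, rfl⟩ := hg_surj s'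
    obtain ⟨t, rfl⟩ := hh_surj t'
    exact ⟨s ⊗ₜ t, Algebra.TensorProduct.mapRingHom_tmul f g h hg hh s t⟩
  | add x' y' hx hy =>
    obtain ⟨x, rfl⟩ := hx
    obtain ⟨y, rfl⟩ := hy
    exact ⟨x + y, map_add _ x y⟩

lemma surjective_of_surjective_of_faithfullyFlat {A B : Type*} [CommRing A] [CommRing B]
    [Algebra A B] [Module.FaithfullyFlat A B] [IsNoetherianRing (B ⊗[A] B)]
    {τ : A →+* A} {σ : B →+* B} (hστ : σ.comp (algebraMap A B) = (algebraMap A B).comp τ)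
    (hσ : Function.Surjective σ) : Function.Surjective τ := by
  let σσ : B ⊗[A] B →+* B ⊗[A] B := Algebra.TensorProduct.mapRingHom τ σ σ hστ hστ
  have hσσ : Function.Injective σσ := injective_of_surjective_of_isNoetherianRing
    (tensorProduct_mapRingHom_surjective hστ hστ hσ hσ)
  intro a
  obtain ⟨b, hb⟩ := hσ (algebraMap A B a)
  have hb_range : b ∈ Set.range (algebraMap A B) := by
    rw [mem_range_algebraMap_iff_tmul_one_eq_one_tmul]
    apply hσσ
    simpa [σσ, hb] using mem_range_algebraMap_iff_tmul_one_eq_one_tmul.mp ⟨a, rfl⟩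
  obtain ⟨a', rfl⟩ := hb_range
  refine ⟨a', FaithfulSMul.algebraMap_injective A B ?_⟩
  rw [← hb]
  exact (RingHom.congr_fun hστ a').symm

lemma surjective_of_surjective_of_essFiniteType {K B : Type*} [Field K] [CommRing B]
    [Nontrivial B] [IsNoetherianRing B] {j : K →+* B} (hj : j.EssFiniteType)
    {τ : K →+* K} {σ : B →+* B} (hστ : σ.comp j = j.comp τ) (hσ : Function.Surjective σ) :
    Function.Surjective τ := by
  algebraize [j]
  have : IsNoetherianRing (B ⊗[K] B) := Algebra.EssFiniteType.isNoetherianRing B _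
  exact surjective_of_surjective_of_faithfullyFlat hστ hσ

lemma essFiniteType_of_algHom {k R S : Type*} [CommRing k] [CommRing R] [CommRing S]
    [Algebra k R] [Algebra k S] [Algebra.EssFiniteType k S] (φ : R →ₐ[k] S) :
    (φ : R →+* S).EssFiniteType := by
  apply RingHom.EssFiniteType.of_comp (algebraMap k R)
  rw [φ.comp_algebraMap]
  exact RingHom.essFiniteType_algebraMap.mpr inferInstance

section FractionRing

variable {R S K L : Type*} [CommRing R] [CommRing S] [IsDomain S] [CommRing K] [Algebra R K]
  [IsFractionRing R K] [CommRing L] [Algebra S L] [IsFractionRing S L] {φ : R →+* S}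

lemma isFractionRing_map_algebraMap (hφ : Function.Injective φ) (r : R) :
    (IsFractionRing.map hφ : K →+* L) (algebraMap R K r) = algebraMap S L (φ r) :=
  IsLocalization.map_eq _ r

lemma essFiniteType_isFractionRing_map (hφ : Function.Injective φ) (hfin : φ.EssFiniteType) :
    (IsFractionRing.map hφ : K →+* L).EssFiniteType := by
  have hL : (algebraMap S L).EssFiniteType :=
    RingHom.essFiniteType_algebraMap.mpr (.of_isLocalization L (nonZeroDivisors S))
  apply RingHom.EssFiniteType.of_comp (algebraMap R K)
  convert hfin.comp hL
  ext r
  exact isFractionRing_map_algebraMap hφ r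

end FractionRing

theorem birational_descends_general {R S : Type*} [CommRing R] [IsDomain R] [CommRing S]
    [IsDomain S] {ι : R →+* S} (hι : Function.Injective ι) (hfin : ι.EssFiniteType)
    {F : S →+* S} {G : R →+* R} (hcomm : ∀ r, ι (G r) = F (ι r))
    (hFbir : ∃ Φ : FractionRing S →+* FractionRing S,
      (∀ s, Φ (algebraMap S (FractionRing S) s) = algebraMap S (FractionRing S) (F s)) ∧
      Function.Bijective Φ) :
    Function.Injective G ∧
      ∃ Ψ : FractionRing R →+* FractionRing R,
        (∀ r, Ψ (algebraMap R (FractionRing R) r) = algebraMap R (FractionRing R) (G r)) ∧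
        Function.Bijective Ψ := by
  obtain ⟨Φ, hΦ, hΦbij⟩ := hFbir
  have hF : Function.Injective F := by
    apply Function.Injective.of_comp (f := algebraMap S (FractionRing S))
    convert hΦbij.injective.comp (IsFractionRing.injective S (FractionRing S))
    exact funext fun s ↦ (hΦ s).symm
  have hG : Function.Injective G := by
    apply Function.Injective.of_comp (f := ι)
    convert hF.comp hι
    exact funext hcomm
  let j : FractionRing R →+* FractionRing S := IsFractionRing.map hι
  let Ψ : FractionRing R →+* FractionRing R := IsFractionRing.map hG
  have hsquare : Φ.comp j = j.comp Ψ := by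
    apply IsLocalization.ringHom_ext (nonZeroDivisors R)
    ext r
    simp [j, Ψ, isFractionRing_map_algebraMap, hΦ, hcomm]
  exact ⟨hG, Ψ, isFractionRing_map_algebraMap hG, Ψ.injective,
    surjective_of_surjective_of_essFiniteType (essFiniteType_isFractionRing_map hι hfin) hsquare
      hΦbij.surjective⟩

/-- Let `R`, `S` be affine domains over `ℂ` and `ι : R → S` an injective `ℂ`-algebra
homomorphism.  Let `F : S → S` and `G : R → R` be `ℂ`-algebra homomorphisms with
`ι ∘ G = F ∘ ι`.  If `F` is injective and its induced endomorphism of `Frac(S)` is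
bijective (`f` is birational), then `G` is injective and its induced endomorphism of
`Frac(R)` is bijective (`g` is birational). -/
theorem birational_descends
    {R S : Type*} [CommRing R] [IsDomain R] [CommRing S] [IsDomain S]
    [Algebra ℂ R] [Algebra ℂ S] [Algebra.FiniteType ℂ R] [Algebra.FiniteType ℂ S]
    (ι : R →ₐ[ℂ] S) (hι : Function.Injective ι)
    (F : S →ₐ[ℂ] S) (G : R →ₐ[ℂ] R) (hcomm : ∀ r, ι (G r) = F (ι r))
    (hFinj : Function.Injective F)
    (hFbir : ∃ Φ : FractionRing S →+* FractionRing S,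
      (∀ s, Φ (algebraMap S (FractionRing S) s) = algebraMap S (FractionRing S) (F s)) ∧
      Function.Bijective Φ) :
    Function.Injective G ∧
      ∃ Ψ : FractionRing R →+* FractionRing R,
        (∀ r, Ψ (algebraMap R (FractionRing R) r) = algebraMap R (FractionRing R) (G r)) ∧
        Function.Bijective Ψ := by
  exact birational_descends_general hι (essFiniteType_of_algHom ι) (F := F) (G := G) hcomm hFbir
end

section
/- Let R and S be integral domains that are finitely generated ℂ-algebras with the same transcendence degree over ℂ, let ι : R → S be an injective ℂ-algebra homomorphism, and let F : S → S and G : R → R be ℂ-algebra homomorphisms with ι ∘ G = F ∘ ι. If G is injective and the induced endomorphism of the fraction field Frac(R) (extending G) is bijective, then F is injective and the induced endomorphism of the fraction field Frac(S) is bijective. -/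
/-!
Equality of the finite transcendence degrees makes `S` algebraic over `R`. A nonzero element of
`ker F` would then divide a nonzero element of `R`, and that element would lie in `ker G = 0`.

On fraction fields, `L = Frac S` is algebraic and finitely generated over `K = Frac R`, hence
finite. The extension of `F` to `L` is injective and semilinear over the automorphism of `K`
induced by `G`, so it carries a `K`-basis of `L` to a linearly independent family of the same
cardinality. That is again a basis, whence surjectivity.
-/

/-- The transcendence degree of a commutative `k`-algebra `A`: the supremum of the
cardinalities of algebraically independent subsets of `A` over `k`. -/
noncomputable def trdeg (k A : Type*) [CommRing k] [CommRing A] [Algebra k A] : Cardinal :=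
  ⨆ s : {s : Set A // AlgebraicIndependent k ((↑) : s → A)}, Cardinal.mk s.1

universe u v

open Function

theorem trdeg_eq_algebraTrdeg (k A : Type*) [CommRing k] [CommRing A] [Algebra k A] :
    trdeg k A = Algebra.trdeg k A :=
  rfl

theorem trdeg_lt_aleph0_of_essFiniteType (k A : Type*) [CommRing k] [CommRing A] [IsDomain A]
    [Algebra k A] [FaithfulSMul k A] [Algebra.EssFiniteType k A] :
    Algebra.trdeg k A < Cardinal.aleph0 := by
  have : IsDomain k := .of_faithfulSMul k A
  obtain ⟨A₀, M, _, hM⟩ := (Algebra.essFiniteType_iff_exists_subalgebra k A).mp inferInstance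
  have : Algebra.IsAlgebraic A₀ A := hM.isAlgebraic
  rw [← trdeg_add_eq k A₀, trdeg_eq_zero_iff.mpr this, add_zero]
  exact trdeg_lt_aleph0_of_finiteType

theorem isAlgebraic_of_lift_trdeg_eq {k : Type*} {R : Type u} {S : Type v} [CommRing k]
    [Nontrivial k] [CommRing R] [CommRing S] [NoZeroDivisors S] [Algebra k R] [Algebra k S]
    [Algebra R S] [IsScalarTower k R S] [FaithfulSMul k R] [FaithfulSMul R S]
    (hfin : Algebra.trdeg k S < Cardinal.aleph0)
    (htr : Cardinal.lift.{v} (Algebra.trdeg k R) = Cardinal.lift.{u} (Algebra.trdeg k S)) :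
    Algebra.IsAlgebraic R S := by
  have hadd : Cardinal.lift.{u} (Algebra.trdeg k S) + Cardinal.lift.{u} (Algebra.trdeg R S) =
      Cardinal.lift.{u} (Algebra.trdeg k S) + 0 := by
    rw [← htr, lift_trdeg_add_eq, htr, add_zero]
  have hzero := Cardinal.eq_of_add_eq_add_left hadd (Cardinal.lift_lt_aleph0.mpr hfin)
  exact trdeg_eq_zero_iff.mp (Cardinal.lift_eq_zero.mp hzero)

theorem injective_of_injective_comp_algebraMap {R S T : Type*} [CommRing R] [CommRing S]
    [NoZeroDivisors S] [CommRing T] [Algebra R S] [Algebra.IsAlgebraic R S] (F : S →+* T)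
    (hF : Injective (F.comp (algebraMap R S))) : Injective F := by
  let : Algebra S T := F.toAlgebra
  let : Algebra R T := (F.comp (algebraMap R S)).toAlgebra
  have : IsScalarTower R S T := .of_algebraMap_eq fun _ ↦ rfl
  exact Algebra.IsAlgebraic.injective_tower_top S hF

theorem surjective_of_injective_of_finrank_eq {K K' V W : Type*} [DivisionRing K]
    [DivisionRing K'] [AddCommGroup V] [Module K V] [FiniteDimensional K V] [AddCommGroup W]
    [Module K' W] [FiniteDimensional K' W] {σ : K →+* K'} [RingHomSurjective σ]
    (f : V →ₛₗ[σ] W) (hf : Injective f) (hrank : Module.finrank K V = Module.finrank K' W) :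
    Surjective f := by
  let b := Module.finBasis K V
  have hli : LinearIndependent K' (f ∘ b) :=
    b.linearIndependent.map_of_surjective_injective σ f.toAddMonoidHom σ.surjective
      (fun _ ↦ (map_eq_zero_iff f hf).mp) f.map_smulₛₗ
  have hspan : Submodule.span K' (Set.range (f ∘ b)) = ⊤ :=
    hli.span_eq_top_of_card_eq_finrank' (by rw [Fintype.card_fin, hrank])
  rw [← LinearMap.range_eq_top, eq_top_iff, ← hspan, Submodule.span_le]
  exact Set.range_comp_subset_range b f

theorem surjective_of_comp_algebraMap_eq {K L : Type*} [Field K] [Field L] [Algebra K L]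
    [FiniteDimensional K L] {Ψ : K →+* K} {Φ : L →+* L} (hΨ : Surjective Ψ)
    (hcomm : Φ.comp (algebraMap K L) = (algebraMap K L).comp Ψ) : Surjective Φ := by
  have : RingHomSurjective Ψ := ⟨hΨ⟩
  let f : L →ₛₗ[Ψ] L :=
    { Φ.toAddMonoidHom with
      map_smul' := fun a x ↦ by
        have ha : Φ (algebraMap K L a) = algebraMap K L (Ψ a) := RingHom.congr_fun hcomm a
        simp [Algebra.smul_def, ha] }
  exact surjective_of_injective_of_finrank_eq f Φ.injective rfl

theorem finiteDimensional_of_isFractionRing (R S K L : Type*) [CommRing R] [IsDomain R]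
    [CommRing S] [Field K] [Field L] [Algebra R S] [Algebra R K] [Algebra S L] [Algebra R L]
    [Algebra K L] [IsFractionRing R K] [IsFractionRing S L] [IsScalarTower R S L]
    [IsScalarTower R K L] [Algebra.IsAlgebraic R S] [Algebra.EssFiniteType R S] :
    FiniteDimensional K L := by
  have : FaithfulSMul R L := FaithfulSMul.trans R K L
  have : Algebra.IsAlgebraic R L := (IsFractionRing.isAlgebraic_iff' R S L).mp inferInstance
  have : Algebra.IsAlgebraic K L := (IsFractionRing.comap_isAlgebraic_iff (A := R)).mp this
  have : Algebra.EssFiniteType S L := .of_isLocalization L (nonZeroDivisors S)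
  have : Algebra.EssFiniteType R L := .comp R S L
  have : Algebra.EssFiniteType K L := .of_comp R K L
  exact Algebra.finite_of_essFiniteType_of_isAlgebraic

theorem surjective_fractionField_of_surjective {R S K L : Type*} [CommRing R] [IsDomain R]
    [CommRing S] [Field K] [Field L] [Algebra R S] [Algebra R K] [Algebra S L] [Algebra R L]
    [Algebra K L] [IsFractionRing R K] [IsFractionRing S L] [IsScalarTower R S L]
    [IsScalarTower R K L] [Algebra.IsAlgebraic R S] [Algebra.EssFiniteType R S]
    {F : S →+* S} {G : R →+* R} {Φ : L →+* L} {Ψ : K →+* K}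
    (hcomm : ∀ r, algebraMap R S (G r) = F (algebraMap R S r))
    (hΦ : ∀ s, Φ (algebraMap S L s) = algebraMap S L (F s))
    (hΨ : ∀ r, Ψ (algebraMap R K r) = algebraMap R K (G r)) (hΨsurj : Surjective Ψ) :
    Surjective Φ := by
  have : FiniteDimensional K L := finiteDimensional_of_isFractionRing R S K L
  refine surjective_of_comp_algebraMap_eq hΨsurj (IsFractionRing.ringHom_ext (A := R) fun r ↦ ?_)
  calc Φ (algebraMap K L (algebraMap R K r))
      = Φ (algebraMap S L (algebraMap R S r)) := by
        rw [← IsScalarTower.algebraMap_apply, ← IsScalarTower.algebraMap_apply]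
    _ = algebraMap S L (algebraMap R S (G r)) := by rw [hΦ, hcomm]
    _ = algebraMap K L (Ψ (algebraMap R K r)) := by
        rw [hΨ, ← IsScalarTower.algebraMap_apply, ← IsScalarTower.algebraMap_apply]

theorem birational_ascends_of_isAlgebraic {R S K L : Type*} [CommRing R] [IsDomain R]
    [CommRing S] [IsDomain S] [Field K] [Field L] [Algebra R S] [FaithfulSMul R S]
    [Algebra.IsAlgebraic R S] [Algebra.EssFiniteType R S] [Algebra R K] [IsFractionRing R K]
    [Algebra S L] [IsFractionRing S L] {F : S →+* S} {G : R →+* R} {Ψ : K →+* K}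
    (hcomm : ∀ r, algebraMap R S (G r) = F (algebraMap R S r))
    (hΨ : ∀ r, Ψ (algebraMap R K r) = algebraMap R K (G r)) (hΨsurj : Surjective Ψ) :
    Injective F ∧ ∃ Φ : L →+* L,
      (∀ s, Φ (algebraMap S L s) = algebraMap S L (F s)) ∧ Bijective Φ := by
  have hRS : Injective (algebraMap R S) := FaithfulSMul.algebraMap_injective R S
  have hG : Injective G := by
    refine Injective.of_comp (f := algebraMap R K) ?_
    simpa only [comp_def, ← hΨ] using Ψ.injective.comp (IsFractionRing.injective R K)
  have hF : Injective F := injective_of_injective_comp_algebraMap (R := R) F <| by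
    simpa only [RingHom.coe_comp, comp_def, ← hcomm] using hRS.comp hG
  let : Algebra R L := ((algebraMap S L).comp (algebraMap R S)).toAlgebra
  have : IsScalarTower R S L := .of_algebraMap_eq fun _ ↦ rfl
  have hRL : Injective (algebraMap R L) := (IsFractionRing.injective S L).comp hRS
  let : Algebra K L := (IsFractionRing.lift hRL).toAlgebra
  have : IsScalarTower R K L :=
    .of_algebraMap_eq fun r ↦ (IsFractionRing.lift_algebraMap hRL r).symm
  let Φ : L →+* L := IsFractionRing.map hF
  have hΦ (s : S) : Φ (algebraMap S L s) = algebraMap S L (F s) := IsLocalization.map_eq _ s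
  exact ⟨hF, Φ, hΦ, Φ.injective, surjective_fractionField_of_surjective hcomm hΦ hΨ hΨsurj⟩

theorem birational_ascends_general {k K L : Type*} {R : Type u} {S : Type v}
    [CommRing k] [CommRing R] [IsDomain R] [CommRing S] [IsDomain S]
    [Algebra k R] [FaithfulSMul k R] [Algebra k S] [Algebra.EssFiniteType k S]
    [Field K] [Algebra R K] [IsFractionRing R K] [Field L] [Algebra S L] [IsFractionRing S L]
    (htr : Cardinal.lift.{v} (trdeg k R) = Cardinal.lift.{u} (trdeg k S))
    (ι : R →ₐ[k] S) (hι : Injective ι) (F : S →+* S) (G : R →+* R)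
    (hcomm : ∀ r, ι (G r) = F (ι r)) (Ψ : K →+* K)
    (hΨ : ∀ r, Ψ (algebraMap R K r) = algebraMap R K (G r)) (hΨsurj : Surjective Ψ) :
    Injective F ∧ ∃ Φ : L →+* L,
      (∀ s, Φ (algebraMap S L s) = algebraMap S L (F s)) ∧ Bijective Φ := by
  let : Algebra R S := ι.toRingHom.toAlgebra
  have : IsScalarTower k R S := .of_algebraMap_eq fun c ↦ (ι.commutes c).symm
  have : FaithfulSMul R S := (faithfulSMul_iff_algebraMap_injective R S).mpr hι
  have : FaithfulSMul k S := .trans k R S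
  have : IsDomain k := .of_faithfulSMul k S
  simp only [trdeg_eq_algebraTrdeg] at htr
  have : Algebra.IsAlgebraic R S :=
    isAlgebraic_of_lift_trdeg_eq (trdeg_lt_aleph0_of_essFiniteType k S) htr
  have : Algebra.EssFiniteType R S := .of_comp k R S
  exact birational_ascends_of_isAlgebraic hcomm hΨ hΨsurj

/-- Let `R`, `S` be affine domains over `ℂ` with the same transcendence degree over `ℂ`
and `ι : R → S` an injective `ℂ`-algebra homomorphism.  Let `F : S → S` and `G : R → R`
be `ℂ`-algebra homomorphisms with `ι ∘ G = F ∘ ι`.  If `G` is injective and its induced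
endomorphism of `Frac(R)` is bijective (`g` is birational), then `F` is injective and
its induced endomorphism of `Frac(S)` is bijective (`f` is birational). -/
theorem birational_ascends
    {R : Type u} {S : Type v} [CommRing R] [IsDomain R] [CommRing S] [IsDomain S]
    [Algebra ℂ R] [Algebra ℂ S] [Algebra.FiniteType ℂ R] [Algebra.FiniteType ℂ S]
    (htr : Cardinal.lift.{v} (trdeg ℂ R) = Cardinal.lift.{u} (trdeg ℂ S))
    (ι : R →ₐ[ℂ] S) (hι : Function.Injective ι)
    (F : S →ₐ[ℂ] S) (G : R →ₐ[ℂ] R) (hcomm : ∀ r, ι (G r) = F (ι r))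
    (hGinj : Function.Injective G)
    (hGbir : ∃ Ψ : FractionRing R →+* FractionRing R,
      (∀ r, Ψ (algebraMap R (FractionRing R) r) = algebraMap R (FractionRing R) (G r)) ∧
      Function.Bijective Ψ) :
    Function.Injective F ∧
      ∃ Φ : FractionRing S →+* FractionRing S,
        (∀ s, Φ (algebraMap S (FractionRing S) s) = algebraMap S (FractionRing S) (F s)) ∧
        Function.Bijective Φ := by
  obtain ⟨Ψ, hΨ, hΨbij⟩ := hGbir
  exact birational_ascends_general htr ι hι F G hcomm Ψ hΨ hΨbij.surjective
end
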